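/- arXiv:math/0602446 — 3 statements merged into one kernel-verified Lean document; each statement's English description precedes it below -/
import Mathlib

section
/- Let f : ℕ → ℕ and let 𝔊 = ∏_{n=5}^∞ Alt(n)^{f(n)} be the Cartesian product of copies of alternating groups, a profinite group with the product topology. If 𝔊 is topologically finitely generated, then 𝔊 is a profinite completion: there exists a finitely generated residually finite group G whose profinite completion is topologically isomorphic to 𝔊. -/
/-- A topological group is *topologically finitely generated* if some finite subset
generates a dense subgroup. -/
def TopologicallyFG (P : Type*) [Group P] [TopologicalSpace P] : Prop :=
  ∃ S : Set P, S.Finite ∧ Dense (↑(Subgroup.closure S) : Set P)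

/-- A witness that the topological group `P` is (topologically isomorphic to) the profinite
completion of a finitely generated residually finite group `G`.  This is expressed via the
universal property of the profinite completion: there is a homomorphism `ι : G → P` which is
injective (equivalently, `G` is residually finite), has dense image, and such that every
homomorphism from `G` to a finite group factors through `P` by a homomorphism which is
continuous with respect to the discrete topology on the finite group.  (Uniqueness of the
factorization is automatic from density.) -/
structure ProfiniteCompletionWitness (P : Type*) [Group P] [TopologicalSpace P] where
  G : Type
  [grp : Group G]
  fg : Group.FG G
  ι : G →* P
  inj : Function.Injective ι
  dense : DenseRange ι
  factors : ∀ (Q : Type) [Group Q] [Finite Q] (f : G →* Q),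
    ∃ g : P →* Q, (∀ s : Set Q, IsOpen ((g : P → Q) ⁻¹' s)) ∧ g.comp ι = f

/-- Each finite alternating group carries the discrete topology. -/
instance (n : ℕ) : TopologicalSpace (alternatingGroup (Fin n)) := ⊥

open Equiv Equiv.Perm
open scoped Pointwise commutatorElement

theorem exists_involutions_mul_eq {α : Type*} (σ : Perm α) :
    ∃ r s : Perm α, r * r = 1 ∧ s * s = 1 ∧ σ = r * s ∧ ∀ x, σ x = x → r x = x := by
  classical
  let rep : α → α := fun x => (Quotient.mk (SameCycle.setoid σ) x).out
  have hrep : ∀ x, SameCycle σ (rep x) x := fun x =>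
    Quotient.exact (s := SameCycle.setoid σ) (Quotient.out_eq _)
  choose e he using hrep
  let f : α → α := fun x => (σ ^ (-e x)) (rep x)
  have key : ∀ x (i : ℤ), f ((σ ^ i) (rep x)) = (σ ^ (-i)) (rep x) := by
    intro x i
    have h1 : rep ((σ ^ i) (rep x)) = rep x := by
      refine congrArg Quotient.out (Quotient.sound ?_)
      exact SameCycle.trans (SameCycle.symm ⟨i, rfl⟩) ⟨e x, he x⟩
    have h2 := he ((σ ^ i) (rep x))
    rw [h1] at h2
    simp only [f, h1]
    set j := e ((σ ^ i) (rep x))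
    calc (σ ^ (-j)) (rep x) = (σ ^ (-j + -i)) ((σ ^ i) (rep x)) := by
          rw [← Perm.mul_apply, ← zpow_add]; simp
      _ = (σ ^ (-j + -i)) ((σ ^ j) (rep x)) := by rw [h2]
      _ = (σ ^ (-i)) (rep x) := by
          rw [← Perm.mul_apply, ← zpow_add]; simp
  have hform : ∀ x, ∃ i : ℤ, ∃ y, x = (σ ^ i) (rep y) := fun x => ⟨e x, x, (he x).symm⟩
  have hff : Function.Involutive f := by
    intro x
    obtain ⟨i, y, rfl⟩ := hform x
    rw [key y i, key y (-i), neg_neg]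
  refine ⟨hff.toPerm f, hff.toPerm f * σ, ?_, ?_, ?_, ?_⟩
  · ext x; exact hff x
  · ext x
    obtain ⟨i, y, rfl⟩ := hform x
    have h1 : ∀ i : ℤ, σ ((σ ^ i) (rep y)) = (σ ^ (i + 1)) (rep y) := fun i => by
      rw [add_comm, zpow_add, zpow_one, Perm.mul_apply]
    simp only [Perm.mul_apply, Function.Involutive.coe_toPerm, h1, key, Perm.one_apply]
    congr 2; ring
  · rw [← mul_assoc]
    have : hff.toPerm f * hff.toPerm f = 1 := by ext x; exact hff x
    rw [this, one_mul]
  · intro x hx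
    have hp : ∀ i : ℤ, (σ ^ i) x = x := fun i => zpow_apply_eq_self_of_apply_eq_self hx i
    have h1 : rep x = x := by
      have := congrArg (σ ^ (-e x)) (he x)
      rw [hp, ← Perm.mul_apply, ← zpow_add] at this
      simpa using this
    change (σ ^ (-e x)) (rep x) = x
    rw [h1, hp]

theorem exists_even_involutions_mul_eq {α : Type*} [Fintype α] [DecidableEq α] {σ : Perm α}
    (hσ : sign σ = 1) {u v : α} (huv : u ≠ v) (hu : σ u = u) (hv : σ v = v) :
    ∃ r s : Perm α, r * r = 1 ∧ s * s = 1 ∧ sign r = 1 ∧ sign s = 1 ∧ σ = r * s := by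
  obtain ⟨r, s, hr, hs, rfl, hfix⟩ := exists_involutions_mul_eq σ
  have hru := hfix u hu
  have hrv := hfix v hv
  have hsu : s u = u := by simpa [hru] using congrArg r.symm hu |>.trans (r.symm_apply_eq.2 hru.symm)
  have hsv : s v = v := by simpa [hrv] using congrArg r.symm hv |>.trans (r.symm_apply_eq.2 hrv.symm)
  have hc : ∀ q : Perm α, q u = u → q v = v → q * swap u v = swap u v * q := by
    intro q hqu hqv
    rw [mul_swap_eq_swap_mul, hqu, hqv]
  rw [map_mul] at hσ
  rcases Int.units_eq_one_or (sign r) with h | h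
  · exact ⟨r, s, hr, hs, h, by rwa [h, one_mul] at hσ, rfl⟩
  · have h' : sign s = -1 := by
      rw [h] at hσ
      simpa [neg_eq_iff_eq_neg] using hσ
    refine ⟨r * swap u v, swap u v * s, ?_, ?_, ?_, ?_, ?_⟩
    · rw [mul_assoc, ← mul_assoc (swap u v), ← hc r hru hrv, mul_assoc r, swap_mul_self, mul_one, hr]
    · rw [mul_assoc, ← mul_assoc s, hc s hsu hsv, mul_assoc, hs, mul_one, swap_mul_self]
    · simp [h, sign_swap huv]
    · simp [h', sign_swap huv]
    · rw [mul_assoc, ← mul_assoc (swap u v), swap_mul_self, one_mul]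

theorem isConj_of_involutions {α : Type*} [Fintype α] [DecidableEq α] {r s : Perm α}
    (hr : r * r = 1) (hs : s * s = 1) (h : r.support.card = s.support.card) : IsConj r s := by
  have : Fact (Nat.Prime 2) := ⟨Nat.prime_two⟩
  rw [← pow_two] at hr hs
  have h1 := cycleType_of_pow_prime_eq_one hr
  have h2 := cycleType_of_pow_prime_eq_one hs
  have h3 := sum_cycleType r
  have h4 := sum_cycleType s
  rw [isConj_iff_cycleType_eq, h1, h2]
  rw [h1, Multiset.sum_replicate] at h3
  rw [h2, Multiset.sum_replicate] at h4
  congr 1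
  simp only [smul_eq_mul] at h3 h4
  omega

/-- The involution of `ι × Bool` flipping the second coordinate over the points of `V`. -/
def flipOn {ι : Type*} [DecidableEq ι] (V : Finset ι) : Perm (ι × Bool) :=
  Function.Involutive.toPerm (fun x => (x.1, xor x.2 (decide (x.1 ∈ V))))
    (fun x => by simp)

theorem flipOn_apply {ι : Type*} [DecidableEq ι] (V : Finset ι) (x : ι × Bool) :
    flipOn V x = (x.1, xor x.2 (decide (x.1 ∈ V))) := rfl

theorem flipOn_mul {ι : Type*} [DecidableEq ι] (U V : Finset ι) :
    flipOn U * flipOn V = flipOn (symmDiff U V) := by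
  ext x
  · rfl
  · by_cases hU : x.1 ∈ U <;> by_cases hV : x.1 ∈ V <;>
      simp [flipOn_apply, Finset.mem_symmDiff, hU, hV]

theorem flipOn_empty {ι : Type*} [DecidableEq ι] : flipOn (∅ : Finset ι) = 1 := by
  ext x <;> simp [flipOn_apply]

theorem support_flipOn {ι : Type*} [DecidableEq ι] [Fintype ι] (V : Finset ι) :
    (flipOn V).support = V ×ˢ Finset.univ := by
  ext x
  by_cases hV : x.1 ∈ V <;> simp [flipOn_apply, Prod.ext_iff, hV]

theorem card_support_viaEmbedding {α β : Type*} [Fintype α] [DecidableEq α] [Fintype β]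
    [DecidableEq β] (σ : Perm α) (e : α ↪ β) :
    (σ.viaEmbedding e).support.card = σ.support.card := by
  classical
  rw [viaEmbedding]
  convert card_support_extend_domain _

theorem sign_viaEmbedding {α β : Type*} [Fintype α] [DecidableEq α] [Fintype β]
    [DecidableEq β] (σ : Perm α) (e : α ↪ β) :
    sign (σ.viaEmbedding e) = sign σ := by
  classical
  rw [viaEmbedding, sign_extendDomain]

theorem exists_symmDiff_eq {ι : Type*} [DecidableEq ι] [Fintype ι] {V : Finset ι} {j m : ℕ}
    (hV : V.card = 2 * j) (hj : j ≤ m) (hm : j + m ≤ Fintype.card ι) :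
    ∃ U U' : Finset ι, U.card = m ∧ U'.card = m ∧ symmDiff U U' = V := by
  obtain ⟨V₁, hV₁, hc₁⟩ := Finset.exists_subset_card_eq (s := V) (n := j) (by omega)
  obtain ⟨C, hC, hcC⟩ := Finset.exists_subset_card_eq (s := Vᶜ) (n := m - j)
    (by rw [Finset.card_compl]; omega)
  have hd : Disjoint V C := by
    rw [Finset.disjoint_left]
    intro x hx hx'
    exact Finset.mem_compl.1 (hC hx') hx
  have hsd : (V \ V₁).card = j := by rw [Finset.card_sdiff_of_subset hV₁]; omega
  refine ⟨V₁ ∪ C, (V \ V₁) ∪ C, ?_, ?_, ?_⟩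
  · rw [Finset.card_union_of_disjoint (hd.mono_left hV₁)]; omega
  · rw [Finset.card_union_of_disjoint (hd.mono_left Finset.sdiff_subset)]; omega
  · ext x
    have h1 : x ∈ V₁ → x ∈ V := fun h => hV₁ h
    have h2 : x ∈ V → x ∉ C := fun h => Finset.disjoint_left.1 hd h
    simp only [Finset.mem_symmDiff, Finset.mem_union, Finset.mem_sdiff]
    tauto

theorem card_support_of_even_involution {α : Type*} [Fintype α] [DecidableEq α] {s : Perm α}
    (hs : s * s = 1) (h : sign s = 1) : ∃ j, s.support.card = 4 * j := by
  have : Fact (Nat.Prime 2) := ⟨Nat.prime_two⟩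
  rw [← pow_two] at hs
  have h1 := cycleType_of_pow_prime_eq_one hs
  have h3 := sum_cycleType s
  rw [sign_of_cycleType, h3] at h
  have h4 := h3
  rw [h1, Multiset.sum_replicate] at h4
  simp only [smul_eq_mul] at h4
  rw [neg_one_pow_eq_one_iff_even (by decide)] at h
  obtain ⟨c, hc⟩ := h
  exact ⟨s.cycleType.card / 2, by omega⟩

section Width
variable {α : Type*} [Fintype α] [DecidableEq α]

theorem even_involution_mem_conj_pow {w s : alternatingGroup α} {m : ℕ} (hw : w * w = 1)
    (hwc : (w : Perm α).support.card = 2 * m) (hm₁ : 2 * m + 2 ≤ Fintype.card α)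
    (hm₂ : 2 * m ≤ Fintype.card α / 2) (hm₃ : Fintype.card α / 2 ≤ 4 * m) (hs : s * s = 1) :
    s ∈ {x | IsConj w x} ^ 4 := by
  set M := Fintype.card α / 2 with hM
  obtain ⟨j, hj⟩ := card_support_of_even_involution (s := (s : Perm α))
    (by simpa using congrArg Subtype.val hs) s.2
  have hle := (s : Perm α).support.card_le_univ
  obtain ⟨e⟩ : Nonempty (Fin M × Bool ↪ α) := by
    rw [Function.Embedding.nonempty_iff_card_le]
    simp; omega
  have hsq : ∀ U : Finset (Fin M),
      (flipOn U).viaEmbedding e * (flipOn U).viaEmbedding e = 1 := fun U => by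
    rw [← viaEmbeddingHom_apply, ← map_mul, flipOn_mul, symmDiff_self, Finset.bot_eq_empty,
      flipOn_empty, map_one]
  have hcard : ∀ U : Finset (Fin M), ((flipOn U).viaEmbedding e).support.card = 2 * U.card :=
    fun U => by rw [card_support_viaEmbedding, support_flipOn]; simp [mul_comm]
  obtain ⟨V, -, hV⟩ := Finset.exists_subset_card_eq (s := (Finset.univ : Finset (Fin M)))
    (n := 2 * j) (by simp; omega)
  obtain ⟨V₁, hV₁, hc₁⟩ := Finset.exists_subset_card_eq (s := V) (n := 2 * (j / 2)) (by omega)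
  have hsd : (V \ V₁).card = 2 * (j - j / 2) := by rw [Finset.card_sdiff_of_subset hV₁]; omega
  obtain ⟨U₁, U₂, hU₁, hU₂, hU⟩ := exists_symmDiff_eq (m := m) hc₁ (by omega)
    (by simp; omega)
  obtain ⟨U₃, U₄, hU₃, hU₄, hU'⟩ := exists_symmDiff_eq (m := m) hsd (by omega)
    (by simp; omega)
  obtain ⟨g, hg⟩ := isConj_iff.1 (isConj_of_involutions (s := (s : Perm α)) (hsq V)
    (by simpa using congrArg Subtype.val hs) (by rw [hcard, hV, hj]; ring))
  have hT : ∀ U : Finset (Fin M), U.card = m → ∃ x : alternatingGroup α,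
      IsConj w x ∧ (x : Perm α) = g * (flipOn U).viaEmbedding e * g⁻¹ := by
    intro U hUc
    have hc : IsConj (w : Perm α) (g * (flipOn U).viaEmbedding e * g⁻¹) :=
      (isConj_of_involutions (by simpa using congrArg Subtype.val hw) (hsq U)
        (by rw [hcard, hwc, hUc])).trans (isConj_iff.2 ⟨g, rfl⟩)
    have hx : g * (flipOn U).viaEmbedding e * g⁻¹ ∈ alternatingGroup α := by
      obtain ⟨c, hc⟩ := isConj_iff.1 hc
      rw [← hc]
      exact alternatingGroup.normal.conj_mem _ w.2 _
    exact ⟨⟨_, hx⟩, alternatingGroup.isConj_of hc (by omega), rfl⟩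
  obtain ⟨x₁, h₁, hx₁⟩ := hT U₁ hU₁
  obtain ⟨x₂, h₂, hx₂⟩ := hT U₂ hU₂
  obtain ⟨x₃, h₃, hx₃⟩ := hT U₃ hU₃
  obtain ⟨x₄, h₄, hx₄⟩ := hT U₄ hU₄
  have hprod : s = x₁ * x₂ * x₃ * x₄ := by
    apply Subtype.val_injective
    have hVV : symmDiff V₁ (V \ V₁) = V := by
      ext x
      have h1 : x ∈ V₁ → x ∈ V := fun h => hV₁ h
      simp only [Finset.mem_symmDiff, Finset.mem_sdiff]
      tauto
    rw [← hg, ← hVV, ← hU', ← hU, ← flipOn_mul, ← flipOn_mul, ← flipOn_mul]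
    simp only [Subgroup.coe_mul, hx₁, hx₂, hx₃, hx₄, ← viaEmbeddingHom_apply, map_mul]
    group
  rw [hprod]
  simp only [pow_succ, pow_zero, one_mul]
  exact Set.mul_mem_mul (Set.mul_mem_mul (Set.mul_mem_mul h₁ h₂) h₃) h₄

theorem alternating_mem_conj_pow {w : alternatingGroup α} {m : ℕ} (hw : w * w = 1)
    (hwc : (w : Perm α).support.card = 2 * m) (hα : 8 ≤ Fintype.card α)
    (hm₂ : 2 * m ≤ Fintype.card α / 2) (hm₃ : Fintype.card α / 2 ≤ 4 * m)
    (π : alternatingGroup α) : π ∈ {x | IsConj w x} ^ 16 := by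
  have hfix : ∀ π : alternatingGroup α, ∀ u v : α, u ≠ v → (π : Perm α) u = u →
      (π : Perm α) v = v → π ∈ {x | IsConj w x} ^ 8 := by
    intro π u v huv hu hv
    obtain ⟨r, s, hr, hs, hr', hs', h⟩ := exists_even_involutions_mul_eq π.2 huv hu hv
    have : π = ⟨r, hr'⟩ * ⟨s, hs'⟩ := Subtype.val_injective h
    rw [this, show 8 = 4 + 4 from rfl, pow_add]
    exact Set.mul_mem_mul
      (even_involution_mem_conj_pow hw hwc (by omega) hm₂ hm₃ (Subtype.val_injective hr))
      (even_involution_mem_conj_pow hw hwc (by omega) hm₂ hm₃ (Subtype.val_injective hs))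
  obtain ⟨u, v, huv⟩ := Fintype.one_lt_card_iff.1 (show 1 < Fintype.card α by omega)
  set p : Perm α := π.1 with hp
  set v' := swap u (p u) (p v) with hv'
  let T : Finset α := {u, p u, v, v'}
  have hT : T.card ≤ 4 := Finset.card_le_four
  obtain ⟨e⟩ : Nonempty (Fin 4 ↪ {x // x ∈ Tᶜ}) := by
    rw [Function.Embedding.nonempty_iff_card_le, Fintype.card_fin, Fintype.card_coe,
      Finset.card_compl]
    omega
  have hne : ∀ i j : Fin 4, i ≠ j → (e i : α) ≠ e j := fun i j h h' =>
    h (e.injective (Subtype.val_injective h'))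
  have he : ∀ i, (e i : α) ≠ u ∧ (e i : α) ≠ p u ∧ (e i : α) ≠ v ∧ (e i : α) ≠ v' := by
    intro i
    have := (e i).2
    simpa [T] using this
  have hv'u : v' ≠ u := by
    intro h
    rw [hv', swap_apply_eq_iff, swap_apply_left] at h
    exact huv (p.injective h).symm
  obtain ⟨d, hd, hdu, hdv, hd2, hd3⟩ : ∃ d : Perm α,
      sign d = sign (swap v v' * swap u (p u)) ∧ d u = u ∧ d v = v ∧ d (e 2) = e 2 ∧
        d (e 3) = e 3 := by
    rcases Int.units_eq_one_or (sign (swap v v' * swap u (p u))) with h | h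
    · exact ⟨1, by simp [h], rfl, rfl, rfl, rfl⟩
    · refine ⟨swap (e 0) (e 1), by rw [h, sign_swap (hne 0 1 (by decide))], ?_, ?_, ?_, ?_⟩
      · exact swap_apply_of_ne_of_ne (he 0).1.symm (he 1).1.symm
      · exact swap_apply_of_ne_of_ne (he 0).2.2.1.symm (he 1).2.2.1.symm
      · exact swap_apply_of_ne_of_ne (hne 2 0 (by decide)) (hne 2 1 (by decide))
      · exact swap_apply_of_ne_of_ne (hne 3 0 (by decide)) (hne 3 1 (by decide))
  have hc : d * (swap v v' * swap u (p u)) ∈ alternatingGroup α := by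
    rw [mem_alternatingGroup, map_mul, hd, Int.units_mul_self]
  have hfe : ∀ i : Fin 4, d (e i) = e i → (d * (swap v v' * swap u (p u))) (e i) = e i := by
    intro i hi
    obtain ⟨h1, h2, h3, h4⟩ := he i
    rw [mul_apply, mul_apply, swap_apply_of_ne_of_ne h1 h2, swap_apply_of_ne_of_ne h3 h4, hi]
  have hfu : (d * (swap v v' * swap u (p u)) * p) u = u := by
    simp only [mul_apply, swap_apply_right]
    rw [swap_apply_of_ne_of_ne huv hv'u.symm, hdu]
  have hfv : (d * (swap v v' * swap u (p u)) * p) v = v := by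
    simp only [mul_apply]
    rw [← hv', swap_apply_right, hdv]
  set c : alternatingGroup α := ⟨_, hc⟩
  have h1 := hfix (c * π) u v huv hfu hfv
  have h2 := hfix c⁻¹ (e 2) (e 3) (hne 2 3 (by decide))
    (by rw [Subgroup.coe_inv, inv_eq_iff_eq]; exact (hfe 2 hd2).symm)
    (by rw [Subgroup.coe_inv, inv_eq_iff_eq]; exact (hfe 3 hd3).symm)
  rw [show π = c⁻¹ * (c * π) by group, show 16 = 8 + 8 from rfl, pow_add]
  exact Set.mul_mem_mul h2 h1
end Width

section Killed
variable {P : Type*} [Group P]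

/-- A set `F` is killed modulo `E` if every homomorphism to a finite group which is defined on a
subgroup containing `F` and trivial on the elements of `E` is trivial on `F`. -/
def IsKilled (E : Subgroup P) (F : Set P) : Prop :=
  ∀ (G : Subgroup P) (Q : Type) [Group Q] [Finite Q] (φ : G →* Q),
    F ⊆ G → (∀ x : G, (x : P) ∈ E → φ x = 1) → ∀ x : G, (x : P) ∈ F → φ x = 1

theorem IsKilled.union {E : Subgroup P} {F F' : Set P} (h : IsKilled E F) (h' : IsKilled E F') :
    IsKilled E (F ∪ F') := by
  intro G Q _ _ φ hF hE x hx
  rcases hx with hx | hx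
  · exact h G Q φ (Set.subset_union_left.trans hF) hE x hx
  · exact h' G Q φ (Set.subset_union_right.trans hF) hE x hx

theorem IsKilled.insert_mul {E : Subgroup P} {F : Set P} (h : IsKilled E F) {x y : P}
    (hx : x ∈ F) (hy : y ∈ F) : IsKilled E (insert (x * y) F) := by
  intro G Q _ _ φ hF hE z hz
  have hF' := (Set.subset_insert _ _).trans hF
  rcases hz with hz | hz
  · have : z = ⟨x, hF' hx⟩ * ⟨y, hF' hy⟩ := Subtype.val_injective hz
    rw [this, map_mul, h G Q φ hF' hE _ hx, h G Q φ hF' hE _ hy, one_mul]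
  · exact h G Q φ hF' hE z hz

theorem IsKilled.conj {E : Subgroup P} [E.Normal] {F : Set P} (h : IsKilled E F) (p : P) :
    IsKilled E ((fun x => p * x * p⁻¹) '' F) := by
  intro G Q _ _ φ hF hE z hz
  obtain ⟨x, hx, hxz⟩ := hz
  let c : P →* P := (MulAut.conj p).toMonoidHom
  have hcx : ∀ x, c x = p * x * p⁻¹ := fun x => rfl
  have hF' : F ⊆ G.comap c := fun y hy => hF ⟨y, hy, rfl⟩
  have := h (G.comap c) Q (φ.comp (c.subgroupComap G)) hF'
    (fun y hy => hE _ (Subgroup.Normal.conj_mem inferInstance _ hy p)) ⟨x, hF' hx⟩ hx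
  rw [← this]
  exact congrArg φ (Subtype.val_injective hxz.symm)

/-- The elements contained in a finite killed set. -/
def killedElements (E : Subgroup P) : Submonoid P where
  carrier := {x | ∃ F : Set P, F.Finite ∧ IsKilled E F ∧ x ∈ F}
  one_mem' := ⟨{1}, Set.finite_singleton _, fun G Q _ _ φ _ _ x hx => by
    rw [show x = 1 from Subtype.val_injective hx, map_one], rfl⟩
  mul_mem' := by
    rintro x y ⟨F, hF, hk, hx⟩ ⟨F', hF', hk', hy⟩
    exact ⟨_, (hF.union hF').insert _, (hk.union hk').insert_mul (Or.inl hx) (Or.inr hy),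
      Or.inl rfl⟩

theorem mem_killedElements_of_isConj {E : Subgroup P} [E.Normal] {x y : P}
    (hx : x ∈ killedElements E) (hxy : IsConj x y) : y ∈ killedElements E := by
  obtain ⟨c, rfl⟩ := isConj_iff.1 hxy
  obtain ⟨F, hF, hk, hx⟩ := hx
  exact ⟨_, hF.image _, hk.conj c, x, hx, rfl⟩

theorem mem_killedElements_of_mem {E : Subgroup P} {x : P} (hx : x ∈ E) :
    x ∈ killedElements E :=
  ⟨{x}, Set.finite_singleton _, fun G Q _ _ φ _ hE y hy => hE y (by rwa [show (y : P) = x from hy]),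
    rfl⟩

theorem mem_killedElements_of_mem_pow {E : Subgroup P} [E.Normal] {w : P}
    (hw : w ∈ killedElements E) : ∀ (n : ℕ) {x : P}, x ∈ {x | IsConj w x} ^ n →
    x ∈ killedElements E
  | 0, x, hx => by
    rw [pow_zero, Set.mem_one] at hx
    exact hx ▸ one_mem _
  | n + 1, x, hx => by
    rw [pow_succ] at hx
    obtain ⟨y, hy, z, hz, rfl⟩ := Set.mem_mul.1 hx
    exact mul_mem (mem_killedElements_of_mem_pow hw n hy) (mem_killedElements_of_isConj hw hz)

theorem exists_finite_isKilled {E : Subgroup P} {S : Set P} (hS : S.Finite)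
    (h : S ⊆ killedElements E) : ∃ F : Set P, F.Finite ∧ IsKilled E F ∧ S ⊆ F := by
  have h' : ∀ x : S, ∃ F : Set P, F.Finite ∧ IsKilled E F ∧ (x : P) ∈ F := fun x => h x.2
  choose F hF hk hx using h'
  have := hS.to_subtype
  refine ⟨⋃ x, F x, Set.finite_iUnion hF, ?_, fun x hxS => Set.mem_iUnion.2 ⟨⟨x, hxS⟩, hx _⟩⟩
  intro G Q _ _ φ hFG hE x hx
  obtain ⟨i, hi⟩ := Set.mem_iUnion.1 hx
  exact hk i G Q φ ((Set.subset_iUnion _ _).trans hFG) hE x hi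

end Killed

theorem eq_one_of_relations {Q : Type*} [Group Q] [Finite Q] {r v : Fin 5 → Q} {f w t : Q}
    (hr₀ : r 0 = 1) (hr : ∀ i, r i * r i = 1) (hf : f * f = 1) (hfr : ∀ i, f * r i = r i * f)
    (hv : ∀ i, v i * v i = 1) (hw : w = ⁅r 1, r 2⁆) (hwv : ∀ i, (w * v i) ^ 3 = 1)
    (hvr : ∀ i, (v i * (r i * f)) ^ 3 = 1)
    (hrt : ∀ i : ℕ, 1 ≤ i → ⁅r 1, (t ^ i)⁻¹ * r 2 * t ^ i⁆ = 1) :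
    (∀ i, r i = 1) ∧ (∀ i, v i = 1) ∧ f = 1 ∧ w = 1 := by
  have key : ∀ x : Q, x * x = 1 → x ^ 3 = 1 → x = 1 := fun x h2 h3 => by
    rwa [pow_succ, pow_two, h2, one_mul] at h3
  have hw1 : w = 1 := by
    have := hrt (orderOf t) (orderOf_pos t)
    rw [pow_orderOf_eq_one] at this
    simpa [hw] using this
  have hv1 : ∀ i, v i = 1 := fun i => key _ (hv i) (by simpa [hw1] using hwv i)
  have hrf : ∀ i, r i * f = 1 := fun i => key _
    (by rw [mul_assoc, ← mul_assoc f, hfr, mul_assoc, hf, mul_one, hr])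
    (by simpa [hv1] using hvr i)
  have hf1 : f = 1 := by simpa [hr₀] using hrf 0
  exact ⟨fun i => by simpa [hf1] using hrf i, hv1, hf1, hw1⟩

theorem mem_killedElements_of_relations {P : Type*} [Group P] {E : Subgroup P}
    {r v : Fin 5 → P} {f w : P}
    (hr₀ : r 0 = 1) (hr : ∀ i, r i * r i = 1) (hf : f * f = 1) (hfr : ∀ i, f * r i = r i * f)
    (hv : ∀ i, v i * v i = 1) (hw : w = ⁅r 1, r 2⁆) (hwv : ∀ i, (w * v i) ^ 3 = 1)
    (hvr : ∀ i, (v i * (r i * f)) ^ 3 = 1)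
    (hrt : ∀ i : ℕ, 1 ≤ i →
      ⁅r 1, ((r 3 * r 4) ^ i)⁻¹ * r 2 * (r 3 * r 4) ^ i⁆ ∈ E) :
    w ∈ killedElements E := by
  refine ⟨Set.range r ∪ Set.range v ∪ {f, w}, by simp [Set.finite_range], ?_, by simp⟩
  intro G Q _ _ φ hF hE
  have hrG : ∀ i, r i ∈ G := fun i => hF (Or.inl (Or.inl ⟨i, rfl⟩))
  have hvG : ∀ i, v i ∈ G := fun i => hF (Or.inl (Or.inr ⟨i, rfl⟩))
  have hfG : f ∈ G := hF (by simp)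
  have hwG : w ∈ G := hF (by simp)
  let r' : Fin 5 → G := fun i => ⟨r i, hrG i⟩
  let v' : Fin 5 → G := fun i => ⟨v i, hvG i⟩
  let f' : G := ⟨f, hfG⟩
  let w' : G := ⟨w, hwG⟩
  have lift : ∀ {x y : G}, (x : P) = y → φ x = φ y := fun h => by rw [Subtype.val_injective h]
  obtain ⟨h1, h2, h3, h4⟩ := eq_one_of_relations (Q := Q) (r := fun i => φ (r' i))
    (v := fun i => φ (v' i)) (f := φ f') (w := φ w') (t := φ (r' 3) * φ (r' 4))
    ((lift (y := 1) hr₀).trans (map_one φ))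
    (fun i => by rw [← map_mul, ← map_one φ]; exact lift (hr i))
    (by rw [← map_mul, ← map_one φ]; exact lift hf)
    (fun i => by simp only [← map_mul]; exact lift (hfr i))
    (fun i => by rw [← map_mul, ← map_one φ]; exact lift (hv i))
    (by rw [← map_commutatorElement]; exact lift hw)
    (fun i => by rw [← map_mul, ← map_pow, ← map_one φ]; exact lift (hwv i))
    (fun i => by rw [← map_mul, ← map_mul, ← map_pow, ← map_one φ]; exact lift (hvr i))
    (fun i hi => by
      simp only [← map_mul, ← map_pow, ← map_inv, ← map_commutatorElement]
      exact hE _ (hrt i hi))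
  rintro ⟨x, hxG⟩ ((⟨i, rfl⟩ | ⟨i, rfl⟩) | rfl | rfl)
  · exact h1 i
  · exact h2 i
  · exact h3
  · exact h4


/-- The action of `Perm α` on `α × β` through the first coordinate. -/
def prodPermHom (α β : Type*) : Perm α →* Perm (α × β) where
  toFun σ := prodCongrLeft fun _ => σ
  map_one' := rfl
  map_mul' _ _ := rfl

theorem prodPermHom_apply {α β : Type*} (σ : Perm α) (x : α × β) :
    prodPermHom α β σ x = (σ x.1, x.2) := rfl

section Model

/-- An involution of three bits such that its products with the flips of the first and of the
second bit have order three. -/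
def mixBits : Bool × Bool × Bool → Bool × Bool × Bool
  | (false, false, false) => (false, true, false)
  | (false, true, false) => (false, false, false)
  | (false, false, true) => (true, false, false)
  | (true, false, false) => (false, false, true)
  | (false, true, true) => (true, true, true)
  | (true, true, true) => (false, true, true)
  | (true, false, true) => (true, true, false)
  | (true, true, false) => (true, false, true)

theorem mixBits_mixBits : ∀ x, mixBits (mixBits x) = x := by decide

variable {Y : Type*}

/-- The action of `mixBits` on `(Y × Bool) × (Bool × Bool)`. -/
def mixPerm (Y : Type*) : Perm ((Y × Bool) × (Bool × Bool)) :=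
  Function.Involutive.toPerm
    (fun x => ((x.1.1, (mixBits (x.1.2, x.2)).1), (mixBits (x.1.2, x.2)).2))
    (fun x => by simp [mixBits_mixBits])

/-- Flipping the bit of `Y × Bool`. -/
def flipBit (Y : Type*) : Perm (Y × Bool) :=
  Function.Involutive.toPerm (fun x => (x.1, !x.2)) (fun x => by simp)

/-- Flipping the first of the two additional bits. -/
def flipControl (α : Type*) : Perm (α × (Bool × Bool)) :=
  Function.Involutive.toPerm (fun x => (x.1, (!x.2.1, x.2.2))) (fun x => by simp)

/-- The permutation `σ` controlled by the first of the two additional bits. -/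
def controlled {α : Type*} (σ : Perm α) : Perm (α × (Bool × Bool)) :=
  prodCongrLeft fun e => if e.1 then σ else 1

theorem controlled_apply {α : Type*} (σ : Perm α) (x : α × (Bool × Bool)) :
    controlled σ x = ((if x.2.1 then σ else 1) x.1, x.2) := rfl

theorem mixPerm_apply (x : (Y × Bool) × (Bool × Bool)) :
    mixPerm Y x = ((x.1.1, (mixBits (x.1.2, x.2)).1), (mixBits (x.1.2, x.2)).2) := rfl

theorem flipBit_apply (x : Y × Bool) : flipBit Y x = (x.1, !x.2) := rfl

theorem flipControl_apply {α : Type*} (x : α × (Bool × Bool)) :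
    flipControl α x = (x.1, (!x.2.1, x.2.2)) := rfl

theorem mixPerm_mul_self : mixPerm Y * mixPerm Y = 1 := by
  ext1 x
  simp [mixPerm_apply, mixBits_mixBits]

theorem flipBit_mul_mixPerm_pow :
    (prodPermHom _ (Bool × Bool) (flipBit Y) * mixPerm Y) ^ 3 = 1 := by
  ext1 ⟨⟨y, z⟩, e₁, e₂⟩
  revert z e₁ e₂
  simp [pow_succ, prodPermHom_apply, mixPerm_apply, flipBit_apply, mixBits]

theorem mixPerm_mul_flipControl_pow : (mixPerm Y * flipControl _) ^ 3 = 1 := by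
  ext1 ⟨⟨y, z⟩, e₁, e₂⟩
  revert z e₁ e₂
  simp [pow_succ, flipControl_apply, mixPerm_apply, mixBits]

theorem controlled_mul_self {α : Type*} {σ : Perm α} (h : σ * σ = 1) :
    controlled σ * controlled σ = 1 := by
  ext1 ⟨x, e₁, e₂⟩
  have : σ (σ x) = x := by rw [← mul_apply, h, one_apply]
  cases e₁ <;> simp [controlled_apply, this]

theorem controlled_mul_flipControl_mul_controlled {α : Type*} (σ : Perm α) :
    controlled σ * flipControl α * controlled σ = prodPermHom _ _ σ * flipControl α := by
  ext1 ⟨x, e₁, e₂⟩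
  cases e₁ <;>
    simp [controlled_apply, flipControl_apply, prodPermHom_apply]

theorem flipControl_mul_self {α : Type*} : flipControl α * flipControl α = 1 := by
  ext1 x
  simp [flipControl_apply]

theorem flipControl_mul_prodPermHom {α : Type*} (σ : Perm α) :
    flipControl α * prodPermHom _ _ σ = prodPermHom _ _ σ * flipControl α := rfl

theorem controlled_mul_prodPermHom {α : Type*} {σ τ : Perm α} (h : σ * τ = τ * σ) :
    controlled σ * prodPermHom _ _ τ = prodPermHom _ _ τ * controlled σ := by
  ext1 ⟨x, e₁, e₂⟩
  have : σ (τ x) = τ (σ x) := congrArg (· x) h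
  cases e₁ <;> simp [controlled_apply, prodPermHom_apply, this]

theorem conj_pow_three {Γ : Type*} [Group Γ] {κ x : Γ} (hκ : κ * κ = 1) (hx : x ^ 3 = 1) :
    (κ * x * κ) ^ 3 = 1 := by
  have : κ⁻¹ = κ := inv_eq_of_mul_eq_one_left hκ
  nth_rw 2 [← this]
  rw [conj_pow, hx]
  simp

/-- The identity and four involutions of `(R → Bool) × Bool`: adding the indicator of `0`,
adding the value at `0` to the additional bit, and two reflections of `R`. -/
def basicFun (R : Type*) [CommRing R] [DecidableEq R] :
    Fin 5 → (R → Bool) × Bool → (R → Bool) × Bool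
  | 0, x => x
  | 1, x => (fun j => xor (x.1 j) (decide (j = 0)), x.2)
  | 2, x => (x.1, xor x.2 (x.1 0))
  | 3, x => (fun j => x.1 (-j), x.2)
  | 4, x => (fun j => x.1 (1 - j), x.2)

theorem basicFun_involutive (R : Type*) [CommRing R] [DecidableEq R] (i : Fin 5) :
    Function.Involutive (basicFun R i) := by
  intro x
  fin_cases i <;> simp [basicFun]

/-- The permutations given by `basicFun`. -/
def basicPerm (R : Type*) [CommRing R] [DecidableEq R] (i : Fin 5) :
    Perm ((R → Bool) × Bool) :=
  (basicFun_involutive R i).toPerm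

variable {R : Type*} [CommRing R] [DecidableEq R]

theorem basicPerm_apply (i : Fin 5) (x : (R → Bool) × Bool) :
    basicPerm R i x = basicFun R i x := rfl

theorem basicPerm_mul_self (i : Fin 5) : basicPerm R i * basicPerm R i = 1 := by
  ext1 x
  exact basicFun_involutive R i x

theorem basicPerm_mul_flipBit (i : Fin 5) :
    basicPerm R i * flipBit _ = flipBit _ * basicPerm R i := by
  ext1 x
  fin_cases i <;> simp [basicPerm_apply, basicFun, flipBit_apply]

theorem commutator_basicPerm : ⁅basicPerm R 1, basicPerm R 2⁆ = flipBit _ := by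
  rw [commutatorElement_def, inv_eq_of_mul_eq_one_left (basicPerm_mul_self _),
    inv_eq_of_mul_eq_one_left (basicPerm_mul_self _)]
  ext1 x
  simp [basicPerm_apply, basicFun, flipBit_apply]

theorem shift_pow_apply (i : ℕ) (x : (R → Bool) × Bool) :
    ((basicPerm R 3 * basicPerm R 4) ^ i) x = (fun j => x.1 (j + i), x.2) := by
  induction i generalizing x with
  | zero => simp
  | succ i ih =>
    rw [pow_succ, mul_apply, ih]
    simp [basicPerm_apply, basicFun, sub_eq_add_neg, add_comm, add_assoc]

theorem commutator_basicPerm_shift {i : ℕ} (hi : (i : R) ≠ 0) :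
    ⁅basicPerm R 1, ((basicPerm R 3 * basicPerm R 4) ^ i)⁻¹ * basicPerm R 2 *
      (basicPerm R 3 * basicPerm R 4) ^ i⁆ = 1 := by
  have h : ∀ x : (R → Bool) × Bool, (((basicPerm R 3 * basicPerm R 4) ^ i)⁻¹ * basicPerm R 2 *
      (basicPerm R 3 * basicPerm R 4) ^ i) x = (x.1, xor x.2 (x.1 i)) := by
    intro x
    rw [mul_apply, mul_apply, inv_eq_iff_eq, shift_pow_apply, shift_pow_apply]
    simp [basicPerm_apply, basicFun]
  rw [commutatorElement_eq_one_iff_mul_comm]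
  ext1 x
  rw [mul_apply (basicPerm R 1), mul_apply _ (basicPerm R 1), h, h]
  simp [basicPerm_apply, basicFun, hi]

end Model

theorem exists_alternating_relations_of_card {k q n : ℕ} (hk : k ≠ 0)
    (hn : 2 ^ (k + 3) * (2 * q) ≤ n) :
    ∃ (r v : Fin 5 → alternatingGroup (Fin n)) (f w : alternatingGroup (Fin n)),
      r 0 = 1 ∧ (∀ i, r i * r i = 1) ∧ f * f = 1 ∧ (∀ i, f * r i = r i * f) ∧
      (∀ i, v i * v i = 1) ∧ w = ⁅r 1, r 2⁆ ∧ (∀ i, (w * v i) ^ 3 = 1) ∧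
      (∀ i, (v i * (r i * f)) ^ 3 = 1) ∧
      (∀ i : ℕ, 1 ≤ i → i < k →
        ⁅r 1, ((r 3 * r 4) ^ i)⁻¹ * r 2 * (r 3 * r 4) ^ i⁆ = 1) ∧
      w * w = 1 ∧ (w : Perm (Fin n)).support.card = 2 * (2 ^ (k + 3) * q) := by
  have : NeZero k := ⟨hk⟩
  let X := ((ZMod k → Bool) × Bool) × (Bool × Bool)
  have hX : Fintype.card X = 2 ^ (k + 3) := by
    simp [X, ZMod.card, pow_succ, mul_assoc]
  obtain ⟨e⟩ : Nonempty (X × Fin (2 * q) ↪ Fin n) := by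
    rw [Function.Embedding.nonempty_iff_card_le, Fintype.card_prod, hX]
    simpa using hn
  have hsign : ∀ σ : Perm X,
      viaEmbeddingHom e (prodPermHom X (Fin (2 * q)) σ) ∈ alternatingGroup (Fin n) := by
    intro σ
    rw [mem_alternatingGroup, viaEmbeddingHom_apply, sign_viaEmbedding]
    change sign (prodCongrLeft fun _ : Fin (2 * q) => σ) = 1
    rw [sign_prodCongrLeft]
    simp [pow_mul, Int.units_sq]
  let Ψ : Perm X →* alternatingGroup (Fin n) :=
    ((viaEmbeddingHom e).comp (prodPermHom X (Fin (2 * q)))).codRestrict _ hsign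
  let L := prodPermHom ((ZMod k → Bool) × Bool) (Bool × Bool)
  let r := basicPerm (ZMod k)
  have hκ : ∀ i, controlled (r i) * controlled (r i) = 1 := fun i =>
    controlled_mul_self (basicPerm_mul_self i)
  have hww : L (flipBit _) * L (flipBit _) = 1 := by
    rw [← map_mul, ← map_one L]
    congr 1
    ext1 x
    simp [flipBit_apply]
  refine ⟨fun i => Ψ (L (r i)), fun i => Ψ (controlled (r i) * mixPerm _ * controlled (r i)),
    Ψ (flipControl _), Ψ (L (flipBit _)), ?_, ?_, ?_, ?_, ?_, ?_, ?_, ?_, ?_, ?_, ?_⟩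
  · change Ψ (L 1) = 1
    rw [map_one, map_one]
  · intro i
    rw [← map_mul, ← map_mul, basicPerm_mul_self, map_one, map_one]
  · rw [← map_mul, flipControl_mul_self, map_one]
  · intro i
    rw [← map_mul, flipControl_mul_prodPermHom, map_mul]
  · intro i
    rw [← map_mul, ← map_one Ψ]
    congr 1
    calc _ = controlled (r i) * (mixPerm _ * (controlled (r i) * controlled (r i)) *
          mixPerm _) * controlled (r i) := by group
      _ = 1 := by rw [hκ, mul_one, mixPerm_mul_self, mul_one, hκ]
  · rw [← map_commutatorElement, ← map_commutatorElement, commutator_basicPerm]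
  · intro i
    rw [← map_mul, ← map_pow, ← map_one Ψ]
    congr 1
    rw [← mul_assoc, ← mul_assoc,
      ← controlled_mul_prodPermHom (basicPerm_mul_flipBit (R := ZMod k) i), mul_assoc (controlled _)]
    exact conj_pow_three (hκ i) flipBit_mul_mixPerm_pow
  · intro i
    rw [← map_mul, ← map_mul, ← map_pow, ← map_one Ψ]
    congr 1
    rw [← controlled_mul_flipControl_mul_controlled]
    change (_ * (controlled (r i) * _ * controlled (r i))) ^ 3 = 1
    refine Eq.trans (congrArg (· ^ 3) ?_)
      (conj_pow_three (hκ i) (mixPerm_mul_flipControl_pow (Y := ZMod k → Bool)))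
    calc _ = controlled (r i) * mixPerm _ * (controlled (r i) * controlled (r i)) *
          flipControl _ * controlled (r i) := by group
      _ = _ := by rw [hκ]; group
  · intro i h1 h2
    simp only [← map_mul, ← map_pow, ← map_inv, ← map_commutatorElement]
    rw [commutator_basicPerm_shift, map_one, map_one]
    rw [Ne, ZMod.natCast_eq_zero_iff]
    exact fun h => by have := Nat.le_of_dvd h1 h; omega
  · rw [← map_mul, hww, map_one]
  · change (viaEmbeddingHom e (prodPermHom X (Fin (2 * q)) (L (flipBit _)))).support.card = _
    rw [viaEmbeddingHom_apply, card_support_viaEmbedding]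
    have : (prodPermHom X (Fin (2 * q)) (L (flipBit _))).support = Finset.univ := by
      ext x
      obtain ⟨⟨⟨y, z⟩, c⟩, j⟩ := x
      simp only [mem_support, Finset.mem_univ, iff_true]
      intro h
      have h' : (!z) = z := congrArg (fun x => x.1.1.2) h
      simp at h'
    rw [this, Finset.card_univ, Fintype.card_prod, hX, Fintype.card_fin]
    ring

theorem exists_alternating_relations (n : ℕ) :
    ∃ (r v : Fin 5 → alternatingGroup (Fin n)) (f w : alternatingGroup (Fin n)),
      r 0 = 1 ∧ (∀ i, r i * r i = 1) ∧ f * f = 1 ∧ (∀ i, f * r i = r i * f) ∧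
      (∀ i, v i * v i = 1) ∧ w = ⁅r 1, r 2⁆ ∧ (∀ i, (w * v i) ^ 3 = 1) ∧
      (∀ i, (v i * (r i * f)) ^ 3 = 1) ∧
      (∀ i : ℕ, 1 ≤ i → 2 ^ (i + 6) ≤ n →
        ⁅r 1, ((r 3 * r 4) ^ i)⁻¹ * r 2 * (r 3 * r 4) ^ i⁆ = 1) ∧
      w * w = 1 ∧ (64 ≤ n → ∃ m, (w : Perm (Fin n)).support.card = 2 * m ∧
        2 * m ≤ n / 2 ∧ n / 2 ≤ 4 * m) := by
  by_cases hn : 64 ≤ n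
  · obtain ⟨k, hk⟩ : ∃ k, Nat.log 2 n = k + 5 :=
      ⟨Nat.log 2 n - 5, by
        have := (Nat.le_log_iff_pow_le (b := 2) (x := 5) (by norm_num) (by omega)).2
          (show 2 ^ 5 ≤ n by omega)
        omega⟩
    have hk0 : k ≠ 0 := by
      have := (Nat.le_log_iff_pow_le (b := 2) (x := 6) (by norm_num) (by omega)).2
        (show 2 ^ 6 ≤ n by omega)
      omega
    have hle : 2 ^ (k + 3) * 4 ≤ n := by
      have := Nat.pow_log_le_self 2 (show n ≠ 0 by omega)
      rw [hk] at this
      calc _ = 2 ^ (k + 5) := by ring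
        _ ≤ n := this
    set C := 2 ^ (k + 3) with hC
    have hC0 : 0 < C := by positivity
    have h1 := Nat.div_add_mod (n / 2) (2 * C)
    have h2 := Nat.mod_lt (n / 2) (show 0 < 2 * C by omega)
    have h3 : 1 ≤ n / 2 / (2 * C) := by
      rw [Nat.one_le_div_iff (by omega)]; omega
    set q := n / 2 / (2 * C) with hq
    have h4 : 2 * C * q = 2 * (C * q) := by ring
    have h5 : C ≤ C * q := Nat.le_mul_of_pos_right _ h3
    obtain ⟨r, v, f, w, p1, p2, p3, p4, p5, p6, p7, p8, p9, p10, p11⟩ :=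
      exists_alternating_relations_of_card (k := k) (q := q) (n := n) hk0 (by
        rw [← hC, show C * (2 * q) = 2 * (C * q) by ring]; omega)
    refine ⟨r, v, f, w, p1, p2, p3, p4, p5, p6, p7, p8, fun i h h' => p9 i h ?_, p10,
      fun _ => ⟨C * q, p11, by omega, by omega⟩⟩
    have := (Nat.le_log_iff_pow_le (b := 2) (by norm_num) (by omega)).2 h'
    omega
  · exact ⟨1, 1, 1, 1, by simp [hn]⟩

/-- The elements of a product with only finitely many nontrivial coordinates. -/
def eventuallyTrivial (A : ℕ → Type*) [∀ n, Group (A n)] : Subgroup (∀ n, A n) where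
  carrier := {x | ∃ N, ∀ n, N ≤ n → x n = 1}
  one_mem' := ⟨0, fun _ _ => rfl⟩
  mul_mem' := by
    rintro x y ⟨N, hN⟩ ⟨M, hM⟩
    exact ⟨max N M, fun n hn => by
      simp [hN n (le_of_max_le_left hn), hM n (le_of_max_le_right hn)]⟩
  inv_mem' := by
    rintro x ⟨N, hN⟩
    exact ⟨N, fun n hn => by simp [hN n hn]⟩

instance (A : ℕ → Type*) [∀ n, Group (A n)] : (eventuallyTrivial A).Normal where
  conj_mem := by
    rintro x ⟨N, hN⟩ g
    exact ⟨N, fun n hn => by simp [hN n hn]⟩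

theorem pi_mem_conj_pow {ι : Type*} {A : ι → Type*} [∀ i, Group (A i)] {w : ∀ i, A i} :
    ∀ (n : ℕ) {x : ∀ i, A i}, (∀ i, x i ∈ {y | IsConj (w i) y} ^ n) → x ∈ {y | IsConj w y} ^ n
  | 0, x, h => by
    simp only [pow_zero, Set.mem_one] at h ⊢
    exact funext h
  | n + 1, x, h => by
    simp only [pow_succ, Set.mem_mul] at h
    choose y hy z hz hyz using h
    have hz' : ∀ i, ∃ g, g * w i * g⁻¹ = z i := fun i => isConj_iff.1 (hz i)
    choose g hg using hz'
    rw [pow_succ]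
    exact Set.mem_mul.2 ⟨y, pi_mem_conj_pow n hy, z, isConj_iff.2 ⟨g, funext hg⟩, funext hyz⟩

/-- The product of the groups `Alt(n + 5) ^ c n`. -/
abbrev AltProd (c : ℕ → ℕ) : Type :=
  ∀ n : ℕ, Fin (c n) → alternatingGroup (Fin (n + 5))

theorem mem_killedElements_altProd {c : ℕ → ℕ} (x : AltProd c) :
    x ∈ killedElements (eventuallyTrivial fun n => Fin (c n) → alternatingGroup (Fin (n + 5))) := by
  choose r v f w h1 h2 h3 h4 h5 h6 h7 h8 h9 h10 h11 using
    fun n : ℕ => exists_alternating_relations (n + 5)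
  let diag : ∀ _ : (∀ n : ℕ, alternatingGroup (Fin (n + 5))), AltProd c := fun y n _ => y n
  have hw : diag w ∈ killedElements
      (eventuallyTrivial fun n => Fin (c n) → alternatingGroup (Fin (n + 5))) := by
    refine mem_killedElements_of_relations (r := fun i => diag fun n => r n i)
      (v := fun i => diag fun n => v n i) (f := diag f) ?_ ?_ ?_ ?_ ?_ ?_ ?_ ?_ ?_
    · funext n _; exact h1 n
    · intro i; funext n _; exact h2 n i
    · funext n _; exact h3 n
    · intro i; funext n _; exact h4 n i
    · intro i; funext n _; exact h5 n i
    · funext n _; exact h6 n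
    · intro i; funext n _; exact h7 n i
    · intro i; funext n _; exact h8 n i
    · intro i hi
      refine ⟨2 ^ (i + 6), fun n hn => ?_⟩
      funext _
      exact h9 n i hi (by omega)
  let y : AltProd c := fun n j => if 59 ≤ n then x n j else w n ^ 16
  have hy : y ∈ {z | IsConj (diag w) z} ^ 16 := by
    refine pi_mem_conj_pow 16 fun n => pi_mem_conj_pow 16 fun j => ?_
    by_cases hn : 59 ≤ n
    · obtain ⟨m, hm, hm₁, hm₂⟩ := h11 n (by omega)
      simp only [y, if_pos hn]
      exact alternating_mem_conj_pow (h10 n) hm (by simp; omega) (by simpa using hm₁)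
        (by simpa using hm₂) _
    · simp only [y, if_neg hn]
      exact Set.pow_mem_pow (IsConj.refl (w n))
  rw [show x = y * (y⁻¹ * x) by group]
  refine mul_mem (mem_killedElements_of_mem_pow hw 16 hy) (mem_killedElements_of_mem ?_)
  refine ⟨59, fun n hn => ?_⟩
  funext j
  simp [y, hn]

section Triangular

theorem two_mod_add_five (n : ℕ) : 2 % (n + 5) = 2 :=
  Nat.mod_eq_of_lt (by omega)

theorem fin_val_two (n : ℕ) : (2 : Fin (n + 5)).val = 2 :=
  two_mod_add_five n

/-- The three-cycle `(0 1 2)`. -/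
def threeCycle (n : ℕ) : Perm (Fin (n + 5)) := swap 0 1 * swap 1 2

theorem threeCycle_apply_of_lt {n : ℕ} {x : Fin (n + 5)} (hx : 2 < x.val) :
    threeCycle n x = x := by
  have h0 : x ≠ 0 := fun h => by rw [h] at hx; simp at hx
  have h1 : x ≠ 1 := fun h => by
    rw [h, Fin.val_one' ] at hx
    have := Nat.mod_le 1 (n + 5); omega
  have h2 : x ≠ 2 := fun h => by
    rw [h, fin_val_two] at hx
    omega
  rw [threeCycle, mul_apply, swap_apply_of_ne_of_ne h1 h2, swap_apply_of_ne_of_ne h0 h1]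

theorem threeCycle_zero (n : ℕ) : threeCycle n 0 = 1 := by
  have h1 : (0 : Fin (n + 5)) ≠ 1 := by simp
  have h2 : (0 : Fin (n + 5)) ≠ 2 := by
    simp [Fin.ext_iff, two_mod_add_five]
  rw [threeCycle, mul_apply, swap_apply_of_ne_of_ne h1 h2, swap_apply_left]

theorem threeCycle_one (n : ℕ) : threeCycle n 1 = 2 := by
  have h1 : (2 : Fin (n + 5)) ≠ 0 := by
    simp [Fin.ext_iff, two_mod_add_five]
  have h2 : (2 : Fin (n + 5)) ≠ 1 := by
    simp [Fin.ext_iff, two_mod_add_five]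
  rw [threeCycle, mul_apply, swap_apply_left, swap_apply_of_ne_of_ne h1 h2]

theorem val_addRight_pow_apply {n : ℕ} (j : ℕ) (x : Fin (n + 5)) :
    (((Equiv.addRight (1 : Fin (n + 5)) ^ 2) ^ j) x).val = (x.val + 2 * j) % (n + 5) := by
  rw [← pow_mul]
  generalize 2 * j = k
  induction k with
  | zero => simp [Nat.mod_eq_of_lt x.2]
  | succ k ih =>
    rw [pow_succ', mul_apply, Equiv.coe_addRight, Fin.val_add, ih]
    simp [add_assoc]

theorem commute_threeCycle_of_lt {n j : ℕ} (hj : 3 ≤ 2 * j) (hn : 2 * j + 2 < n + 5) :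
    threeCycle n * ((Equiv.addRight (1 : Fin (n + 5)) ^ 2) ^ j * threeCycle n *
      ((Equiv.addRight (1 : Fin (n + 5)) ^ 2) ^ j)⁻¹) =
    ((Equiv.addRight (1 : Fin (n + 5)) ^ 2) ^ j * threeCycle n *
      ((Equiv.addRight (1 : Fin (n + 5)) ^ 2) ^ j)⁻¹) * threeCycle n := by
  refine Disjoint.commute fun x => ?_
  set s := (Equiv.addRight (1 : Fin (n + 5)) ^ 2) ^ j with hs
  obtain ⟨y, rfl⟩ := s.surjective x
  by_cases hy : 2 < y.val
  · right
    simp [threeCycle_apply_of_lt hy]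
  · left
    apply threeCycle_apply_of_lt
    rw [hs, val_addRight_pow_apply, Nat.mod_eq_of_lt (by omega)]
    omega

theorem not_commute_threeCycle {n j : ℕ} (hj : j = (n + 4) / 2) :
    threeCycle n * ((Equiv.addRight (1 : Fin (n + 5)) ^ 2) ^ j * threeCycle n *
      ((Equiv.addRight (1 : Fin (n + 5)) ^ 2) ^ j)⁻¹) ≠
    ((Equiv.addRight (1 : Fin (n + 5)) ^ 2) ^ j * threeCycle n *
      ((Equiv.addRight (1 : Fin (n + 5)) ^ 2) ^ j)⁻¹) * threeCycle n := by
  set s := (Equiv.addRight (1 : Fin (n + 5)) ^ 2) ^ j with hs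
  obtain ⟨y, hy, hcy⟩ : ∃ y : Fin (n + 5), y.val = (n + 4) % 2 ∧ threeCycle n y = y + 1 := by
    rcases Nat.mod_two_eq_zero_or_one (n + 4) with h | h
    · exact ⟨0, by simp [h], by rw [threeCycle_zero]; simp⟩
    · have h2 : (2 : Fin (n + 5)) = 1 + 1 := by
        rw [Fin.ext_iff, fin_val_two, Fin.val_add, Fin.val_one', Nat.mod_eq_of_lt (by omega : 1 < n + 5),
          Nat.mod_eq_of_lt (by omega)]
      exact ⟨1, by simp [h], by rw [threeCycle_one, h2]⟩
  have hsy : (s y).val = n + 4 := by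
    rw [hs, val_addRight_pow_apply, Nat.mod_eq_of_lt (by omega)]
    omega
  have hsy' : s (y + 1) = 0 := by
    have h1 : (y + 1).val = y.val + 1 := by
      rw [Fin.val_add_one_of_lt']
      omega
    rw [hs, Fin.ext_iff, val_addRight_pow_apply, h1,
      show y.val + 1 + 2 * j = n + 5 by omega, Nat.mod_self]
    rfl
  intro h
  have h' := congrArg (fun g : Perm (Fin (n + 5)) => g (s y)) h
  have hinv : ∀ x, s⁻¹ (s x) = x := s.symm_apply_apply
  simp only [mul_apply, hinv, hcy, hsy', threeCycle_zero,
    threeCycle_apply_of_lt (show 2 < (s y).val by omega)] at h'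
  simp at h'

theorem exists_finite_triangular :
    ∃ S : Set (∀ n, alternatingGroup (Fin (n + 5))), S.Finite ∧
      ∀ n, ∃ h ∈ Subgroup.closure S, h n ≠ 1 ∧ ∀ m, n < m → h m = 1 := by
  let t : ∀ n, alternatingGroup (Fin (n + 5)) := fun n =>
    ⟨Equiv.addRight (1 : Fin (n + 5)) ^ 2, by
      rw [mem_alternatingGroup, map_pow, Int.units_sq]⟩
  let c : ℕ → ∀ n, alternatingGroup (Fin (n + 5)) := fun p n =>
    if n % 2 = p then ⟨threeCycle n, by
      rw [mem_alternatingGroup, threeCycle, map_mul, sign_swap (by simp),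
        sign_swap (by simp [Fin.ext_iff, two_mod_add_five])]
      rfl⟩ else 1
  refine ⟨{t, c 0, c 1}, by simp, fun n => ?_⟩
  let x := c (n % 2)
  let y := t ^ ((n + 4) / 2) * x * (t ^ ((n + 4) / 2))⁻¹
  have ht : t ∈ Subgroup.closure {t, c 0, c 1} := Subgroup.subset_closure (by simp)
  have hx : x ∈ Subgroup.closure {t, c 0, c 1} := Subgroup.subset_closure (by
    rcases Nat.mod_two_eq_zero_or_one n with h | h <;> simp [x, h])
  have hy : y ∈ Subgroup.closure {t, c 0, c 1} :=
    mul_mem (mul_mem (pow_mem ht _) hx) (inv_mem (pow_mem ht _))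
  refine ⟨⁅x, y⁆, ?_, ?_, ?_⟩
  · rw [commutatorElement_def]
    exact mul_mem (mul_mem (mul_mem hx hy) (inv_mem hx)) (inv_mem hy)
  · change ⁅x n, y n⁆ ≠ 1
    rw [Ne, commutatorElement_eq_one_iff_mul_comm]
    intro h
    have h' := congrArg Subtype.val h
    have hxn : (x n).val = threeCycle n := by simp [x, c]
    have hyn : (y n).val = (Equiv.addRight (1 : Fin (n + 5)) ^ 2) ^ ((n + 4) / 2) * (x n).val *
      ((Equiv.addRight (1 : Fin (n + 5)) ^ 2) ^ ((n + 4) / 2))⁻¹ := rfl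
    simp only [Subgroup.coe_mul, hyn, hxn] at h'
    exact not_commute_threeCycle rfl h'
  · intro m hm
    change ⁅x m, y m⁆ = 1
    rw [commutatorElement_eq_one_iff_mul_comm]
    by_cases hp : m % 2 = n % 2
    · apply Subtype.val_injective
      have hxn : (x m).val = threeCycle m := by simp [x, c, hp]
      have hyn : (y m).val = (Equiv.addRight (1 : Fin (m + 5)) ^ 2) ^ ((n + 4) / 2) * (x m).val *
        ((Equiv.addRight (1 : Fin (m + 5)) ^ 2) ^ ((n + 4) / 2))⁻¹ := rfl
      simp only [Subgroup.coe_mul, hyn, hxn]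
      exact commute_threeCycle_of_lt (by omega) (by omega)
    · have : x m = 1 := by simp [x, c, hp]
      rw [this, one_mul, mul_one]

end Triangular

theorem mem_of_mulSingle_mem {A : ℕ → Type*} [∀ n, Group (A n)] {H : Subgroup (∀ n, A n)}
    (N : ℕ) {x : ∀ n, A n} (hx : ∀ m, N ≤ m → x m = 1)
    (h : ∀ m < N, Pi.mulSingle m (x m) ∈ H) : x ∈ H := by
  induction N generalizing x with
  | zero =>
    rw [show x = 1 from funext fun m => hx m (Nat.zero_le m)]
    exact one_mem H
  | succ N ih =>
    rw [show x = (x * (Pi.mulSingle N (x N))⁻¹) * Pi.mulSingle N (x N) by group]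
    refine mul_mem (ih (fun m hm => ?_) fun m hm => ?_) (h N (Nat.lt_succ_self N))
    · rcases hm.eq_or_lt with rfl | hm
      · simp
      · simp [Pi.mulSingle_eq_of_ne hm.ne', hx m hm]
    · have := h m (by omega)
      simpa [Pi.mulSingle_eq_of_ne hm.ne] using this

theorem mulSingle_mem_of_triangular {c : ℕ → ℕ} {G : Subgroup (AltProd c)}
    (hsurj : ∀ n s, ∃ g ∈ G, g n = s)
    (htri : ∀ n, ∃ h ∈ G, ∃ a ≠ 1, h n = (fun _ => a) ∧ ∀ m, n < m → h m = 1) (n : ℕ) :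
    ∀ x : Fin (c n) → alternatingGroup (Fin (n + 5)), (Pi.mulSingle n x : AltProd c) ∈ G := by
  induction n using Nat.strong_induction_on with
  | _ n ih =>
  obtain ⟨h, hG, a, ha, hn, hm⟩ := htri n
  have hsingle : (Pi.mulSingle n (h n) : AltProd c) ∈ G := by
    have : h * (Pi.mulSingle n (h n))⁻¹ ∈ G := by
      refine mem_of_mulSingle_mem n (fun m hnm => ?_) fun m hmn => ih m hmn _
      rcases hnm.eq_or_lt with rfl | hnm
      · simp
      · simp [Pi.mulSingle_eq_of_ne hnm.ne', hm m hnm]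
    simpa using mul_mem (inv_mem this) hG
  have key : ∀ i : Fin (c n), ∀ b : alternatingGroup (Fin (n + 5)),
      (Pi.mulSingle n (Pi.mulSingle i b) : AltProd c) ∈ G := by
    intro i
    let e : alternatingGroup (Fin (n + 5)) →* AltProd c :=
      (MonoidHom.mulSingle (fun n => Fin (c n) → alternatingGroup (Fin (n + 5))) n).comp
        (MonoidHom.mulSingle (fun _ : Fin (c n) => alternatingGroup (Fin (n + 5))) i)
    have hcomm : ∀ (s : alternatingGroup (Fin (n + 5))) (y : AltProd c),
        y n = Pi.mulSingle i s → ∀ z : Fin (c n) → alternatingGroup (Fin (n + 5)),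
        y * Pi.mulSingle n z * y⁻¹ =
          Pi.mulSingle n (Pi.mulSingle i s * z * (Pi.mulSingle i s)⁻¹) := by
      intro s y hy z
      funext m
      rcases eq_or_ne m n with rfl | hmn
      · simp [hy]
      · simp [Pi.mulSingle_eq_of_ne hmn]
    have hnormal : (G.comap e).Normal := by
      refine ⟨fun b hb s => ?_⟩
      obtain ⟨y, hyG, hy⟩ := hsurj n (Pi.mulSingle i s)
      have := mul_mem (mul_mem hyG (show e b ∈ G from hb)) (inv_mem hyG)
      have heq : y * e b * y⁻¹ = e (s * b * s⁻¹) := by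
        rw [map_mul, map_mul, map_inv]
        exact (hcomm s y hy _).trans (by simp [e, ← Pi.mulSingle_mul, ← Pi.mulSingle_inv])
      rw [heq] at this
      exact this
    have hcen : ∃ s, s * a * s⁻¹ * a⁻¹ ≠ 1 := by
      by_contra! hc
      refine ha ?_
      have : a ∈ Subgroup.center (alternatingGroup (Fin (n + 5))) := by
        rw [Subgroup.mem_center_iff]
        intro s
        have := hc s
        rw [mul_inv_eq_one, mul_inv_eq_iff_eq_mul] at this
        exact this
      rwa [alternatingGroup.center_eq_bot (by simp), Subgroup.mem_bot] at this
    obtain ⟨s, hs⟩ := hcen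
    have hne : G.comap e ≠ ⊥ := by
      intro hbot
      obtain ⟨y, hyG, hy⟩ := hsurj n (Pi.mulSingle i s)
      have h1 := mul_mem (mul_mem (mul_mem hyG hsingle) (inv_mem hyG)) (inv_mem hsingle)
      have heq : y * Pi.mulSingle n (h n) * y⁻¹ * (Pi.mulSingle n (h n))⁻¹ =
          e (s * a * s⁻¹ * a⁻¹) := by
        rw [hcomm s y hy, hn]
        refine (congrArg _ (Pi.mulSingle_inv n _).symm).trans ((Pi.mulSingle_mul n _ _).symm.trans ?_)
        change _ = (Pi.mulSingle n (Pi.mulSingle i (s * a * s⁻¹ * a⁻¹)) : AltProd c)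
        congr 1
        funext j
        rcases eq_or_ne j i with rfl | hji
        · simp
        · simp [Pi.mulSingle_eq_of_ne hji]
      rw [heq] at h1
      have : s * a * s⁻¹ * a⁻¹ ∈ G.comap e := h1
      rw [hbot, Subgroup.mem_bot] at this
      exact hs this
    have := alternatingGroup.isSimpleGroup (α := Fin (n + 5)) (by simp)
    intro b
    have htop := (hnormal.eq_bot_or_eq_top).resolve_left hne
    have : b ∈ G.comap e := by rw [htop]; trivial
    exact this
  intro x
  let e := MonoidHom.mulSingle (fun n => Fin (c n) → alternatingGroup (Fin (n + 5))) n
  exact Subgroup.pi_mem_of_mulSingle_mem (H := G.comap e) x fun i => key i (x i)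

theorem eventuallyTrivial_le_of_triangular {c : ℕ → ℕ} {G : Subgroup (AltProd c)}
    (hsurj : ∀ n s, ∃ g ∈ G, g n = s)
    (htri : ∀ n, ∃ h ∈ G, ∃ a ≠ 1, h n = (fun _ => a) ∧ ∀ m, n < m → h m = 1) :
    eventuallyTrivial (fun n => Fin (c n) → alternatingGroup (Fin (n + 5))) ≤ G := by
  rintro x ⟨N, hN⟩
  exact mem_of_mulSingle_mem N hN fun m _ => mulSingle_mem_of_triangular hsurj htri m (x m)

theorem le_card_alternatingGroup (n : ℕ) : n < Nat.card (alternatingGroup (Fin (n + 5))) := by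
  have h := two_mul_nat_card_alternatingGroup (α := Fin (n + 5))
  rw [Nat.card_perm, Nat.card_fin] at h
  have h1 := Nat.self_le_factorial (n + 4)
  have h2 : (n + 5).factorial = (n + 5) * (n + 4).factorial := Nat.factorial_succ _
  nlinarith

/-- A homomorphism from a simple alternating group to a smaller group is trivial. -/
theorem alternatingGroup_hom_eq_one {n : ℕ} {Q : Type*} [Group Q] [Finite Q]
    (hQ : Nat.card Q ≤ n) (φ : alternatingGroup (Fin (n + 5)) →* Q)
    (x : alternatingGroup (Fin (n + 5))) : φ x = 1 := by
  have := alternatingGroup.isSimpleGroup (α := Fin (n + 5)) (by simp)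
  rcases φ.normal_ker.eq_bot_or_eq_top with h | h
  · have h1 := Nat.card_le_card_of_injective φ ((MonoidHom.ker_eq_bot_iff φ).1 h)
    have h2 := le_card_alternatingGroup n
    omega
  · rw [← MonoidHom.mem_ker, h]
    trivial

section Truncation

variable {A : ℕ → Type*} [∀ n, Group (A n)]

/-- Replace the coordinates of index at least `N` by `1`. -/
def truncate (N : ℕ) : (∀ n, A n) →* ∀ n, A n where
  toFun x n := if n < N then x n else 1
  map_one' := by funext n; simp
  map_mul' x y := by funext n; by_cases h : n < N <;> simp [h]

/-- Replace the coordinates of index less than `N` by `1`. -/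
def removeInitial (N : ℕ) : (∀ n, A n) →* ∀ n, A n where
  toFun x n := if n < N then 1 else x n
  map_one' := by funext n; simp
  map_mul' x y := by funext n; by_cases h : n < N <;> simp [h]

theorem removeInitial_mul_truncate (N : ℕ) (x : ∀ n, A n) : removeInitial N x * truncate N x = x := by
  funext n
  by_cases h : n < N <;> simp [removeInitial, truncate, h]

theorem truncate_mem_eventuallyTrivial (N : ℕ) (x : ∀ n, A n) :
    truncate N x ∈ eventuallyTrivial A :=
  ⟨N, fun _ hn => if_neg hn.not_gt⟩

end Truncation

theorem hom_eq_one_of_eventuallyTrivial {c : ℕ → ℕ} {G : Subgroup (AltProd c)}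
    (hG : eventuallyTrivial (fun n => Fin (c n) → alternatingGroup (Fin (n + 5))) ≤ G)
    {Q : Type*} [Group Q] [Finite Q] (φ : G →* Q) (x : G)
    (hx : (x : AltProd c) ∈
      eventuallyTrivial (fun n => Fin (c n) → alternatingGroup (Fin (n + 5))))
    (hx' : ∀ n < Nat.card Q, (x : AltProd c) n = 1) : φ x = 1 := by
  have hsingle (n : ℕ) (y : Fin (c n) → alternatingGroup (Fin (n + 5))) :
      (Pi.mulSingle n y : AltProd c) ∈ G :=
    hG ⟨n + 1, fun m hm => Pi.mulSingle_eq_of_ne (by omega) _⟩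
  suffices h : (x : AltProd c) ∈ φ.ker.map G.subtype by
    obtain ⟨y, hy, hyx⟩ := h
    rw [← Subtype.ext hyx]
    exact hy
  obtain ⟨N, hN⟩ := hx
  refine mem_of_mulSingle_mem N hN fun m _ => ?_
  by_cases hm : m < Nat.card Q
  · rw [hx' m hm, Pi.mulSingle_one]
    exact one_mem _
  · let e : (Fin (c m) → alternatingGroup (Fin (m + 5))) →* G :=
      (MonoidHom.mulSingle (fun n => Fin (c n) → alternatingGroup (Fin (n + 5))) m).codRestrict G
        (hsingle m)
    have h := Subgroup.pi_mem_of_mulSingle_mem (H := (φ.comp e).ker) ((x : AltProd c) m)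
      fun i => MonoidHom.mem_ker.2 <| alternatingGroup_hom_eq_one (not_lt.1 hm) ((φ.comp e).comp
        (MonoidHom.mulSingle (fun _ => alternatingGroup (Fin (m + 5))) i)) ((x : AltProd c) m i)
    exact ⟨e ((x : AltProd c) m), h, rfl⟩

instance (n : ℕ) : DiscreteTopology (alternatingGroup (Fin n)) := ⟨rfl⟩

theorem isOpen_preimage_of_truncate {A : ℕ → Type*} [∀ n, Group (A n)]
    [∀ n, TopologicalSpace (A n)] [∀ n, DiscreteTopology (A n)] {Q : Type*}
    {g : (∀ n, A n) → Q} {N : ℕ} (hg : ∀ x y, truncate N x = truncate N y → g x = g y)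
    (s : Set Q) : IsOpen (g ⁻¹' s) := by
  refine isOpen_iff_mem_nhds.2 fun x hx => ?_
  have hU : IsOpen ((Set.Iio N).pi fun n => ({x n} : Set (A n))) :=
    isOpen_set_pi (Set.finite_Iio N) fun n _ => isOpen_discrete _
  refine Filter.mem_of_superset (hU.mem_nhds fun n _ => rfl) fun y hy => ?_
  have : g y = g x := hg y x <| funext fun n => by
    by_cases hn : n < N
    · simpa [truncate, hn] using hy n hn
    · simp [truncate, hn]
  simpa [this] using hx

/-- A homomorphism from a dense group generated by killed elements to a finite group extends
continuously to the whole product. -/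
theorem exists_extension_of_isKilled {c : ℕ → ℕ} {F : Set (AltProd c)}
    (hF : IsKilled (eventuallyTrivial fun n => Fin (c n) → alternatingGroup (Fin (n + 5))) F)
    (hG : eventuallyTrivial (fun n => Fin (c n) → alternatingGroup (Fin (n + 5))) ≤
      Subgroup.closure F)
    (Q : Type) [Group Q] [Finite Q] (φ : Subgroup.closure F →* Q) :
    ∃ g : AltProd c →* Q, (∀ s : Set Q, IsOpen ((g : AltProd c → Q) ⁻¹' s)) ∧
      g.comp (Subgroup.closure F).subtype = φ := by
  let N := Nat.card Q
  let E := eventuallyTrivial fun n => Fin (c n) → alternatingGroup (Fin (n + 5))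
  let t : AltProd c →* Subgroup.closure F :=
    (truncate N).codRestrict _ fun x => hG (truncate_mem_eventuallyTrivial N x)
  have hd : ∀ x : Subgroup.closure F, removeInitial N (x : AltProd c) ∈ Subgroup.closure F := by
    intro x
    rw [← mul_inv_eq_iff_eq_mul.2 (removeInitial_mul_truncate N (x : AltProd c)).symm]
    exact mul_mem x.2 (inv_mem (hG (truncate_mem_eventuallyTrivial N _)))
  let d : Subgroup.closure F →* Subgroup.closure F :=
    ((removeInitial N).comp (Subgroup.closure F).subtype).codRestrict _ hd
  have hdt : ∀ x : Subgroup.closure F, d x * t x = x := fun x =>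
    Subtype.ext (removeInitial_mul_truncate N (x : AltProd c))
  have hE : ∀ x : Subgroup.closure F, (x : AltProd c) ∈ E → φ.comp d x = 1 := by
    rintro x hx
    refine hom_eq_one_of_eventuallyTrivial hG φ (d x) ?_ fun n hn => if_pos hn
    obtain ⟨M, hM⟩ := hx
    refine ⟨M, fun n hn => ?_⟩
    change (if n < N then 1 else (x : AltProd c) n) = 1
    rw [hM n hn, ite_self]
  have hFk := hF (Subgroup.closure F) Q (φ.comp d) Subgroup.subset_closure hE
  have hker : ∀ x : Subgroup.closure F, φ.comp d x = 1 := by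
    rintro ⟨x, hx⟩
    induction hx using Subgroup.closure_induction with
    | mem x hx => exact hFk ⟨x, _⟩ hx
    | one => exact map_one (φ.comp d)
    | mul x y hx hy h1 h2 =>
      rw [show (⟨x * y, mul_mem hx hy⟩ : Subgroup.closure F) = ⟨x, hx⟩ * ⟨y, hy⟩ from rfl,
        map_mul, h1, h2, one_mul]
    | inv x hx h1 =>
      rw [show (⟨x⁻¹, inv_mem hx⟩ : Subgroup.closure F) = ⟨x, hx⟩⁻¹ from rfl,
        map_inv, h1, inv_one]
  refine ⟨φ.comp t, isOpen_preimage_of_truncate (N := N) fun x y hxy => ?_, ?_⟩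
  · exact congrArg φ (Subtype.ext hxy)
  · ext x
    change φ (t x) = φ x
    conv_rhs => rw [← hdt x, map_mul]
    rw [show φ (d x) = 1 from hker x, one_mul]

/-- **Theorem (Kassabov–Nikolov).** If a Cartesian product
`𝔊 = ∏_{n ≥ 5} Alt(n)^{f(n)}` of alternating groups is topologically finitely generated,
then it is the profinite completion of a finitely generated residually finite group. -/
theorem cartesian_product_of_alternating_is_profinite_completion (f : ℕ → ℕ)
    (hfg : TopologicallyFG (∀ n : ℕ, Fin (f (n + 5)) → alternatingGroup (Fin (n + 5)))) :
    Nonempty (ProfiniteCompletionWitness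
      (∀ n : ℕ, Fin (f (n + 5)) → alternatingGroup (Fin (n + 5)))) := by
  let c : ℕ → ℕ := fun n => f (n + 5)
  obtain ⟨S, hSfin, hS⟩ := hfg
  obtain ⟨R, hRfin, hR⟩ := exists_finite_triangular
  let diag : (∀ n : ℕ, alternatingGroup (Fin (n + 5))) →* AltProd c :=
    { toFun := fun x n _ => x n
      map_one' := rfl
      map_mul' := fun _ _ => rfl }
  obtain ⟨F, hFfin, hF, hSF⟩ := exists_finite_isKilled (hSfin.union (hRfin.image diag))
    (fun x _ => mem_killedElements_altProd (c := c) x)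
  have hdense : Dense (Subgroup.closure F : Set (AltProd c)) :=
    hS.mono (Subgroup.closure_mono (Set.subset_union_left.trans hSF))
  have hsurj : ∀ n s, ∃ g ∈ Subgroup.closure F, g n = s := by
    intro n s
    obtain ⟨g, hg, hgF⟩ := hdense.exists_mem_open
      ((isOpen_discrete {s}).preimage (continuous_apply n)) ⟨Pi.mulSingle n s, by simp⟩
    exact ⟨g, hg, hgF⟩
  have htri : ∀ n, ∃ h ∈ Subgroup.closure F, ∃ a ≠ 1, h n = (fun _ => a) ∧
      ∀ m, n < m → h m = 1 := by
    intro n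
    obtain ⟨h, hh, hn, hm⟩ := hR n
    have hmem : diag h ∈ Subgroup.closure F := by
      have h1 : diag h ∈ (Subgroup.closure R).map diag := ⟨h, hh, rfl⟩
      rw [MonoidHom.map_closure] at h1
      exact Subgroup.closure_mono (Set.subset_union_right.trans hSF) h1
    exact ⟨diag h, hmem, h n, hn, rfl, fun m hnm => funext fun _ => hm m hnm⟩
  exact ⟨{
    G := Subgroup.closure F
    fg := (Group.fg_iff_subgroup_fg _).2 ((Subgroup.fg_iff _).2 ⟨F, rfl, hFfin⟩)
    ι := (Subgroup.closure F).subtype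
    inj := Subtype.val_injective
    dense := by simpa [DenseRange] using hdense
    factors := fun Q _ _ φ =>
      exists_extension_of_isKilled hF (eventuallyTrivial_le_of_triangular hsurj htri) Q φ }⟩
end

section
/- Let d ∈ ℕ and let (T_n)_{n≥5} be a sequence of finite groups such that for each n there exist d homomorphisms φ_{n,1}, …, φ_{n,d} : Alt(n) → T_n whose images together generate T_n. Then the Cartesian product ∏_{n=5}^∞ T_n (with the product topology) is the profinite completion of a finitely generated residually finite group. -/
section PiTruncation

variable {I : Type*} {A : I → Type*} [∀ i, Group (A i)]

open Classical in
/-- The endomorphism of a product of groups which keeps the coordinates in `F` and replaces all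
the others by `1`. -/
noncomputable def piTrunc (F : Set I) : (∀ i, A i) →* (∀ i, A i) where
  toFun x i := if i ∈ F then x i else 1
  map_one' := by ext i; simp
  map_mul' x y := by ext i; by_cases h : i ∈ F <;> simp [h]

theorem piTrunc_apply_of_mem {F : Set I} {i : I} (h : i ∈ F) (x : ∀ i, A i) :
    piTrunc F x i = x i := by
  simp [piTrunc, h]

theorem piTrunc_apply_of_notMem {F : Set I} {i : I} (h : i ∉ F) (x : ∀ i, A i) :
    piTrunc F x i = 1 := by
  simp [piTrunc, h]

theorem piTrunc_mul_piTrunc_compl (F : Set I) (x : ∀ i, A i) :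
    piTrunc F x * piTrunc Fᶜ x = x := by
  ext i
  by_cases h : i ∈ F
  · simp [piTrunc, h]
  · simp [piTrunc, h]

theorem piTrunc_mem_of_finite [DecidableEq I] {G : Subgroup (∀ i, A i)} {F : Set I}
    (hF : F.Finite) {x : ∀ i, A i} (h : ∀ i ∈ F, Pi.mulSingle i (x i) ∈ G) :
    piTrunc F x ∈ G := by
  induction F, hF using Set.Finite.induction_on with
  | empty =>
    convert G.one_mem
    ext i
    exact piTrunc_apply_of_notMem (Set.notMem_empty i) x
  | @insert a s ha hs ih =>
    have hmul : piTrunc (insert a s) x = Pi.mulSingle a (x a) * piTrunc s x := by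
      ext i
      by_cases hi : i = a
      · subst hi
        simp [piTrunc, ha]
      · by_cases his : i ∈ s <;> simp [piTrunc, hi, his]
    rw [hmul]
    exact G.mul_mem (h a (Set.mem_insert a s))
      (ih fun i hi => h i (Set.mem_insert_of_mem a hi))

theorem dense_of_mulSingle_mem [DecidableEq I] [∀ i, TopologicalSpace (A i)]
    {G : Subgroup (∀ i, A i)} (h : ∀ i (x : A i), Pi.mulSingle i x ∈ G) :
    Dense (G : Set (∀ i, A i)) := by
  intro x
  refine mem_closure_of_tendsto (f := fun F : Finset I => piTrunc (F : Set I) x)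
    (b := Filter.atTop) ?_ (Filter.Eventually.of_forall fun F =>
      piTrunc_mem_of_finite F.finite_toSet fun i _ => h i (x i))
  rw [tendsto_pi_nhds]
  intro i
  refine tendsto_const_nhds.congr' ?_
  filter_upwards [Filter.eventually_ge_atTop {i}] with F hF
  exact (piTrunc_apply_of_mem (by simpa using hF) x).symm

theorem isOpen_preimage_of_piTrunc_eq [∀ i, TopologicalSpace (A i)]
    [∀ i, DiscreteTopology (A i)] {Q : Type*} {F : Set I} (hF : F.Finite)
    {g : (∀ i, A i) → Q} (hg : ∀ x, g (piTrunc F x) = g x) (s : Set Q) :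
    IsOpen (g ⁻¹' s) := by
  have hset : g ⁻¹' s = ⋃ x ∈ g ⁻¹' s, F.pi fun i => {x i} := by
    ext y
    simp only [Set.mem_preimage, Set.mem_iUnion, Set.mem_pi, Set.mem_singleton_iff, exists_prop]
    refine ⟨fun hy => ⟨y, hy, fun _ _ => rfl⟩, ?_⟩
    rintro ⟨x, hx, hxy⟩
    have : piTrunc F y = piTrunc F x := by
      ext i
      by_cases hi : i ∈ F
      · rw [piTrunc_apply_of_mem hi, piTrunc_apply_of_mem hi, hxy i hi]
      · rw [piTrunc_apply_of_notMem hi, piTrunc_apply_of_notMem hi]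
    rwa [← hg y, this, hg x]
  rw [hset]
  exact isOpen_biUnion fun x _ => isOpen_set_pi hF fun i _ => isOpen_discrete _

end PiTruncation

/-- If a finitely generated group `Γ` maps to `∏ K m` with image containing the direct sum, in
such a way that every homomorphism to a finite group kills all elements whose first coordinates
are trivial, then every product of finite groups that are boundedly generated by images of the
groups `K m` is the profinite completion of a finitely generated residually finite group. -/
theorem nonempty_profiniteCompletionWitness_of_generated
    {K : ℕ → Type*} [∀ m, Group (K m)] {Γ : Type} [Group Γ] [Group.FG Γ]
    (p : Γ →* ∀ m, K m) (hsingle : ∀ m (k : K m), ∃ g, p g = Pi.mulSingle m k)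
    (hkill : ∀ (Q : Type) [Group Q] [Finite Q] (f : Γ →* Q),
      ∃ M : ℕ, ∀ g, (∀ m < M, p g m = 1) → f g = 1)
    {T : ℕ → Type} [∀ n, Group (T n)] [∀ n, TopologicalSpace (T n)]
    [∀ n, DiscreteTopology (T n)]
    {J : Type} [Finite J] (μ : ℕ → ℕ) (hμ : ∀ M, {n | μ n < M}.Finite)
    (ψ : J → ∀ n, K (μ n) →* T n) (hψ : ∀ n, (⨆ j, (ψ j n).range) = ⊤)
    (hdisj : ∀ j n n', μ n = μ n' → n ≠ n' → ψ j n = 1 ∨ ψ j n' = 1) :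
    Nonempty (ProfiniteCompletionWitness (∀ n, T n)) := by
  let Ψ : J → Γ →* ∀ n, T n := fun j =>
    MonoidHom.pi fun n => (ψ j n).comp ((Pi.evalMonoidHom K (μ n)).comp p)
  have hΨ : ∀ j g n, Ψ j g n = ψ j n (p g (μ n)) := fun _ _ _ => rfl
  let G : Subgroup (∀ n, T n) := ⨆ j, (Ψ j).range
  have hΨG : ∀ j g, Ψ j g ∈ G := fun j g =>
    (le_iSup (fun j => (Ψ j).range) j) ⟨g, rfl⟩
  have hG : ∀ n (x : T n), Pi.mulSingle n x ∈ G := by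
    intro n
    suffices h : (⊤ : Subgroup (T n)) ≤ G.comap (MonoidHom.mulSingle T n) from
      fun x => h (Subgroup.mem_top x)
    rw [← hψ n]
    refine iSup_le fun j => ?_
    rintro _ ⟨k, rfl⟩
    change Pi.mulSingle n (ψ j n k) ∈ G
    by_cases hj : ψ j n = 1
    · simp [hj]
    · obtain ⟨g, hg⟩ := hsingle (μ n) k
      convert hΨG j g
      ext n'
      rw [hΨ, hg]
      by_cases hn : n' = n
      · subst hn; simp
      · rw [Pi.mulSingle_eq_of_ne hn]
        by_cases hm : μ n' = μ n
        · rcases hdisj j n' n hm hn with h | h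
          · simp [h]
          · exact absurd h hj
        · rw [Pi.mulSingle_eq_of_ne hm, map_one]
  have hfg : Group.FG G := (Group.fg_iff_subgroup_fg G).mpr <|
    Subgroup.FG.iSup _ fun j => (Group.fg_iff_subgroup_fg _).mp inferInstance
  refine ⟨{ G := G, fg := hfg, ι := G.subtype, inj := G.subtype_injective, dense := ?_,
            factors := ?_ }⟩
  · have := dense_of_mulSingle_mem hG
    rwa [DenseRange, Subgroup.coe_subtype, Subtype.range_coe]
  intro Q _ _ f
  have hM : ∃ M : ℕ, ∀ j g, (∀ m < M, p g m = 1) → f ⟨Ψ j g, hΨG j g⟩ = 1 := by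
    choose M hM using fun j => hkill Q (f.comp ((Ψ j).codRestrict G (hΨG j)))
    obtain ⟨N, hN⟩ := (Set.finite_range M).bddAbove
    exact ⟨N, fun j g hg => hM j g fun m hm => hg m (hm.trans_le (hN ⟨j, rfl⟩))⟩
  obtain ⟨M, hM⟩ := hM
  let F : Set ℕ := {n | μ n < M}
  have hFG : ∀ x, piTrunc F x ∈ G := fun x =>
    piTrunc_mem_of_finite (hμ M) fun n _ => hG n (x n)
  let g : (∀ n, T n) →* Q := f.comp ((piTrunc F).codRestrict G hFG)
  have hgapp : ∀ x, g x = f ⟨piTrunc F x, hFG x⟩ := fun _ => rfl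
  refine ⟨g, isOpen_preimage_of_piTrunc_eq (hμ M) fun x => ?_, ?_⟩
  · rw [hgapp, hgapp]
    congr 2
    ext n
    by_cases hn : n ∈ F
    · rw [piTrunc_apply_of_mem hn, piTrunc_apply_of_mem hn]
    · rw [piTrunc_apply_of_notMem hn, piTrunc_apply_of_notMem hn]
  have hgen : ∀ j γ, g (Ψ j γ) = f ⟨Ψ j γ, hΨG j γ⟩ := by
    intro j γ
    have hlow : piTrunc {m | m < M} (p γ) ∈ p.range :=
      piTrunc_mem_of_finite (Set.finite_lt_nat M) fun m _ => hsingle m (p γ m)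
    obtain ⟨e, he⟩ := hlow
    have h1 : f ⟨Ψ j (γ * e⁻¹), hΨG j _⟩ = 1 := by
      refine hM j _ fun m hm => ?_
      rw [map_mul, map_inv, he, Pi.mul_apply, Pi.inv_apply,
        piTrunc_apply_of_mem (F := {m | m < M}) hm, mul_inv_cancel]
    have h2 : piTrunc F (Ψ j γ) = Ψ j e := by
      ext n
      rw [hΨ, he]
      by_cases hn : n ∈ F
      · rw [piTrunc_apply_of_mem hn, piTrunc_apply_of_mem (F := {m | m < M}) hn, hΨ]
      · rw [piTrunc_apply_of_notMem hn, piTrunc_apply_of_notMem (F := {m | m < M}) hn, map_one]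
    have h3 : (⟨Ψ j γ, hΨG j γ⟩ : G) = ⟨Ψ j (γ * e⁻¹), hΨG j _⟩ * ⟨Ψ j e, hΨG j e⟩ := by
      ext1
      simp
    rw [hgapp, h3, map_mul, h1, one_mul]
    congr 2
  ext ⟨x, hx⟩
  change g x = f ⟨x, hx⟩
  refine Subgroup.iSup_induction' (fun j => (Ψ j).range) (C := fun x hx => g x = f ⟨x, hx⟩)
    ?_ ?_ ?_ hx
  · rintro j _ ⟨γ, rfl⟩
    exact hgen j γ
  · rw [map_one]
    exact (map_one f).symm
  · intro x y hx hy ihx ihy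
    rw [map_mul, ihx, ihy, ← map_mul]
    rfl

section AlternatingImages

theorem exists_alternatingGroup_fin_succ_generated (k : ℕ) (hk : 4 ≤ k) :
    ∃ α : Bool → (alternatingGroup (Fin k) →* alternatingGroup (Fin (k + 1))),
      (⨆ b, (α b).range) = ⊤ := by
  classical
  have key : ∀ a : Fin (k + 1), ∃ α : alternatingGroup (Fin k) →* alternatingGroup (Fin (k + 1)),
      ∀ g : alternatingGroup (Fin (k + 1)), g.1 a = a → g ∈ α.range := by
    intro a
    let e : {x : Fin (k + 1) // x ≠ a} ≃ Fin k := (finSuccAboveEquiv a).symm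
    let α : Equiv.Perm (Fin k) →* Equiv.Perm (Fin (k + 1)) :=
      (Equiv.Perm.ofSubtype (p := fun x => x ≠ a)).comp e.symm.permCongrHom.toMonoidHom
    have hα : ∀ g, Equiv.Perm.sign (α g) = Equiv.Perm.sign g := by
      intro g
      change Equiv.Perm.sign (Equiv.Perm.ofSubtype (e.symm.permCongr g)) = _
      rw [Equiv.Perm.sign_ofSubtype, Equiv.Perm.sign_permCongr]
    refine ⟨(α.comp (alternatingGroup (Fin k)).subtype).codRestrict _ fun g => ?_, ?_⟩
    · rw [Equiv.Perm.mem_alternatingGroup]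
      exact (hα g).trans g.2
    · intro g hg
      have hga : ∀ x, x ≠ a ↔ g.1 x ≠ a := fun x => by
        rw [not_iff_not]
        exact ⟨fun h => h ▸ hg, fun h => g.1.injective (h.trans hg.symm)⟩
      let h : Equiv.Perm (Fin k) := e.permCongr (g.1.subtypePerm fun x => (hga x).symm)
      have hh : α h = g.1 := by
        change Equiv.Perm.ofSubtype (e.symm.permCongr h) = _
        have : e.symm.permCongr h = g.1.subtypePerm fun x => (hga x).symm := by
          ext x; simp [h]
        rw [this]
        refine Equiv.Perm.ofSubtype_subtypePerm _ ?_
        rintro x hx rfl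
        exact hx hg
      refine ⟨⟨h, ?_⟩, ?_⟩
      · rw [Equiv.Perm.mem_alternatingGroup, ← hα, hh]
        exact g.2
      · ext1
        exact hh
  choose α hα using key
  let pt : Bool → Fin (k + 1) := fun b => if b then 0 else Fin.last k
  refine ⟨fun b => α (pt b), ?_⟩
  set R : Subgroup (alternatingGroup (Fin (k + 1))) := ⨆ b, (α (pt b)).range with hR
  have hfix : ∀ b, ∀ g : alternatingGroup (Fin (k + 1)), g.1 (pt b) = pt b → g ∈ R :=
    fun b g hg => (le_iSup (fun b => (α (pt b)).range) b) (hα _ g hg)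
  have hle : Subgroup.closure {σ : Equiv.Perm (Fin (k + 1)) | σ.IsThreeCycle} ≤
      R.map (alternatingGroup (Fin (k + 1))).subtype := by
    rw [Subgroup.closure_le]
    intro g (hg : g.IsThreeCycle)
    refine ⟨⟨g, hg.mem_alternatingGroup⟩, ?_, rfl⟩
    by_cases h0 : g (pt true) = pt true
    · exact hfix true _ h0
    by_cases h1 : g (pt false) = pt false
    · exact hfix false _ h1
    have hcard : 1 < (g.supportᶜ).card := by
      rw [Finset.card_compl, hg.card_support, Fintype.card_fin]
      omega
    obtain ⟨d, hd, e, he, hde⟩ := Finset.one_lt_card.mp hcard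
    rw [Finset.mem_compl, Equiv.Perm.notMem_support] at hd he
    have hbd : pt false ≠ d := fun h => h1 (h ▸ hd)
    have hbe : pt false ≠ e := fun h => h1 (h ▸ he)
    have had : pt true ≠ d := fun h => h0 (h ▸ hd)
    have hae : pt true ≠ e := fun h => h0 (h ▸ he)
    have hab : pt true ≠ pt false := by
      simp only [pt, Fin.ext_iff, ne_eq, if_true, Bool.false_eq_true, if_false, Fin.val_zero,
        Fin.val_last]
      omega
    let h : alternatingGroup (Fin (k + 1)) :=
      ⟨Equiv.swap (pt false) d * Equiv.swap (pt false) e,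
        (Equiv.Perm.isThreeCycle_swap_mul_swap_same hbd hbe hde).mem_alternatingGroup⟩
    have hhR : h ∈ R := by
      refine hfix true h ?_
      change Equiv.swap (pt false) d (Equiv.swap (pt false) e (pt true)) = pt true
      rw [Equiv.swap_apply_of_ne_of_ne hab hae, Equiv.swap_apply_of_ne_of_ne hab had]
    have hhd : h.1 d = pt false := by
      change Equiv.swap (pt false) d (Equiv.swap (pt false) e d) = pt false
      rw [Equiv.swap_apply_of_ne_of_ne hbd.symm hde, Equiv.swap_apply_right]
    have hconj : h * ⟨g, hg.mem_alternatingGroup⟩ * h⁻¹ ∈ R := by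
      refine hfix false _ ?_
      change h.1 (g (h.1⁻¹ (pt false))) = pt false
      rw [← hhd, show h.1⁻¹ (h.1 d) = d from h.1.symm_apply_apply d, hd]
    exact (Subgroup.mul_mem_cancel_left R hhR).mp
      ((Subgroup.mul_mem_cancel_right R (R.inv_mem hhR)).mp hconj)
  rw [Equiv.Perm.closure_three_cycles_eq_alternating] at hle
  rw [eq_top_iff]
  rintro g -
  obtain ⟨g', hg', he⟩ := hle g.2
  rwa [← Subtype.ext he]

theorem exists_generated_of_alternatingGroup_add {T : Type*} [Group T] (k r : ℕ) (hk : 4 ≤ k)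
    {d : ℕ} (h : ∃ φ : Fin d → (alternatingGroup (Fin (k + r)) →* T), (⨆ i, (φ i).range) = ⊤) :
    ∃ φ : Fin (d * 2 ^ r) → (alternatingGroup (Fin k) →* T), (⨆ i, (φ i).range) = ⊤ := by
  induction r generalizing d with
  | zero =>
    rw [pow_zero, mul_one]
    exact h
  | succ r ih =>
    obtain ⟨φ, hφ⟩ := h
    obtain ⟨α, hα⟩ := exists_alternatingGroup_fin_succ_generated (k + r) (by omega)
    rw [pow_succ', ← mul_assoc]
    refine ih ?_
    let e : Fin (d * 2) ≃ Fin d × Bool :=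
      finProdFinEquiv.symm.trans (Equiv.prodCongr (Equiv.refl _) finTwoEquiv)
    refine ⟨fun i => (φ (e i).1).comp (α (e i).2), ?_⟩
    rw [e.iSup_comp (g := fun x : Fin d × Bool => ((φ x.1).comp (α x.2)).range), iSup_prod,
      ← hφ]
    refine iSup_congr fun i => ?_
    simp_rw [MonoidHom.range_comp]
    rw [← Subgroup.map_iSup, hα, MonoidHom.range_eq_map]

theorem exists_generated_of_le {K T : Type*} [Group K] [Group T] {d d' : ℕ} (hd : d ≤ d')
    (h : ∃ φ : Fin d → (K →* T), (⨆ i, (φ i).range) = ⊤) :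
    ∃ φ : Fin d' → (K →* T), (⨆ i, (φ i).range) = ⊤ := by
  obtain ⟨φ, hφ⟩ := h
  refine ⟨fun i => if hi : i.1 < d then φ ⟨i, hi⟩ else 1, ?_⟩
  rw [eq_top_iff, ← hφ]
  refine iSup_le fun i => ?_
  refine le_trans ?_ (le_iSup _ (Fin.castLE hd i))
  simp

end AlternatingImages

section Aperiodic

/-- The residues whose canonical representative has odd `2`-adic valuation; modulo large numbers,
these sets are far from being periodic. -/
def aperiodicSet (m : ℕ) : Set (ZMod (m + 1)) := {y | Odd (padicValNat 2 y.val)}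

theorem padicValNat_two_pow_mul_odd (k u : ℕ) (hu : Odd u) : padicValNat 2 (2 ^ k * u) = k := by
  rw [padicValNat.mul (by positivity) hu.pos.ne', padicValNat.prime_pow,
    padicValNat.eq_zero_of_not_dvd hu.not_two_dvd_nat, add_zero]

theorem exists_odd_padicValNat_near (o k b : ℕ) (ho : Odd o) (hk : Odd k)
    (hb : 2 ^ (k + 2) + 2 ^ k * o ≤ b) :
    ∃ j, b < j + 2 ^ (k + 2) ∧ j ≤ b ∧ 2 ^ k * o ≤ j ∧ Odd (padicValNat 2 j) ∧
      ¬ Odd (padicValNat 2 (j - 2 ^ k * o)) := by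
  set l := (b - 2 ^ k * o - 2 ^ (k + 1)) / 2 ^ (k + 2) with hl
  have h1 : 2 ^ (k + 2) * l ≤ b - 2 ^ k * o - 2 ^ (k + 1) := Nat.mul_div_le _ _
  have h2 : b - 2 ^ k * o - 2 ^ (k + 1) < 2 ^ (k + 2) * l + 2 ^ (k + 2) :=
    Nat.lt_mul_div_succ _ (by positivity)
  have h3 : 2 ^ (k + 2) = 2 ^ (k + 1) * 2 := pow_succ 2 (k + 1)
  have h4 : 2 ^ (k + 1) * (2 * l + 1) = 2 ^ (k + 2) * l + 2 ^ (k + 1) := by ring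
  have h5 : 0 < 2 ^ (k + 1) := by positivity
  refine ⟨2 ^ k * o + 2 ^ (k + 1) * (2 * l + 1), by omega, by omega, by omega, ?_, ?_⟩
  · have : 2 ^ k * o + 2 ^ (k + 1) * (2 * l + 1) = 2 ^ k * (o + 2 * (2 * l + 1)) := by ring
    rw [this, padicValNat_two_pow_mul_odd]
    · exact hk
    · exact ho.add_even (even_two_mul _)
  · rw [Nat.add_sub_cancel_left, padicValNat_two_pow_mul_odd _ _ (odd_two_mul_add_one l)]
    exact Nat.not_odd_iff_even.mpr hk.add_one

theorem exists_aperiodicSet_window (n : ℕ) (hn : 0 < n) :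
    ∃ q, n ∣ q ∧ ∃ N M : ℕ, ∀ m, M ≤ m → ∀ y : ZMod (m + 1), ∃ i ≤ N,
      y - (i : ZMod (m + 1)) ∈ aperiodicSet m ∧
        y - (i : ZMod (m + 1)) - (q : ZMod (m + 1)) ∉ aperiodicSet m := by
  obtain ⟨k, o, hk, ho, hdvd⟩ : ∃ k o, Odd k ∧ Odd o ∧ n ∣ 2 ^ k * o := by
    obtain ⟨k, o, ho, h⟩ := Nat.exists_eq_two_pow_mul_odd hn.ne'
    rcases Nat.even_or_odd k with hk | hk
    · exact ⟨k + 1, o, hk.add_one, ho, 2, by rw [h]; ring⟩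
    · exact ⟨k, o, hk, ho, h.dvd⟩
  refine ⟨2 ^ k * o, hdvd, ?_⟩
  set q := 2 ^ k * o with hq
  set P := 2 ^ (k + 2) with hP
  refine ⟨2 * P + q, P + q, fun m hm y => ?_⟩
  have hylt : y.val < m + 1 := ZMod.val_lt y
  have key : ∀ j i : ℕ, j ≤ m → q ≤ j → Odd (padicValNat 2 j) → ¬ Odd (padicValNat 2 (j - q)) →
      (y = (j : ZMod (m + 1)) + i) →
      y - (i : ZMod (m + 1)) ∈ aperiodicSet m ∧
        y - (i : ZMod (m + 1)) - (q : ZMod (m + 1)) ∉ aperiodicSet m := by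
    intro j i hjm hqj h1 h2 hy
    have e1 : y - (i : ZMod (m + 1)) = (j : ZMod (m + 1)) := by rw [hy]; ring
    rw [e1, ← Nat.cast_sub hqj]
    simp only [aperiodicSet, Set.mem_ofPred_eq]
    rw [ZMod.val_cast_of_lt (by omega), ZMod.val_cast_of_lt (by omega)]
    exact ⟨h1, h2⟩
  have hyc : y = ((y.val : ℕ) : ZMod (m + 1)) := (ZMod.natCast_zmod_val y).symm
  by_cases hb : P + q ≤ y.val
  · obtain ⟨j, h1, h2, h3, h4, h5⟩ := exists_odd_padicValNat_near o k y.val ho hk hb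
    refine ⟨y.val - j, by omega, key j _ (by omega) h3 h4 h5 ?_⟩
    rw [← Nat.cast_add, Nat.add_sub_cancel' h2]
    exact hyc
  · obtain ⟨j, h1, h2, h3, h4, h5⟩ := exists_odd_padicValNat_near o k m ho hk (by omega)
    refine ⟨y.val + (m + 1) - j, by omega, key j _ h2 h3 h4 h5 ?_⟩
    rw [← Nat.cast_add, Nat.add_sub_cancel' (by omega), Nat.cast_add, ZMod.natCast_self, add_zero]
    exact hyc

end Aperiodic

section GridPermutations

open Equiv

/-- Sequences of permutations of the grids `Fin 5 × ZMod (m + 1)`. -/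
abbrev GridPerm : Type := ∀ m : ℕ, Perm (Fin 5 × ZMod (m + 1))

/-- Sequences of subsets of the sets `ZMod (m + 1)`. -/
abbrev ColumnSet : Type := ∀ m : ℕ, Set (ZMod (m + 1))

/-- The permutations of the grids which preserve each column `Fin 5 × {y}`. -/
def columnwise : (∀ m : ℕ, ZMod (m + 1) → Perm (Fin 5)) →* GridPerm where
  toFun f m := prodCongrLeft (f m)
  map_one' := rfl
  map_mul' _ _ := rfl

open Classical in
/-- The element of a product of groups of functions with value `σ` on `V` and `1` elsewhere. -/
noncomputable def columnConst (V : ColumnSet) :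
    Perm (Fin 5) →* ∀ m, ZMod (m + 1) → Perm (Fin 5) where
  toFun σ m y := if y ∈ V m then σ else 1
  map_one' := by ext; simp
  map_mul' σ τ := by ext m y : 2; by_cases h : y ∈ V m <;> simp [h]

/-- `columnPerm V σ` acts as `σ` on the columns in `V` and fixes all other columns. -/
noncomputable def columnPerm (V : ColumnSet) : Perm (Fin 5) →* GridPerm :=
  columnwise.comp (columnConst V)

/-- `rowShift v` translates the `i`-th row by `v i`. -/
def rowShift (v : Fin 5 → ℤ) : GridPerm := fun m =>
  prodCongrRight fun i => Equiv.addRight (v i : ZMod (m + 1))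

/-- The translate of a sequence of sets by an integer. -/
def ColumnSet.translate (k : ℤ) (V : ColumnSet) : ColumnSet := fun m =>
  {y | y - (k : ZMod (m + 1)) ∈ V m}

theorem columnConst_apply_of_mem {V : ColumnSet} {m : ℕ} {y : ZMod (m + 1)} (h : y ∈ V m)
    (σ : Perm (Fin 5)) : columnConst V σ m y = σ := by
  simp [columnConst, h]

theorem columnConst_apply_of_notMem {V : ColumnSet} {m : ℕ} {y : ZMod (m + 1)} (h : y ∉ V m)
    (σ : Perm (Fin 5)) : columnConst V σ m y = 1 := by
  simp [columnConst, h]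

theorem columnPerm_apply_of_mem {V : ColumnSet} {m : ℕ} {y : ZMod (m + 1)} (h : y ∈ V m)
    (σ : Perm (Fin 5)) (i : Fin 5) : columnPerm V σ m (i, y) = (σ i, y) := by
  change (columnConst V σ m y i, y) = _
  rw [columnConst_apply_of_mem h]

theorem columnPerm_apply_of_notMem {V : ColumnSet} {m : ℕ} {y : ZMod (m + 1)} (h : y ∉ V m)
    (σ : Perm (Fin 5)) (i : Fin 5) : columnPerm V σ m (i, y) = (i, y) := by
  change (columnConst V σ m y i, y) = _
  rw [columnConst_apply_of_notMem h, Perm.one_apply]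

theorem rowShift_apply (v : Fin 5 → ℤ) (m : ℕ) (i : Fin 5) (y : ZMod (m + 1)) :
    rowShift v m (i, y) = (i, y + (v i : ZMod (m + 1))) := rfl

theorem rowShift_zero : rowShift 0 = 1 := by
  ext m : 2
  rename_i x
  obtain ⟨i, y⟩ := x
  simp [rowShift_apply]

theorem rowShift_add (v w : Fin 5 → ℤ) : rowShift (v + w) = rowShift v * rowShift w := by
  ext m : 2
  rename_i x
  obtain ⟨i, y⟩ := x
  simp only [Pi.mul_apply, Perm.mul_apply, rowShift_apply, Pi.add_apply, Int.cast_add]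
  rw [add_assoc, add_comm (v i : ZMod (m + 1))]

theorem rowShift_neg (v : Fin 5 → ℤ) : rowShift (-v) = (rowShift v)⁻¹ := by
  rw [eq_inv_iff_mul_eq_one, ← rowShift_add, neg_add_cancel, rowShift_zero]

theorem rowShift_nsmul (n : ℕ) (v : Fin 5 → ℤ) : rowShift (n • v) = rowShift v ^ n := by
  induction n with
  | zero => rw [zero_smul, pow_zero, rowShift_zero]
  | succ n ih => rw [succ_nsmul, rowShift_add, ih, pow_succ]

theorem rowShift_mul_columnPerm {v : Fin 5 → ℤ} {k : ℤ} {σ : Perm (Fin 5)}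
    (h : ∀ i, σ i = i ∨ (v i = k ∧ v (σ i) = k)) (V : ColumnSet) :
    rowShift v * columnPerm V σ * (rowShift v)⁻¹ = columnPerm (V.translate k) σ := by
  rw [mul_inv_eq_iff_eq_mul]
  ext m : 2
  rename_i x
  obtain ⟨i, y⟩ := x
  simp only [Pi.mul_apply, Perm.mul_apply, rowShift_apply]
  by_cases hy : y ∈ V m
  · rw [columnPerm_apply_of_mem hy, rowShift_apply]
    rcases h i with hi | ⟨hi, hi'⟩
    · by_cases hy' : y + (v i : ZMod (m + 1)) ∈ V.translate k m
      · rw [columnPerm_apply_of_mem hy', hi]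
      · rw [columnPerm_apply_of_notMem hy', hi]
    · rw [columnPerm_apply_of_mem (by simpa [ColumnSet.translate, hi] using hy), hi, hi']
  · rw [columnPerm_apply_of_notMem hy, rowShift_apply]
    rcases h i with hi | ⟨hi, hi'⟩
    · by_cases hy' : y + (v i : ZMod (m + 1)) ∈ V.translate k m
      · rw [columnPerm_apply_of_mem hy', hi]
      · rw [columnPerm_apply_of_notMem hy']
    · rw [columnPerm_apply_of_notMem (by simpa [ColumnSet.translate, hi] using hy)]

theorem columnPerm_top_mul_rowShift (σ : Perm (Fin 5)) (v : Fin 5 → ℤ) :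
    columnPerm ⊤ σ * rowShift (v ∘ σ) * (columnPerm ⊤ σ)⁻¹ = rowShift v := by
  rw [mul_inv_eq_iff_eq_mul]
  ext m : 2
  rename_i x
  obtain ⟨i, y⟩ := x
  simp only [Pi.mul_apply, Perm.mul_apply, rowShift_apply]
  rw [columnPerm_apply_of_mem (Set.mem_univ _), columnPerm_apply_of_mem (Set.mem_univ _),
    rowShift_apply, Function.comp_apply]

theorem columnPerm_mem_alternatingGroup (V : ColumnSet) {σ : Perm (Fin 5)}
    (hσ : σ ∈ alternatingGroup (Fin 5)) (m : ℕ) :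
    columnPerm V σ m ∈ alternatingGroup (Fin 5 × ZMod (m + 1)) := by
  rw [Perm.mem_alternatingGroup] at hσ ⊢
  change Perm.sign (prodCongrLeft (columnConst V σ m)) = 1
  rw [Perm.sign_prodCongrLeft]
  refine Finset.prod_eq_one fun y _ => ?_
  by_cases h : y ∈ V m
  · rw [columnConst_apply_of_mem h, hσ]
  · rw [columnConst_apply_of_notMem h, map_one]

theorem rowShift_mem_alternatingGroup {v : Fin 5 → ℤ} (hv : ∑ i, v i = 0) (m : ℕ) :
    rowShift v m ∈ alternatingGroup (Fin 5 × ZMod (m + 1)) := by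
  rw [Perm.mem_alternatingGroup]
  change Perm.sign (prodCongrRight fun i => Equiv.addRight (v i : ZMod (m + 1))) = 1
  rw [Perm.sign_prodCongrRight]
  let s : Multiplicative (ZMod (m + 1)) →* ℤˣ :=
    { toFun := fun a => Perm.sign (Equiv.addRight a.toAdd)
      map_one' := by
        rw [toAdd_one, Equiv.addRight_zero]; exact Perm.sign_refl
      map_mul' := fun a b => by
        rw [← Perm.sign_mul]
        congr 1
        ext x : 1
        simp [add_comm, add_left_comm] }
  change ∏ i, s (Multiplicative.ofAdd (v i : ZMod (m + 1))) = 1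
  rw [← map_prod, ← ofAdd_sum, ← Int.cast_sum, hv, Int.cast_zero, ofAdd_zero, map_one]

end GridPermutations

section ColumnCalculus

open Equiv
open scoped commutatorElement

/-- The subgroup `H` contains all the even permutations of the columns in `V`. -/
def ContainsColumns (H : Subgroup GridPerm) (V : ColumnSet) : Prop :=
  ∀ σ ∈ alternatingGroup (Fin 5), columnPerm V σ ∈ H

theorem exists_commutator_ne_one_alternatingGroup :
    ∃ σ ∈ alternatingGroup (Fin 5), ∃ τ ∈ alternatingGroup (Fin 5),
      σ = swap 0 1 * swap 0 2 ∧ ⁅σ, τ⁆ ≠ 1 :=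
  ⟨swap 0 1 * swap 0 2, Perm.mem_alternatingGroup.mpr (by decide), swap 2 3 * swap 2 4,
    Perm.mem_alternatingGroup.mpr (by decide), rfl, by decide⟩

variable {G H : Subgroup GridPerm}

theorem ContainsColumns.of_ne_one (htop : ContainsColumns G ⊤)
    (hN : ∀ g ∈ G, ∀ h ∈ H, g * h * g⁻¹ ∈ H) {V : ColumnSet} {ρ : Perm (Fin 5)}
    (hρ : ρ ∈ alternatingGroup (Fin 5)) (hρ1 : ρ ≠ 1) (hV : columnPerm V ρ ∈ H) :
    ContainsColumns H V := by
  let N : Subgroup (alternatingGroup (Fin 5)) :=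
    H.comap ((columnPerm V).comp (alternatingGroup (Fin 5)).subtype)
  have hNn : N.Normal := by
    refine ⟨fun σ hσ τ => ?_⟩
    change columnPerm V (τ.1 * σ.1 * τ.1⁻¹) ∈ H
    convert hN _ (htop τ.1 τ.2) _ hσ using 1
    change _ = columnPerm ⊤ τ.1 * columnPerm V σ.1 * (columnPerm ⊤ τ.1)⁻¹
    simp only [columnPerm, MonoidHom.comp_apply, ← map_mul, ← map_inv]
    congr 1
    ext m y : 2
    simp only [Pi.mul_apply]
    rw [columnConst_apply_of_mem (V := ⊤) (Set.mem_univ y),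
      columnConst_apply_of_mem (V := ⊤) (Set.mem_univ y)]
    by_cases hy : y ∈ V m
    · rw [columnConst_apply_of_mem hy, columnConst_apply_of_mem hy]
    · rw [columnConst_apply_of_notMem hy, columnConst_apply_of_notMem hy, mul_one, mul_inv_cancel]
  have hNtop : N = ⊤ := by
    refine (hNn.eq_bot_or_eq_top).resolve_left fun hbot => hρ1 ?_
    have : (⟨ρ, hρ⟩ : alternatingGroup (Fin 5)) ∈ N := hV
    rw [hbot, Subgroup.mem_bot] at this
    exact congrArg Subtype.val this
  intro σ hσ
  have : (⟨σ, hσ⟩ : alternatingGroup (Fin 5)) ∈ N := hNtop ▸ Subgroup.mem_top _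
  exact this

theorem ContainsColumns.inf (htop : ContainsColumns G ⊤)
    (hN : ∀ g ∈ G, ∀ h ∈ H, g * h * g⁻¹ ∈ H) {V W : ColumnSet}
    (hV : ContainsColumns G V) (hW : ContainsColumns H W) : ContainsColumns H (V ⊓ W) := by
  obtain ⟨σ, hσ, τ, hτ, -, hστ⟩ := exists_commutator_ne_one_alternatingGroup
  refine .of_ne_one htop hN (ρ := ⁅σ, τ⁆) ?_ hστ ?_
  · exact mul_mem (mul_mem (mul_mem hσ hτ) (inv_mem hσ)) (inv_mem hτ)
  · have h : columnPerm (V ⊓ W) ⁅σ, τ⁆ = ⁅columnPerm V σ, columnPerm W τ⁆ := by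
      simp only [columnPerm, MonoidHom.comp_apply, ← map_commutatorElement]
      congr 1
      ext m y : 2
      simp only [commutatorElement_def, Pi.mul_apply, Pi.inv_apply]
      by_cases hy : y ∈ V m
      · by_cases hy' : y ∈ W m
        · have : y ∈ (V ⊓ W) m := ⟨hy, hy'⟩
          simp only [columnConst_apply_of_mem, hy, hy', this]
        · simp [columnConst_apply_of_notMem, hy']
      · simp [columnConst_apply_of_notMem, hy]
    rw [h]
    exact H.mul_mem (hN _ (hV σ hσ) _ (hW τ hτ)) (H.inv_mem (hW τ hτ))

theorem columnPerm_eq_inf_mul_sdiff (V W : ColumnSet) (σ : Perm (Fin 5)) :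
    columnPerm V σ = columnPerm (V \ W) σ * columnPerm (W ⊓ V) σ := by
  simp only [columnPerm, MonoidHom.comp_apply, ← map_mul]
  congr 1
  ext m y : 2
  simp only [Pi.mul_apply]
  by_cases hy : y ∈ V m
  · by_cases hy' : y ∈ W m
    · have h1 : y ∉ (V \ W) m := fun h => h.2 hy'
      have h2 : y ∈ (W ⊓ V) m := ⟨hy', hy⟩
      rw [columnConst_apply_of_mem hy, columnConst_apply_of_notMem h1,
        columnConst_apply_of_mem h2, one_mul]
    · have h1 : y ∈ (V \ W) m := ⟨hy, hy'⟩
      have h2 : y ∉ (W ⊓ V) m := fun h => hy' h.1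
      rw [columnConst_apply_of_mem hy, columnConst_apply_of_mem h1,
        columnConst_apply_of_notMem h2, mul_one]
  · have h1 : y ∉ (V \ W) m := fun h => hy h.1
    have h2 : y ∉ (W ⊓ V) m := fun h => hy h.2
    rw [columnConst_apply_of_notMem hy, columnConst_apply_of_notMem h1,
      columnConst_apply_of_notMem h2, mul_one]

theorem ContainsColumns.sdiff (htop : ContainsColumns G ⊤)
    (hN : ∀ g ∈ G, ∀ h ∈ H, g * h * g⁻¹ ∈ H) {V W : ColumnSet}
    (hV : ContainsColumns H V) (hW : ContainsColumns G W) : ContainsColumns H (V \ W) := by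
  intro σ hσ
  rw [← mul_inv_eq_of_eq_mul (columnPerm_eq_inf_mul_sdiff V W σ)]
  exact H.mul_mem (hV σ hσ) (H.inv_mem (ContainsColumns.inf htop hN hW hV σ hσ))

theorem ContainsColumns.sup (htop : ContainsColumns G ⊤) (hHG : H ≤ G)
    (hN : ∀ g ∈ G, ∀ h ∈ H, g * h * g⁻¹ ∈ H) {V W : ColumnSet}
    (hV : ContainsColumns H V) (hW : ContainsColumns H W) : ContainsColumns H (V ⊔ W) := by
  intro σ hσ
  rw [columnPerm_eq_inf_mul_sdiff (V ⊔ W) W σ, sup_sdiff_right_self, inf_eq_left.mpr le_sup_right]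
  exact H.mul_mem (ContainsColumns.sdiff htop hN hV (fun σ hσ => hHG (hW σ hσ)) σ hσ) (hW σ hσ)

theorem ContainsColumns.bot : ContainsColumns H ⊥ := by
  intro σ _
  convert H.one_mem
  ext m : 2
  rename_i x
  obtain ⟨i, y⟩ := x
  rw [columnPerm_apply_of_notMem (Set.notMem_empty y)]
  rfl

theorem ContainsColumns.finset_sup (htop : ContainsColumns G ⊤) (hHG : H ≤ G)
    (hN : ∀ g ∈ G, ∀ h ∈ H, g * h * g⁻¹ ∈ H) {ι : Type*} (s : Finset ι) {V : ι → ColumnSet}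
    (hV : ∀ i ∈ s, ContainsColumns H (V i)) : ContainsColumns H (s.sup V) := by
  classical
  induction s using Finset.induction_on with
  | empty => exact .bot
  | insert a s _ ih =>
    rw [Finset.sup_insert]
    exact .sup htop hHG hN (hV a (Finset.mem_insert_self a s))
      (ih fun i hi => hV i (Finset.mem_insert_of_mem hi))

/-- The translation vector moving the first three rows by `k`, with total displacement zero. -/
def rowVector (k : ℤ) : Fin 5 → ℤ := ![k, k, k, -(3 * k), 0]

theorem sum_rowVector (k : ℤ) : ∑ i, rowVector k i = 0 := by
  simp only [rowVector, Fin.sum_univ_five, Matrix.cons_val]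
  ring

theorem rowVector_swap (k : ℤ) (i : Fin 5) :
    (swap 0 1 * swap 0 2 : Perm (Fin 5)) i = i ∨
      (rowVector k i = k ∧ rowVector k ((swap 0 1 * swap 0 2 : Perm (Fin 5)) i) = k) := by
  have h0 : (swap 0 1 * swap 0 2 : Perm (Fin 5)) 0 = 2 := by decide
  have h1 : (swap 0 1 * swap 0 2 : Perm (Fin 5)) 1 = 0 := by decide
  have h2 : (swap 0 1 * swap 0 2 : Perm (Fin 5)) 2 = 1 := by decide
  fin_cases i
  · right; exact ⟨rfl, (congrArg (rowVector k) h0).trans rfl⟩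
  · right; exact ⟨rfl, (congrArg (rowVector k) h1).trans rfl⟩
  · right; exact ⟨rfl, (congrArg (rowVector k) h2).trans rfl⟩
  · left; decide
  · left; decide

theorem ContainsColumns.translate (htop : ContainsColumns G ⊤)
    (hN : ∀ g ∈ G, ∀ h ∈ H, g * h * g⁻¹ ∈ H) (k : ℤ) (hk : rowShift (rowVector k) ∈ G)
    {V : ColumnSet} (hV : ContainsColumns H V) : ContainsColumns H (V.translate k) := by
  obtain ⟨σ, hσ, -, -, rfl, -⟩ := exists_commutator_ne_one_alternatingGroup
  refine .of_ne_one htop hN hσ (by decide) ?_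
  rw [← rowShift_mul_columnPerm (rowVector_swap k)]
  exact hN _ hk _ (hV _ hσ)

theorem ContainsColumns.sdiff_translate (htop : ContainsColumns G ⊤)
    (hN : ∀ g ∈ G, ∀ h ∈ H, g * h * g⁻¹ ∈ H) (k : ℤ) (hk : rowShift (rowVector k) ∈ H)
    {V : ColumnSet} (hV : ContainsColumns G V) : ContainsColumns H (V \ V.translate k) := by
  obtain ⟨σ, hσ, τ, hτ, hσ', hστ⟩ := exists_commutator_ne_one_alternatingGroup
  have hquot : columnPerm V σ * (columnPerm (V.translate k) σ)⁻¹ ∈ H := by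
    rw [hσ', ← rowShift_mul_columnPerm (rowVector_swap k), ← hσ']
    convert H.mul_mem (hN _ (hV σ hσ) _ hk) (H.inv_mem hk) using 1
    group
  refine .of_ne_one htop hN (ρ := ⁅σ, τ⁆) ?_ hστ ?_
  · exact mul_mem (mul_mem (mul_mem hσ hτ) (inv_mem hσ)) (inv_mem hτ)
  · have h : columnPerm (V \ V.translate k) ⁅σ, τ⁆ =
        ⁅columnPerm V σ * (columnPerm (V.translate k) σ)⁻¹, columnPerm V τ⁆ := by
      simp only [columnPerm, MonoidHom.comp_apply, ← map_commutatorElement, ← map_inv, ← map_mul]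
      congr 1
      ext m y : 2
      simp only [commutatorElement_def, Pi.mul_apply, Pi.inv_apply]
      by_cases hy : y ∈ V m
      · by_cases hy' : y ∈ V.translate k m
        · simp [columnConst_apply_of_mem, columnConst_apply_of_notMem, hy, hy']
        · simp [columnConst_apply_of_mem, columnConst_apply_of_notMem, hy, hy']
      · simp [columnConst_apply_of_notMem, hy]
    rw [h, commutatorElement_def, mul_assoc, mul_assoc, ← mul_assoc (columnPerm V τ)]
    exact H.mul_mem hquot (hN _ (hV τ hτ) _ (H.inv_mem hquot))

end ColumnCalculus

section GridGroup

open Equiv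

open scoped Pointwise

/-- The sequence of the singletons `{0}`. -/
def originSet : ColumnSet := fun _ => {0}

/-- The singleton `{0}` at the index `m` and the empty set elsewhere. -/
def originSetAt (m : ℕ) : ColumnSet := fun m' => {y | m' = m ∧ y = 0}

/-- The full sets from the index `M` on, preceded by empty sets. -/
def tailSet (M : ℕ) : ColumnSet := fun m => {_y | M ≤ m}

/-- The generators of `gridGroup`. -/
def gridGenerators : Set GridPerm :=
  (⋃ V ∈ ({⊤, originSet, aperiodicSet} : Set ColumnSet),
      columnPerm V '' (alternatingGroup (Fin 5) : Set (Perm (Fin 5)))) ∪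
    Set.range fun x : Fin 5 × Fin 5 => rowShift (Pi.single x.1 1 - Pi.single x.2 1)

/-- A finitely generated group whose profinite completion is the product of the alternating groups
on the grids `Fin 5 × ZMod (m + 1)`. -/
def gridGroup : Subgroup GridPerm := Subgroup.closure gridGenerators

theorem gridGenerators_finite : gridGenerators.Finite := by
  refine Set.Finite.union (Set.Finite.biUnion ?_ fun V _ => Set.Finite.image _ (Set.toFinite _))
    (Set.finite_range _)
  simp

instance gridGroup_fg : Group.FG gridGroup :=
  haveI := gridGenerators_finite.to_subtype
  Group.closure_finite_fg gridGenerators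

theorem containsColumns_gridGroup {V : ColumnSet}
    (hV : V ∈ ({⊤, originSet, aperiodicSet} : Set ColumnSet)) : ContainsColumns gridGroup V :=
  fun σ hσ => Subgroup.subset_closure (Or.inl (Set.mem_biUnion hV ⟨σ, hσ, rfl⟩))

theorem containsColumns_gridGroup_top : ContainsColumns gridGroup ⊤ :=
  containsColumns_gridGroup (by simp)

theorem containsColumns_gridGroup_originSet : ContainsColumns gridGroup originSet :=
  containsColumns_gridGroup (by simp)

theorem containsColumns_gridGroup_aperiodicSet : ContainsColumns gridGroup aperiodicSet :=
  containsColumns_gridGroup (by simp)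

theorem rowShift_mem_gridGroup {v : Fin 5 → ℤ} (hv : ∑ i, v i = 0) : rowShift v ∈ gridGroup := by
  let S : AddSubgroup (Fin 5 → ℤ) :=
    { carrier := {v | rowShift v ∈ gridGroup}
      zero_mem' := by
        change rowShift 0 ∈ gridGroup
        rw [rowShift_zero]
        exact one_mem _
      add_mem' := fun {a b} ha hb => by
        change rowShift (a + b) ∈ gridGroup
        rw [rowShift_add]
        exact mul_mem ha hb
      neg_mem' := fun {a} ha => by
        change rowShift (-a) ∈ gridGroup
        rw [rowShift_neg]
        exact inv_mem ha }
  have hsum : v = ∑ i, v i • (Pi.single i 1 - Pi.single 4 1 : Fin 5 → ℤ) := by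
    ext j
    simp only [Finset.sum_apply, Pi.smul_apply, Pi.sub_apply, smul_eq_mul, mul_sub,
      Finset.sum_sub_distrib, Pi.single_apply, mul_ite, mul_one, mul_zero, Finset.sum_ite_eq,
      Finset.mem_univ, if_true]
    by_cases h : j = 4 <;> simp [h, hv]
  rw [hsum]
  exact S.sum_mem fun i _ => S.zsmul_mem (Subgroup.subset_closure (Or.inr ⟨(i, 4), rfl⟩)) _

theorem apply_mem_alternatingGroup_of_mem_gridGroup {g : GridPerm} (hg : g ∈ gridGroup) (m : ℕ) :
    g m ∈ alternatingGroup (Fin 5 × ZMod (m + 1)) := by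
  suffices h : gridGroup ≤ (alternatingGroup (Fin 5 × ZMod (m + 1))).comap
      (Pi.evalMonoidHom (fun m : ℕ => Perm (Fin 5 × ZMod (m + 1))) m) from h hg
  refine (Subgroup.closure_le _).mpr ?_
  rintro _ (h | ⟨x, rfl⟩)
  · obtain ⟨V, -, σ, hσ, rfl⟩ := Set.mem_iUnion₂.mp h
    exact columnPerm_mem_alternatingGroup V hσ m
  · exact rowShift_mem_alternatingGroup (by simp) m

theorem alternatingGroup_le_of_conj_columnPerm_mem {m : ℕ}
    {R : Subgroup (Perm (Fin 5 × ZMod (m + 1)))}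
    (hR : ∀ σ ∈ alternatingGroup (Fin 5), ∀ v : Fin 5 → ℤ, ∑ i, v i = 0 →
      rowShift v m * columnPerm originSet σ m * (rowShift v m)⁻¹ ∈ R) :
    alternatingGroup (Fin 5 × ZMod (m + 1)) ≤ R := by
  have step : ∀ x x' z : Fin 5 × ZMod (m + 1), x'.1 ≠ z.1 → x ≠ x' → x ≠ z →
      ∃ g ∈ R, g x' = z ∧ g x = x := by
    rintro ⟨h, c⟩ ⟨i, a⟩ ⟨j, b⟩ hij hx hz
    obtain ⟨k, l, hki, hkj, hkh, hli, hlj⟩ : ∃ k l : Fin 5, k ≠ i ∧ k ≠ j ∧ k ≠ h ∧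
        l ≠ i ∧ l ≠ j := by
      clear hx hz hij
      revert i j h
      decide
    change i ≠ j at hij
    let v : Fin 5 → ℤ :=
      Pi.single i (a.val : ℤ) + Pi.single j (b.val : ℤ) - Pi.single l (a.val + b.val : ℤ)
    have hvi : ((v i : ℤ) : ZMod (m + 1)) = a := by simp [v, hij, hli.symm]
    have hvj : ((v j : ℤ) : ZMod (m + 1)) = b := by simp [v, hij.symm, hlj.symm]
    have hv : ∑ i, v i = 0 := by
      simp [v, Finset.sum_add_distrib, Finset.sum_sub_distrib]
    set σ : Perm (Fin 5) := swap i j * swap j k with hσ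
    have hσA : σ ∈ alternatingGroup (Fin 5) := by
      rw [Perm.mem_alternatingGroup, hσ, map_mul, Perm.sign_swap hij, Perm.sign_swap hkj.symm]
      rfl
    have hconj : ∀ w, (rowShift v m * columnPerm originSet σ m * (rowShift v m)⁻¹)
        (rowShift v m w) = rowShift v m (columnPerm originSet σ m w) := fun w => by
      simp [Perm.mul_apply]
    refine ⟨_, hR σ hσA v hv, ?_, ?_⟩
    · have h1 : (i, a) = rowShift v m (i, 0) := by rw [rowShift_apply, hvi, zero_add]
      rw [h1, hconj, columnPerm_apply_of_mem (Set.mem_singleton _), rowShift_apply, zero_add]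
      have h2 : σ i = j := by
        rw [hσ, Perm.mul_apply, swap_apply_of_ne_of_ne hij hki.symm, swap_apply_left]
      rw [h2, hvj]
    · have h1 : (h, c) = rowShift v m (h, c - (v h : ZMod (m + 1))) := by
        rw [rowShift_apply, sub_add_cancel]
      conv_lhs => rw [h1]
      conv_rhs => rw [h1]
      rw [hconj]
      congr 1
      by_cases hc : c - (v h : ZMod (m + 1)) ∈ originSet m
      · rw [columnPerm_apply_of_mem hc]
        have hcv : c = (v h : ZMod (m + 1)) := sub_eq_zero.mp hc
        have hhi : h ≠ i := by
          rintro rfl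
          exact hx (by rw [hcv, hvi])
        have hhj : h ≠ j := by
          rintro rfl
          exact hz (by rw [hcv, hvj])
        rw [hσ, Perm.mul_apply, swap_apply_of_ne_of_ne hhj hkh.symm,
          swap_apply_of_ne_of_ne hhi hhj]
      · rw [columnPerm_apply_of_notMem hc]
  have hrow : ∀ i j : Fin 5, ∃ k, k ≠ i ∧ k ≠ j := by decide
  have htrans : ∀ x z : Fin 5 × ZMod (m + 1), x.1 ≠ z.1 → ∃ g ∈ R, g x = z := by
    intro x z hxz
    obtain ⟨k, hkx, hkz⟩ := hrow x.1 z.1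
    obtain ⟨g, hg, hgx, -⟩ := step (k, 0) x z hxz (fun h => hkx (congrArg Prod.fst h))
      fun h => hkz (congrArg Prod.fst h)
    exact ⟨g, hg, hgx⟩
  have hprim : MulAction.IsPreprimitive R (Fin 5 × ZMod (m + 1)) := by
    refine { exists_smul_eq := fun x z => ?_, isTrivialBlock_of_isBlock := fun {B} hB => ?_ }
    · obtain ⟨k, hkx, hkz⟩ := hrow x.1 z.1
      obtain ⟨g, hg, hgx⟩ := htrans x (k, 0) hkx.symm
      obtain ⟨g', hg', hgx'⟩ := htrans (k, 0) z hkz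
      refine ⟨⟨g' * g, mul_mem hg' hg⟩, ?_⟩
      change g' (g x) = z
      rw [hgx, hgx']
    · have core : ∀ x ∈ B, ∀ x' ∈ B, x ≠ x' → ∀ z, x'.1 ≠ z.1 → z ∈ B := by
        intro x hx x' hx' hxx' z hxz
        by_cases hz : x = z
        · exact hz ▸ hx
        obtain ⟨g, hg, hgx', hgx⟩ := step x x' z hxz hxx' hz
        have himg : ∀ w ∈ B, g w ∈ (⟨g, hg⟩ : R) • B := fun w hw => ⟨w, hw, rfl⟩
        rcases hB.smul_eq_or_disjoint ⟨g, hg⟩ with h | h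
        · rw [h] at himg
          exact hgx' ▸ himg x' hx'
        · exact absurd hx (Set.disjoint_left.mp h (by simpa only [hgx] using himg x hx))
      rw [MulAction.IsTrivialBlock, or_iff_not_imp_left, Set.not_subsingleton_iff]
      rintro ⟨x, hx, x', hx', hxx'⟩
      refine Set.eq_univ_of_forall fun z => ?_
      by_cases h1 : x'.1 = z.1
      · obtain ⟨k, hk, hkx⟩ := hrow x'.1 x.1
        have hw : ((k, 0) : Fin 5 × ZMod (m + 1)) ∈ B := core x hx x' hx' hxx' _ hk.symm
        exact core x hx (k, 0) hw (fun h => hkx (congrArg Prod.fst h).symm) z (h1 ▸ hk)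
      · exact core x hx x' hx' hxx' z h1
  have hcycle : columnPerm originSet (swap 0 1 * swap 0 2) m =
      swap ((0 : Fin 5), (0 : ZMod (m + 1))) (1, 0) * swap (0, 0) (2, 0) := by
    ext1 ⟨i, y⟩
    by_cases hy : y = 0
    · subst hy
      rw [columnPerm_apply_of_mem (Set.mem_singleton _)]
      have : ∀ i j k : Fin 5, swap (j, (0 : ZMod (m + 1))) (k, 0) (i, 0) = (swap j k i, 0) := by
        intro i j k
        simp only [swap_apply_def, Prod.mk.injEq, and_true]
        split_ifs <;> rfl
      rw [Perm.mul_apply, Perm.mul_apply, this, this]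
    · have hne : ∀ j k : Fin 5, swap (j, (0 : ZMod (m + 1))) (k, 0) (i, y) = (i, y) := fun j k =>
        swap_apply_of_ne_of_ne (by simp [hy]) (by simp [hy])
      rw [columnPerm_apply_of_notMem (by simpa [originSet] using hy), Perm.mul_apply, hne, hne]
  refine Perm.alternatingGroup_le_of_isPreprimitive_of_isThreeCycle_mem hprim
    (Perm.isThreeCycle_swap_mul_swap_same (a := ((0 : Fin 5), (0 : ZMod (m + 1))))
      (b := (1, 0)) (c := (2, 0)) (by simp) (by simp) (by simp)) ?_
  rw [← hcycle]
  have := hR (swap 0 1 * swap 0 2) (Perm.mem_alternatingGroup.mpr (by decide)) 0 (by simp)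
  rw [rowShift_zero, Pi.one_apply, one_mul, inv_one, mul_one] at this
  exact this

theorem conj_mem_gridGroup : ∀ g ∈ gridGroup, ∀ h ∈ gridGroup, g * h * g⁻¹ ∈ gridGroup :=
  fun _ hg _ hh => mul_mem (mul_mem hg hh) (inv_mem hg)

theorem containsColumns_gridGroup_originSetAt (m : ℕ) :
    ContainsColumns gridGroup (originSetAt m) := by
  induction m using Nat.strong_induction_on with
  | _ m ih =>
    have heq : originSetAt m = (originSet ⊓ originSet.translate (m + 1 : ℕ)) \
        (Finset.range m).sup originSetAt := by
      ext m' y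
      have hsup : y ∈ (Finset.range m).sup originSetAt m' ↔ m' < m ∧ y = 0 := by
        rw [Finset.sup_apply, Finset.sup_set_eq_biUnion]
        simp [originSetAt]
      have hcoe : y ∈ ((originSet ⊓ originSet.translate (m + 1 : ℕ)) \
          (Finset.range m).sup originSetAt) m' ↔
          (y = 0 ∧ y - (((m + 1 : ℕ) : ℤ) : ZMod (m' + 1)) = 0) ∧
            ¬ y ∈ (Finset.range m).sup originSetAt m' := Iff.rfl
      rw [hcoe, hsup]
      change (m' = m ∧ y = 0) ↔ _
      constructor
      · rintro ⟨rfl, rfl⟩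
        refine ⟨⟨rfl, ?_⟩, by simp⟩
        rw [Int.cast_natCast, ZMod.natCast_self, sub_zero]
      · rintro ⟨⟨rfl, h⟩, hlt⟩
        refine ⟨?_, rfl⟩
        rw [Int.cast_natCast, zero_sub, neg_eq_zero, ZMod.natCast_eq_zero_iff] at h
        have := Nat.le_of_dvd (Nat.succ_pos m) h
        have : ¬ m' < m := fun h => hlt ⟨h, rfl⟩
        omega
    rw [heq]
    refine .sdiff containsColumns_gridGroup_top conj_mem_gridGroup
      (.inf containsColumns_gridGroup_top conj_mem_gridGroup containsColumns_gridGroup_originSet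
        (.translate containsColumns_gridGroup_top conj_mem_gridGroup _
          (rowShift_mem_gridGroup (sum_rowVector _)) containsColumns_gridGroup_originSet))
      (.finset_sup containsColumns_gridGroup_top le_rfl conj_mem_gridGroup _ fun i hi =>
        ih i (Finset.mem_range.mp hi))

theorem mulSingle_mem_gridGroup (m : ℕ) {k : Perm (Fin 5 × ZMod (m + 1))}
    (hk : k ∈ alternatingGroup (Fin 5 × ZMod (m + 1))) :
    (Pi.mulSingle m k : GridPerm) ∈ gridGroup := by
  suffices h : alternatingGroup (Fin 5 × ZMod (m + 1)) ≤
      gridGroup.comap (MonoidHom.mulSingle (fun m : ℕ => Perm (Fin 5 × ZMod (m + 1))) m) from h hk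
  refine alternatingGroup_le_of_conj_columnPerm_mem fun σ hσ v hv => ?_
  change (Pi.mulSingle m _ : GridPerm) ∈ gridGroup
  have heq : (Pi.mulSingle m (rowShift v m * columnPerm originSet σ m * (rowShift v m)⁻¹) :
      GridPerm) = rowShift v * columnPerm (originSetAt m) σ * (rowShift v)⁻¹ := by
    ext1 m'
    by_cases hm : m' = m
    · subst hm
      rw [Pi.mulSingle_eq_same, Pi.mul_apply, Pi.mul_apply, Pi.inv_apply]
      congr 2
      ext1 ⟨i, y⟩
      by_cases hy : y = 0
      · rw [columnPerm_apply_of_mem (V := originSet) hy,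
          columnPerm_apply_of_mem (V := originSetAt m') ⟨rfl, hy⟩]
      · rw [columnPerm_apply_of_notMem (V := originSet) hy,
          columnPerm_apply_of_notMem (V := originSetAt m') fun h => hy h.2]
    · rw [Pi.mulSingle_eq_of_ne hm, Pi.mul_apply, Pi.mul_apply, Pi.inv_apply, eq_comm,
        mul_inv_eq_one, mul_eq_left]
      ext1 ⟨i, y⟩
      rw [columnPerm_apply_of_notMem fun h => hm h.1, Perm.one_apply]
  rw [heq]
  exact conj_mem_gridGroup _ (rowShift_mem_gridGroup hv) _
    (containsColumns_gridGroup_originSetAt m σ hσ)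

theorem piTrunc_compl_mem_gridGroup {g : GridPerm} (hg : g ∈ gridGroup) (M : ℕ) :
    piTrunc {m | m < M}ᶜ g ∈ gridGroup := by
  have h : piTrunc {m | m < M} g ∈ gridGroup :=
    piTrunc_mem_of_finite (Set.finite_lt_nat M) fun m _ =>
      mulSingle_mem_gridGroup m (apply_mem_alternatingGroup_of_mem_gridGroup hg m)
  rwa [← Subgroup.mul_mem_cancel_left _ h, piTrunc_mul_piTrunc_compl]

theorem piTrunc_compl_columnPerm (M : ℕ) (V : ColumnSet) (σ : Perm (Fin 5)) :
    piTrunc {m | m < M}ᶜ (columnPerm V σ) = columnPerm (V ⊓ tailSet M) σ := by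
  ext m : 2
  rename_i x
  obtain ⟨i, y⟩ := x
  by_cases hm : m < M
  · rw [piTrunc_apply_of_notMem (by simpa using hm),
      columnPerm_apply_of_notMem fun h => absurd h.2 (not_le.mpr hm), Perm.one_apply]
  · rw [piTrunc_apply_of_mem hm]
    by_cases hy : y ∈ V m
    · rw [columnPerm_apply_of_mem hy,
        columnPerm_apply_of_mem (V := V ⊓ tailSet M) ⟨hy, not_lt.mp hm⟩]
    · rw [columnPerm_apply_of_notMem hy, columnPerm_apply_of_notMem fun h => hy h.1]

theorem piTrunc_compl_mem_of_tailSet {H : Subgroup GridPerm}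
    (hN : ∀ g ∈ gridGroup, ∀ h ∈ H, g * h * g⁻¹ ∈ H) {M : ℕ} (hM : ContainsColumns H (tailSet M))
    {g : GridPerm} (hg : g ∈ gridGroup) : piTrunc {m | m < M}ᶜ g ∈ H := by
  suffices h : gridGroup ≤ H.comap (piTrunc {m | m < M}ᶜ) from h hg
  refine (Subgroup.closure_le _).mpr ?_
  rintro _ (h | ⟨⟨i, j⟩, rfl⟩)
  · obtain ⟨V, hV, σ, hσ, rfl⟩ := Set.mem_iUnion₂.mp h
    change piTrunc _ _ ∈ H
    rw [piTrunc_compl_columnPerm]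
    exact ContainsColumns.inf containsColumns_gridGroup_top hN (containsColumns_gridGroup hV) hM
      σ hσ
  · change piTrunc _ (rowShift (Pi.single i 1 - Pi.single j 1)) ∈ H
    by_cases hij : i = j
    · rw [hij, sub_self, rowShift_zero, map_one]
      exact one_mem H
    obtain ⟨k, l, hki, hkj, hli, hlj, hkl⟩ : ∃ k l : Fin 5, k ≠ i ∧ k ≠ j ∧ l ≠ i ∧ l ≠ j ∧
        k ≠ l := by
      clear hij
      revert i j
      decide
    set σ : Perm (Fin 5) := swap i j * swap j l with hσ
    have hσA : σ ∈ alternatingGroup (Fin 5) := by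
      rw [Perm.mem_alternatingGroup, hσ, map_mul, Perm.sign_swap hij, Perm.sign_swap hlj.symm]
      rfl
    have hσi : σ i = j := by
      rw [hσ, Perm.mul_apply, swap_apply_of_ne_of_ne hij hli.symm, swap_apply_left]
    have hσk : σ k = k := by
      rw [hσ, Perm.mul_apply, swap_apply_of_ne_of_ne hkj hkl, swap_apply_of_ne_of_ne hki hkj]
    set w : Fin 5 → ℤ := Pi.single i 1 - Pi.single k 1 with hw
    set v : Fin 5 → ℤ := Pi.single j 1 - Pi.single k 1 with hv
    have hvσ : v ∘ σ = w := by
      ext a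
      simp only [hv, hw, Function.comp_apply, Pi.sub_apply, Pi.single_apply,
        σ.injective.eq_iff' hσi, σ.injective.eq_iff' hσk]
    have hwG : rowShift w ∈ gridGroup := rowShift_mem_gridGroup (by simp [hw])
    have hdiff : rowShift (Pi.single i 1 - Pi.single j 1) =
        rowShift w * columnPerm ⊤ σ * (rowShift w)⁻¹ * (columnPerm ⊤ σ)⁻¹ := by
      have : (Pi.single i 1 - Pi.single j 1 : Fin 5 → ℤ) = w + -v := by rw [hw, hv]; abel
      rw [this, rowShift_add, rowShift_neg, ← columnPerm_top_mul_rowShift σ v, hvσ]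
      group
    have hcol : piTrunc {m | m < M}ᶜ (columnPerm ⊤ σ) ∈ H := by
      rw [piTrunc_compl_columnPerm, top_inf_eq]
      exact hM σ hσA
    rw [hdiff, map_mul, map_mul, map_mul, map_inv, map_inv]
    exact H.mul_mem (hN _ (piTrunc_compl_mem_gridGroup hwG M) _ hcol) (H.inv_mem hcol)

theorem exists_eq_one_of_gridGroup_hom {Q : Type*} [Group Q] [Finite Q] (f : gridGroup →* Q) :
    ∃ M : ℕ, ∀ g : gridGroup, (∀ m < M, g.1 m = 1) → f g = 1 := by
  set H : Subgroup GridPerm := f.ker.map gridGroup.subtype with hH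
  have hHG : H ≤ gridGroup := Subgroup.map_subtype_le _
  have hN : ∀ g ∈ gridGroup, ∀ h ∈ H, g * h * g⁻¹ ∈ H := by
    rintro g hg _ ⟨h, hh, rfl⟩
    exact ⟨⟨g, hg⟩ * h * ⟨g, hg⟩⁻¹, f.normal_ker.conj_mem h hh _, rfl⟩
  obtain ⟨q, ⟨r, hq⟩, N, M, hNM⟩ := exists_aperiodicSet_window (Nat.card Q) Nat.card_pos
  have htop := containsColumns_gridGroup_top
  have hshift : rowShift (rowVector q) ∈ H := by
    have h1 : rowVector q = q • rowVector 1 := by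
      ext i
      fin_cases i <;> simp [rowVector, mul_comm]
    rw [h1, rowShift_nsmul]
    refine ⟨⟨_, rowShift_mem_gridGroup (sum_rowVector 1)⟩ ^ q, ?_, rfl⟩
    change f _ = 1
    rw [map_pow, hq, pow_mul, pow_card_eq_one', one_pow]
  have hA := ContainsColumns.sdiff_translate htop hN q hshift containsColumns_gridGroup_aperiodicSet
  set A : ColumnSet := aperiodicSet \ ColumnSet.translate q aperiodicSet
  have hW : ContainsColumns H ((Finset.range (N + 1)).sup fun i => A.translate i) :=
    .finset_sup htop hHG hN _ fun i _ => .translate htop hN i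
      (rowShift_mem_gridGroup (sum_rowVector _)) hA
  have htailG : ContainsColumns gridGroup (tailSet M) := by
    intro σ hσ
    rw [← top_inf_eq (tailSet M), ← piTrunc_compl_columnPerm]
    exact piTrunc_compl_mem_gridGroup (htop σ hσ) M
  have htailW : tailSet M ≤ (Finset.range (N + 1)).sup fun i => A.translate i := by
    intro m y hm
    rw [Finset.sup_apply, Finset.sup_set_eq_biUnion]
    obtain ⟨i, hi, h1, h2⟩ := hNM m hm y
    refine Set.mem_biUnion (Finset.mem_coe.mpr (Finset.mem_range.mpr (Nat.lt_succ_of_le hi))) ?_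
    change y - ((i : ℤ) : ZMod (m + 1)) ∈ aperiodicSet m ∧
      y - ((i : ℤ) : ZMod (m + 1)) - ((q : ℤ) : ZMod (m + 1)) ∉ aperiodicSet m
    rw [Int.cast_natCast, Int.cast_natCast]
    exact ⟨h1, h2⟩
  have htail : ContainsColumns H (tailSet M) := by
    rw [← inf_eq_left.mpr htailW]
    exact .inf htop hN htailG hW
  refine ⟨M, fun g hg => ?_⟩
  have hgH : g.1 ∈ H := by
    have : piTrunc {m | m < M}ᶜ g.1 = g.1 := by
      ext1 m
      by_cases hm : m < M
      · rw [piTrunc_apply_of_notMem (by simpa using hm), hg m hm]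
      · exact piTrunc_apply_of_mem hm _
    rw [← this]
    exact piTrunc_compl_mem_of_tailSet hN htail g.2
  obtain ⟨g', hg', he⟩ := hgH
  rw [← Subtype.ext (a1 := g') (a2 := g) he]
  exact hg'

/-- The coordinate homomorphism from `gridGroup` to the product of the alternating groups. -/
def gridGroupToAlternating : gridGroup →* ∀ m : ℕ, alternatingGroup (Fin 5 × ZMod (m + 1)) where
  toFun g m := ⟨g.1 m, apply_mem_alternatingGroup_of_mem_gridGroup g.2 m⟩
  map_one' := rfl
  map_mul' _ _ := rfl

theorem exists_gridGroupToAlternating_eq_mulSingle (m : ℕ)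
    (k : alternatingGroup (Fin 5 × ZMod (m + 1))) :
    ∃ g, gridGroupToAlternating g = Pi.mulSingle m k := by
  refine ⟨⟨Pi.mulSingle m k.1, mulSingle_mem_gridGroup m k.2⟩, ?_⟩
  ext1 m'
  ext1
  change (Pi.mulSingle m k.1 : GridPerm) m' =
    ((Pi.mulSingle m k : ∀ m : ℕ, alternatingGroup (Fin 5 × ZMod (m + 1))) m').1
  by_cases hm : m' = m
  · subst hm
    rw [Pi.mulSingle_eq_same, Pi.mulSingle_eq_same]
  · rw [Pi.mulSingle_eq_of_ne hm, Pi.mulSingle_eq_of_ne hm]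
    rfl

end GridGroup

/-- **Remark (Kassabov–Nikolov).**  Let `d ∈ ℕ` and let `(T n)_{n ≥ 5}` be a family of finite
groups such that each `T n` is generated by the images of `d` homomorphisms from the
alternating group `Alt(n)`.  Then the Cartesian product `∏_{n ≥ 5} T n` (a profinite group,
with each factor discrete) is the profinite completion of a finitely generated residually
finite group. -/
theorem cartesian_product_generated_by_alt_images_is_profinite_completion
    (d : ℕ) (T : ℕ → Type) [∀ n, Group (T n)] [∀ n, Finite (T n)]
    [∀ n, TopologicalSpace (T n)] [∀ n, DiscreteTopology (T n)]
    (hgen : ∀ n : ℕ, ∃ φ : Fin d → (alternatingGroup (Fin (n + 5)) →* T (n + 5)),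
      (⨆ i, (φ i).range) = ⊤) :
    Nonempty (ProfiniteCompletionWitness (∀ n : ℕ, T (n + 5))) := by
  choose φ hφ using hgen
  have hred : ∀ n : ℕ, ∃ φ : Fin (d * 16) →
      (alternatingGroup (Fin 5 × ZMod (n / 5 + 1)) →* T (n + 5)), (⨆ i, (φ i).range) = ⊤ := by
    intro n
    have hn : n + 5 = 5 * (n / 5 + 1) + n % 5 := by omega
    have h1 : ∃ φ : Fin d → (alternatingGroup (Fin (5 * (n / 5 + 1) + n % 5)) →* T (n + 5)),
        (⨆ i, (φ i).range) = ⊤ := hn ▸ ⟨φ n, hφ n⟩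
    have hle : d * 2 ^ (n % 5) ≤ d * 16 :=
      Nat.mul_le_mul_left d (Nat.pow_le_pow_right (j := 4) two_pos (by omega))
    obtain ⟨χ, hχ⟩ := exists_generated_of_le hle
      (exists_generated_of_alternatingGroup_add (5 * (n / 5 + 1)) (n % 5) (by omega) h1)
    let e : Fin 5 × ZMod (n / 5 + 1) ≃ Fin (5 * (n / 5 + 1)) := finProdFinEquiv
    refine ⟨fun i => (χ i).comp e.altCongrHom.toMonoidHom, ?_⟩
    rw [← hχ]
    refine iSup_congr fun i => ?_
    rw [MonoidHom.range_comp, MonoidHom.range_eq_top.mpr e.altCongrHom.surjective,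
      MonoidHom.range_eq_map]
  choose χ hχ using hred
  refine nonempty_profiniteCompletionWitness_of_generated gridGroupToAlternating
    exists_gridGroupToAlternating_eq_mulSingle ?_ (J := Fin (d * 16) × Fin 5) (fun n => n / 5) ?_
    (fun x n => if n % 5 = x.2 then χ n x.1 else 1) ?_ ?_
  · intro Q _ _ f
    obtain ⟨M, hM⟩ := exists_eq_one_of_gridGroup_hom f
    exact ⟨M, fun g hg => hM g fun m hm => congrArg Subtype.val (hg m hm)⟩
  · intro M
    refine (Set.finite_lt_nat (5 * M)).subset fun n (hn : n / 5 < M) => ?_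
    change n < 5 * M
    omega
  · intro n
    rw [eq_top_iff, ← hχ n]
    refine iSup_le fun i => le_trans ?_
      (le_iSup _ ((i, ⟨n % 5, Nat.mod_lt _ (by omega)⟩) : Fin (d * 16) × Fin 5))
    simp
  · intro x n n' hnn' hne
    by_cases h : n % 5 = x.2
    · right
      refine if_neg fun h' => hne ?_
      change n / 5 = n' / 5 at hnn'
      omega
    · exact Or.inl (if_neg h)
end

section
/- For every odd prime p there exists a subgroup G₁ of ∏_{n=3}^∞ Alt(u_{n,p}) generated by 10 elements which is a frame for ∏_{n=3}^∞ Alt(u_{n,p}): G₁ contains the restricted direct sum ⊕_{n=3}^∞ Alt(u_{n,p}), and every finite-index subgroup of G₁ contains a principal congruence subgroup G₁ ∩ ker(∏_{n≥3} Alt(u_{n,p}) → ∏_{n∈V} Alt(u_{n,p})) for some finite set V of indices. -/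
/-- A subgroup `G` of a Cartesian product `∏ i, S i` of finite groups is a *frame* if it is
finitely generated, contains the restricted direct sum (all elements with finite support),
and every finite-index subgroup of `G` contains a principal congruence subgroup
`G ∩ ker(∏ i, S i → ∏ i ∈ V, S i)` for some finite set `V` of indices. -/
def IsFrame {ι : Type*} {S : ι → Type*} [∀ i, Group (S i)]
    (G : Subgroup (∀ i, S i)) : Prop :=
  G.FG ∧
  (∀ x : ∀ i, S i, {i | x i ≠ 1}.Finite → x ∈ G) ∧
  (∀ H : Subgroup G, H.FiniteIndex →
    ∃ V : Finset ι, ∀ g : G, (∀ i ∈ V, (g : ∀ i, S i) i = 1) → g ∈ H)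

namespace AlternatingFrame

open Equiv Filter

section Criterion

variable {S : ℕ → Type*} [∀ n, Group (S n)]

/-- The endomorphism of a product which forgets the coordinates below `w`. -/
def tail (w : ℕ) : (∀ n, S n) →* ∀ n, S n where
  toFun y n := if n < w then 1 else y n
  map_one' := by ext; simp
  map_mul' a b := by ext n; by_cases h : n < w <;> simp [h]

lemma finite_tail_inv_mul (w : ℕ) (y : ∀ n, S n) : {n | (tail w y * y⁻¹) n ≠ 1}.Finite := by
  refine (Set.finite_lt_nat w).subset fun n hn => ?_
  by_contra h
  exact hn (by simp only [Set.mem_ofPred_eq] at h; simp [tail, h])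

/-- A group containing the restricted direct sum is a frame if its generators lie in every normal
subgroup which contains the restricted direct sum and satisfies the pigeonhole principle of
finite-index subgroups. -/
theorem isFrame_closure_range {m : ℕ} (x : Fin m → ∀ n, S n)
    (hsum : ∀ y : ∀ n, S n, {n | y n ≠ 1}.Finite → y ∈ Subgroup.closure (Set.range x))
    (hK : ∀ K : Subgroup (∀ n, S n), K ≤ Subgroup.closure (Set.range x) →
      (∀ g ∈ Subgroup.closure (Set.range x), ∀ k ∈ K, g * k * g⁻¹ ∈ K) →
      (∀ y : ∀ n, S n, {n | y n ≠ 1}.Finite → y ∈ K) →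
      (∀ s : ℕ → ∀ n, S n, (∀ i, s i ∈ Subgroup.closure (Set.range x)) →
        ∃ i j, i ≠ j ∧ (s i)⁻¹ * s j ∈ K) → ∀ i, x i ∈ K) :
    IsFrame (Subgroup.closure (Set.range x)) := by
  set G := Subgroup.closure (Set.range x) with hG
  have tail_mem : ∀ w, ∀ y ∈ G, tail w y ∈ G := fun w y hy => by
    have := G.mul_mem (hsum _ (finite_tail_inv_mul w y)) hy
    simpa using this
  refine ⟨(Subgroup.fg_iff _).2 ⟨_, rfl, Set.finite_range x⟩, hsum, fun H hH => ?_⟩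
  let 𝒰 : Ultrafilter ℕ := hyperfilter ℕ
  let T (w : ℕ) : G →* G := ((tail w).comp G.subtype).codRestrict G fun g => tail_mem w g g.2
  let K₀ : Subgroup G :=
    { carrier := {g | ∀ᶠ w in (𝒰 : Filter ℕ), T w g ∈ H.normalCore}
      one_mem' := by simp [H.normalCore.one_mem]
      mul_mem' := fun {a b} ha hb => by
        filter_upwards [ha, hb] with w h1 h2
        rw [map_mul]; exact mul_mem h1 h2
      inv_mem' := fun {a} ha => by
        filter_upwards [ha] with w h1
        rw [map_inv]; exact inv_mem h1 }
  have key : ∀ i, x i ∈ K₀.map G.subtype := by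
    refine hK _ (Subgroup.map_subtype_le _) ?_ ?_ ?_
    · rintro g hg _ ⟨k, hk, rfl⟩
      refine ⟨⟨g, hg⟩ * k * ⟨g, hg⟩⁻¹, ?_, rfl⟩
      change ∀ᶠ w in (𝒰 : Filter ℕ), _
      filter_upwards [show ∀ᶠ w in (𝒰 : Filter ℕ), T w k ∈ H.normalCore from hk] with w h1
      simp only [map_mul, map_inv]
      exact (H.normalCore_normal).conj_mem _ h1 _
    · intro y hy
      refine ⟨⟨y, hsum y hy⟩, ?_, rfl⟩
      change ∀ᶠ w in (𝒰 : Filter ℕ), _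
      obtain ⟨b, hb⟩ := hy.bddAbove
      have h1 : ∀ᶠ w in (𝒰 : Filter ℕ), b < w :=
        Nat.hyperfilter_le_atTop (eventually_gt_atTop b)
      filter_upwards [h1] with w hw
      have : T w ⟨y, hsum y hy⟩ = 1 := by
        ext n
        change (if n < w then 1 else y n) = 1
        split_ifs with h
        · rfl
        · by_contra h2
          have := hb h2
          omega
      rw [this]; exact one_mem _
    · intro s hs
      have hq : ∀ i, ∃ c : G ⧸ H.normalCore, ∀ᶠ w in (𝒰 : Filter ℕ),
          (T w ⟨s i, hs i⟩ : G ⧸ H.normalCore) = c := by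
        intro i
        obtain ⟨c, hc⟩ := Ultrafilter.eq_pure_of_finite
          (𝒰.map fun w => (T w ⟨s i, hs i⟩ : G ⧸ H.normalCore))
        refine ⟨c, ?_⟩
        have : ({c} : Set (G ⧸ H.normalCore)) ∈
            𝒰.map fun w => (T w ⟨s i, hs i⟩ : G ⧸ H.normalCore) := by
          rw [hc]; exact Set.mem_singleton c
        exact this
      choose c hc using hq
      obtain ⟨i, j, hij, he⟩ := Finite.exists_ne_map_eq_of_infinite c
      refine ⟨i, j, hij, ⟨⟨s i, hs i⟩⁻¹ * ⟨s j, hs j⟩, ?_, rfl⟩⟩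
      change ∀ᶠ w in (𝒰 : Filter ℕ), _
      filter_upwards [hc i, hc j] with w h1 h2
      rw [map_mul, map_inv, ← QuotientGroup.eq, h1, h2, he]
  have key' : ∀ᶠ w in (𝒰 : Filter ℕ), ∀ i, ∃ h : x i ∈ G, T w ⟨x i, h⟩ ∈ H := by
    rw [eventually_all]
    intro i
    obtain ⟨k, hk, hki⟩ := key i
    filter_upwards [show ∀ᶠ w in (𝒰 : Filter ℕ), T w k ∈ H.normalCore from hk] with w hw
    refine ⟨hki ▸ k.2, ?_⟩
    have : (⟨x i, hki ▸ k.2⟩ : G) = k := Subtype.ext hki.symm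
    rw [this]; exact H.normalCore_le hw
  obtain ⟨w, hw⟩ := key'.exists
  refine ⟨Finset.range w, fun g hg => ?_⟩
  have h1 : ∀ y (hy : y ∈ G), T w ⟨y, hy⟩ ∈ H := fun y hy => by
    have : G ≤ (H.comap (T w)).map G.subtype := by
      refine (Subgroup.closure_le _).2 ?_
      rintro _ ⟨i, rfl⟩
      obtain ⟨h, h'⟩ := hw i
      exact ⟨⟨x i, h⟩, h', rfl⟩
    obtain ⟨k, hk, hky⟩ := this hy
    have : (⟨y, hy⟩ : G) = k := Subtype.ext hky.symm
    rw [this]; exact hk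
  have h2 : T w g = g := by
    ext n
    change (if n < w then 1 else (g : ∀ n, S n) n) = (g : ∀ n, S n) n
    split_ifs with h
    · exact (hg n (Finset.mem_range.2 h)).symm
    · rfl
  exact h2 ▸ h1 g g.2

end Criterion

/-- The three-cycle `i ↦ j ↦ k ↦ i`. -/
def cyc (i j k : Fin 6) : Perm (Fin 6) := swap i j * swap j k

section Fibres

variable {X : ℕ → Type*}

/-- Permutations of `X n × Fin 6` preserving the first coordinate. -/
def fib : (∀ n, X n → Perm (Fin 6)) →* ∀ n, Perm (X n × Fin 6) where
  toFun F n :=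
    { toFun := fun z => (z.1, F n z.1 z.2)
      invFun := fun z => (z.1, (F n z.1)⁻¹ z.2)
      left_inv := fun z => by simp
      right_inv := fun z => by simp }
  map_one' := by ext <;> rfl
  map_mul' _ _ := by ext <;> rfl

/-- Permutations of `X n × Fin 6` preserving the second coordinate. -/
def lev : (Fin 6 → ∀ n, Perm (X n)) →* ∀ n, Perm (X n × Fin 6) where
  toFun Λ n :=
    { toFun := fun z => (Λ z.2 n z.1, z.2)
      invFun := fun z => ((Λ z.2 n)⁻¹ z.1, z.2)
      left_inv := fun z => by simp
      right_inv := fun z => by simp }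
  map_one' := by ext <;> rfl
  map_mul' _ _ := by ext <;> rfl

lemma fib_apply (F : ∀ n, X n → Perm (Fin 6)) (n : ℕ) (z : X n × Fin 6) :
    fib F n z = (z.1, F n z.1 z.2) := rfl

lemma lev_apply (Λ : Fin 6 → ∀ n, Perm (X n)) (n : ℕ) (z : X n × Fin 6) :
    lev Λ n z = (Λ z.2 n z.1, z.2) := rfl

open Classical in
/-- The family of permutations equal to `c` over `U` and trivial elsewhere. -/
noncomputable def on (c : Perm (Fin 6)) (U : ∀ n, Set (X n)) : ∀ n, X n → Perm (Fin 6) :=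
  fun n x => if x ∈ U n then c else 1

/-- The same permutation of the levels over each point of the base. -/
def lvl (X : ℕ → Type*) : Perm (Fin 6) →* ∀ n, Perm (X n × Fin 6) :=
  fib.comp ⟨⟨fun c _ _ => c, rfl⟩, fun _ _ => rfl⟩

lemma lvl_eq (c : Perm (Fin 6)) : lvl X c = fib (fun _ _ => c) := rfl

lemma lvl_apply (c : Perm (Fin 6)) (n : ℕ) (z : X n × Fin 6) : lvl X c n z = (z.1, c z.2) := rfl

lemma fib_on_univ (c : Perm (Fin 6)) : fib (on c fun n => (Set.univ : Set (X n))) = lvl X c := by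
  rw [lvl_eq]; congr 1; ext; simp [on]

lemma lvl_conj_fib (α c : Perm (Fin 6)) (U : ∀ n, Set (X n)) :
    lvl X α * fib (on c U) * (lvl X α)⁻¹ = fib (on (α * c * α⁻¹) U) := by
  rw [lvl_eq, ← map_mul, ← map_inv, ← map_mul]
  congr 1
  ext n x : 2
  by_cases h : x ∈ U n <;> simp [on, h]

lemma lvl_conj_lev (α : Perm (Fin 6)) (Λ : Fin 6 → ∀ n, Perm (X n)) :
    lvl X α * lev Λ * (lvl X α)⁻¹ = lev (fun l => Λ (α⁻¹ l)) := by
  rw [mul_inv_eq_iff_eq_mul]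
  ext n z <;> simp [lvl_apply, lev_apply]

open scoped commutatorElement in
lemma commutator_fib (c c' : Perm (Fin 6)) (U W : ∀ n, Set (X n)) :
    ⁅fib (on c U), fib (on c' W)⁆ = fib (on ⁅c, c'⁆ fun n => U n ∩ W n) := by
  rw [← map_commutatorElement]
  congr 1
  ext n x : 2
  by_cases h : x ∈ U n <;> by_cases h' : x ∈ W n <;>
    simp [on, h, h', commutatorElement_def]

lemma fib_union (c : Perm (Fin 6)) (U W : ∀ n, Set (X n)) (h : ∀ n, Disjoint (U n) (W n)) :
    fib (on c U) * fib (on c W) = fib (on c fun n => U n ∪ W n) := by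
  rw [← map_mul]
  congr 1
  ext n x : 2
  have h2 : x ∈ U n → x ∉ W n := fun hx => Set.disjoint_left.1 (h n) hx
  by_cases h : x ∈ U n <;> by_cases h' : x ∈ W n <;> simp_all [on]

lemma fib_on_pow_three (c : Perm (Fin 6)) (hc : c ^ 3 = 1) (U : ∀ n, Set (X n)) :
    fib (on c U) ^ 3 = 1 := by
  rw [← map_pow, ← map_one fib]
  congr 1
  ext n x : 2
  by_cases h : x ∈ U n <;> simp [on, h, hc]

/-- The permutation `γ` on one level. -/
def single (i : Fin 6) (γ : ∀ n, Perm (X n)) : ∀ n, Perm (X n × Fin 6) := lev (Pi.mulSingle i γ)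

/-- The translate of the three-cycle on the levels `2, 3, 4` by `γ` on the fourth level. -/
def twist (γ : ∀ n, Perm (X n)) : ∀ n, Perm (X n × Fin 6) :=
  single 4 γ * lvl X (cyc 2 3 4) * (single 4 γ)⁻¹

/-- The base permutations realised on any of the first three levels, up to a correction
on the third level. -/
def translations (G : Subgroup (∀ n, Perm (X n × Fin 6))) : Subgroup (∀ n, Perm (X n)) where
  carrier := {γ | ∀ i : Fin 6, i < 3 → ∃ Λ, lev Λ ∈ G ∧ Λ i = γ ∧ ∀ l, l ≠ i → l ≠ 3 → Λ l = 1}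
  one_mem' i _ := ⟨1, by simp [G.one_mem], rfl, fun _ _ _ => rfl⟩
  mul_mem' {a b} ha hb i hi := by
    obtain ⟨Λ, h1, h2, h3⟩ := ha i hi
    obtain ⟨M, h4, h5, h6⟩ := hb i hi
    exact ⟨Λ * M, by rw [map_mul]; exact mul_mem h1 h4, by simp [h2, h5],
      fun l hl hl' => by simp [h3 l hl hl', h6 l hl hl']⟩
  inv_mem' {a} ha i hi := by
    obtain ⟨Λ, h1, h2, h3⟩ := ha i hi
    exact ⟨Λ⁻¹, by rw [map_inv]; exact inv_mem h1, by simp [h2],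
      fun l hl hl' => by simp [h3 l hl hl']⟩

variable {G J : Subgroup (∀ n, Perm (X n × Fin 6))}

lemma twist_mem_translations (h0 : lvl X (cyc 0 1 2) ∈ G) (h1 : lvl X (cyc 2 3 4) ∈ G)
    {γ : ∀ n, Perm (X n)} (hγ : twist γ ∈ G) : γ ∈ translations G := by
  set s : Fin 6 → ∀ n, Perm (X n) := Pi.mulSingle 4 γ with hs
  have hh : lev (s * fun l => s⁻¹ ((cyc 2 3 4)⁻¹ l)) ∈ G := by
    rw [map_mul, ← lvl_conj_lev, map_inv]
    have := G.mul_mem hγ (G.inv_mem h1)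
    rw [twist, single, ← hs] at this
    simpa only [mul_assoc] using this
  have main : ∀ α : Perm (Fin 6), lvl X α ∈ G → ∀ i, α 4 = i → α 2 = 3 →
      ∃ Λ : Fin 6 → ∀ n, Perm (X n), lev Λ ∈ G ∧ Λ i = γ ∧ ∀ l, l ≠ i → l ≠ 3 → Λ l = 1 := by
    intro α hα i hi h3
    refine ⟨_, (lvl_conj_lev α _) ▸ G.mul_mem (G.mul_mem hα hh) (G.inv_mem hα), ?_, ?_⟩
    · subst hi
      simp [hs, show (cyc 2 3 4).symm 4 = 3 by decide]
    · intro l hl hl3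
      have e4 : α⁻¹ l ≠ 4 := fun h => hl (by rw [← hi, ← h]; simp)
      have e2 : α⁻¹ l ≠ 2 := fun h => hl3 (by rw [← h3, ← h]; simp)
      have e3 : (cyc 2 3 4)⁻¹ (α⁻¹ l) ≠ 4 := fun h => e2 (by
        rw [Perm.inv_eq_iff_eq] at h; rw [h]; decide)
      simp only [hs, Pi.mul_apply, Pi.inv_apply]
      rw [Pi.mulSingle_eq_of_ne e4, Pi.mulSingle_eq_of_ne e3]; simp
  intro i hi
  have : i = 0 ∨ i = 1 ∨ i = 2 := by revert i; decide
  rcases this with rfl | rfl | rfl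
  · exact main (cyc 0 1 2 * cyc 2 3 4) (by rw [map_mul]; exact mul_mem h0 h1) 0 (by decide)
      (by decide)
  · exact main (cyc 0 1 2 * cyc 0 1 2 * cyc 2 3 4)
      (by rw [map_mul, map_mul]; exact mul_mem (mul_mem h0 h0) h1) 1 (by decide) (by decide)
  · exact main (cyc 2 3 4) h1 2 (by decide) (by decide)

lemma conj_mem_translate {γ : ∀ n, Perm (X n)} (hγ : γ ∈ translations G)
    (hJ : ∀ g ∈ G, ∀ k ∈ J, g * k * g⁻¹ ∈ J) {U : ∀ n, Set (X n)}
    (hU : fib (on (cyc 0 1 2) U) ∈ J) :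
    fib (on (cyc 0 1 2) fun n => {x | (γ n)⁻¹ x ∈ U n}) ∈ J := by
  obtain ⟨Λ, h1, h2, h3⟩ := hγ 0 (by decide)
  obtain ⟨Λ', h1', h2', h3'⟩ := hγ 1 (by decide)
  obtain ⟨Λ'', h1'', h2'', h3''⟩ := hγ 2 (by decide)
  set M := Λ * Λ' * Λ'' with hM
  have hMG : lev M ∈ G := by rw [hM, map_mul, map_mul]; exact mul_mem (mul_mem h1 h1') h1''
  have m0 : M 0 = γ := by
    simp [hM, h2, h3' 0 (by decide) (by decide), h3'' 0 (by decide) (by decide)]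
  have m1 : M 1 = γ := by
    simp [hM, h2', h3 1 (by decide) (by decide), h3'' 1 (by decide) (by decide)]
  have m2 : M 2 = γ := by
    simp [hM, h2'', h3 2 (by decide) (by decide), h3' 2 (by decide) (by decide)]
  convert hJ _ hMG _ hU using 1
  rw [eq_mul_inv_iff_mul_eq]
  ext1 n
  ext1 ⟨x, l⟩
  simp only [Pi.mul_apply, Perm.mul_apply, fib_apply, lev_apply, on, Set.mem_ofPred_eq]
  have : l = 0 ∨ l = 1 ∨ l = 2 ∨ cyc 0 1 2 l = l := by revert l; decide
  have c0 : cyc 0 1 2 0 = 1 := by decide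
  have c1 : cyc 0 1 2 1 = 2 := by decide
  have c2 : cyc 0 1 2 2 = 0 := by decide
  rcases this with rfl | rfl | rfl | h
  · by_cases hx : x ∈ U n <;> simp [m0, m1, hx, c0]
  · by_cases hx : x ∈ U n <;> simp [m1, m2, hx, c1]
  · by_cases hx : x ∈ U n <;> simp [m0, m2, hx, c2]
  · split_ifs <;> simp [h]

open scoped commutatorElement

lemma commutator_mem_left (hJ : ∀ g ∈ G, ∀ k ∈ J, g * k * g⁻¹ ∈ J)
    {a b : ∀ n, Perm (X n × Fin 6)} (ha : a ∈ J) (hb : b ∈ G) : ⁅a, b⁆ ∈ J := by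
  rw [commutatorElement_def, mul_assoc, mul_assoc]
  exact J.mul_mem ha (by simpa [mul_assoc] using hJ b hb _ (J.inv_mem ha))

lemma fib_conj_mem (hJ : ∀ g ∈ G, ∀ k ∈ J, g * k * g⁻¹ ∈ J) {α c c' : Perm (Fin 6)}
    (hα : lvl X α ∈ G) (h : α * c * α⁻¹ = c') {U : ∀ n, Set (X n)} (hU : fib (on c U) ∈ J) :
    fib (on c' U) ∈ J := by
  rw [← h, ← lvl_conj_fib]
  exact hJ _ hα _ hU

lemma conj_cyc_012 :
    (cyc 0 1 2 * cyc 2 3 4 * (cyc 0 1 2 * cyc 2 3 4)) * cyc 0 1 2 *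
      (cyc 0 1 2 * cyc 2 3 4 * (cyc 0 1 2 * cyc 2 3 4))⁻¹ = cyc 2 3 4 := by decide

lemma fib_cyc_234_mem (h0 : lvl X (cyc 0 1 2) ∈ G) (h1 : lvl X (cyc 2 3 4) ∈ G)
    (hJ : ∀ g ∈ G, ∀ k ∈ J, g * k * g⁻¹ ∈ J) {U : ∀ n, Set (X n)}
    (hU : fib (on (cyc 0 1 2) U) ∈ J) : fib (on (cyc 2 3 4) U) ∈ J :=
  fib_conj_mem hJ (by simp only [map_mul]; exact mul_mem (mul_mem h0 h1) (mul_mem h0 h1))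
    conj_cyc_012 hU

lemma fib_of_commutator_mem (h0 : lvl X (cyc 0 1 2) ∈ G) (h1 : lvl X (cyc 2 3 4) ∈ G)
    (hJ : ∀ g ∈ G, ∀ k ∈ J, g * k * g⁻¹ ∈ J) {U : ∀ n, Set (X n)}
    (hU : fib (on ⁅cyc 0 1 2, cyc 2 3 4⁆ U) ∈ J) : fib (on (cyc 0 1 2) U) ∈ J :=
  fib_conj_mem hJ (α := cyc 2 3 4 * cyc 2 3 4 * cyc 0 1 2)
    (by simp only [map_mul]; exact mul_mem (mul_mem h1 h1) h0) (by decide) hU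

lemma fib_inter_mem (h0 : lvl X (cyc 0 1 2) ∈ G) (h1 : lvl X (cyc 2 3 4) ∈ G)
    (hJ : ∀ g ∈ G, ∀ k ∈ J, g * k * g⁻¹ ∈ J) {U W : ∀ n, Set (X n)}
    (hU : fib (on (cyc 0 1 2) U) ∈ J) (hW : fib (on (cyc 0 1 2) W) ∈ G) :
    fib (on (cyc 0 1 2) fun n => U n ∩ W n) ∈ J := by
  refine fib_of_commutator_mem h0 h1 hJ ?_
  rw [← commutator_fib]
  exact commutator_mem_left hJ hU
    (fib_cyc_234_mem h0 h1 (fun g hg k hk => mul_mem (mul_mem hg hk) (inv_mem hg)) hW)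

lemma fib_compl_mem (h0 : lvl X (cyc 0 1 2) ∈ G) {U : ∀ n, Set (X n)}
    (hU : fib (on (cyc 0 1 2) U) ∈ G) : fib (on (cyc 0 1 2) fun n => (U n)ᶜ) ∈ G := by
  have := fib_union (cyc 0 1 2) U (fun n => (U n)ᶜ) fun n => disjoint_compl_right
  simp only [Set.union_compl_self, fib_on_univ] at this
  rw [← eq_inv_mul_iff_mul_eq] at this
  rw [this]
  exact mul_mem (inv_mem hU) h0

lemma fib_union_mem (h0 : lvl X (cyc 0 1 2) ∈ G) (h1 : lvl X (cyc 2 3 4) ∈ G) (hJG : J ≤ G)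
    (hJ : ∀ g ∈ G, ∀ k ∈ J, g * k * g⁻¹ ∈ J) {U W : ∀ n, Set (X n)}
    (hU : fib (on (cyc 0 1 2) U) ∈ J) (hW : fib (on (cyc 0 1 2) W) ∈ J) :
    fib (on (cyc 0 1 2) fun n => U n ∪ W n) ∈ J := by
  have h := J.mul_mem hU (fib_inter_mem h0 h1 hJ hW (fib_compl_mem h0 (hJG hU)))
  rw [fib_union _ _ _ fun n => Set.disjoint_left.2 fun x hx hx' => hx'.2 hx] at h
  have e : (fun n => U n ∪ W n) = fun n => U n ∪ W n ∩ (U n)ᶜ := by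
    ext n x; by_cases h : x ∈ U n <;> simp [h]
  rwa [e]

/-- From two elements congruent modulo `J` one obtains a three-cycle over the set difference. -/
lemma fib_diff_mem (h0 : lvl X (cyc 0 1 2) ∈ G) (h1 : lvl X (cyc 2 3 4) ∈ G)
    (hJ : ∀ g ∈ G, ∀ k ∈ J, g * k * g⁻¹ ∈ J) {U W : ∀ n, Set (X n)}
    (hU : fib (on (cyc 0 1 2) U) ∈ G) (hW : fib (on (cyc 0 1 2) W) ∈ G)
    (h : (fib (on (cyc 0 1 2) U))⁻¹ * fib (on (cyc 0 1 2) W) ∈ J) :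
    fib (on (cyc 0 1 2) fun n => W n ∩ (U n)ᶜ) ∈ J := by
  have hG : ∀ g ∈ G, ∀ k ∈ G, g * k * g⁻¹ ∈ G := fun g hg k hk =>
    mul_mem (mul_mem hg hk) (inv_mem hg)
  have h2 := fib_cyc_234_mem h0 h1 hG (fib_inter_mem h0 h1 hG hW (fib_compl_mem h0 hU))
  refine fib_of_commutator_mem h0 h1 hJ ?_
  convert commutator_mem_left hJ h h2 using 1
  rw [← map_inv, ← map_mul, ← map_commutatorElement]
  congr 1
  ext n x : 2
  by_cases h : x ∈ U n <;> by_cases h' : x ∈ W n <;>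
    simp [on, h, h', commutatorElement_def]

end Fibres

section Generators

/-- The base of the fibration. -/
abbrev Base (d : ℕ → ℕ) (n : ℕ) : Type := (ZMod (n + 1) → ZMod 2) × ZMod (d n + 1)

variable {d : ℕ → ℕ}

/-- The cyclic shift of the binary coordinates. -/
def shift (n : ℕ) : Perm (Base d n) where
  toFun x := (fun j => x.1 (j - 1), x.2)
  invFun x := (fun j => x.1 (j + 1), x.2)
  left_inv x := by simp
  right_inv x := by simp

/-- The change of one binary coordinate. -/
def flipAt (i : ℕ) (n : ℕ) : Perm (Base d n) := Equiv.addLeft (Pi.single (i : ZMod (n + 1)) 1, 0)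

/-- The rotation of the cyclic factor of the base. -/
def rotation (n : ℕ) : Perm (Base d n) := Equiv.addLeft (0, 1)

/-- The points whose `i`-th binary coordinate vanishes. -/
def coord (i : ℕ) (n : ℕ) : Set (Base d n) := {x | x.1 i = 0}

lemma shift_pow_apply (i n : ℕ) (x : Base d n) :
    ((shift : ∀ n, Perm (Base d n)) ^ i) n x = (fun j => x.1 (j - i), x.2) := by
  induction i with
  | zero => simp
  | succ i ih =>
    rw [pow_succ', Pi.mul_apply, Perm.mul_apply, ih]
    simp [shift, sub_sub, add_comm]

lemma shift_pow_inv_apply (i n : ℕ) (x : Base d n) :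
    (((shift : ∀ n, Perm (Base d n)) ^ i) n)⁻¹ x = (fun j => x.1 (j + i), x.2) := by
  rw [Perm.inv_eq_iff_eq, shift_pow_apply]
  simp

/-- The generators of the frame. -/
noncomputable def gens (Y : ∀ n, Set (Base d n)) : Fin 10 → ∀ n, Perm (Base d n × Fin 6) :=
  ![lvl _ (cyc 0 1 2), lvl _ (cyc 2 3 4), twist shift, twist (flipAt 0), twist rotation,
    fib (on (cyc 0 1 2) (coord 0)), fib (on (cyc 0 1 2) fun _ => {0}),
    fib (on (cyc 0 1 5) Y), 1, 1]

variable (Y : ∀ n, Set (Base d n))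

/-- The group generated by `gens Y`. -/
noncomputable def genGroup : Subgroup (∀ n, Perm (Base d n × Fin 6)) :=
  Subgroup.closure (Set.range (gens Y))

lemma gens_mem (i : Fin 10) : gens Y i ∈ genGroup Y := Subgroup.subset_closure ⟨i, rfl⟩

lemma lvl_012_mem : lvl _ (cyc 0 1 2) ∈ genGroup Y := gens_mem Y 0

lemma lvl_234_mem : lvl _ (cyc 2 3 4) ∈ genGroup Y := gens_mem Y 1

lemma genGroup_conj : ∀ g ∈ genGroup Y, ∀ k ∈ genGroup Y, g * k * g⁻¹ ∈ genGroup Y :=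
  fun _ hg _ hk => mul_mem (mul_mem hg hk) (inv_mem hg)

lemma shift_mem : shift ∈ translations (genGroup Y) :=
  twist_mem_translations (lvl_012_mem Y) (lvl_234_mem Y) (gens_mem Y 2)

lemma rotation_mem : rotation ∈ translations (genGroup Y) :=
  twist_mem_translations (lvl_012_mem Y) (lvl_234_mem Y) (gens_mem Y 4)

lemma flipAt_mem (i : ℕ) : flipAt i ∈ translations (genGroup Y) := by
  have h0 : flipAt 0 ∈ translations (genGroup Y) :=
    twist_mem_translations (lvl_012_mem Y) (lvl_234_mem Y) (gens_mem Y 3)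
  have hs := pow_mem (shift_mem Y) i
  convert mul_mem (mul_mem hs h0) (inv_mem hs) using 1
  rw [eq_mul_inv_iff_mul_eq]
  ext1 n
  ext1 x
  rw [Pi.mul_apply, Pi.mul_apply, Perm.mul_apply, Perm.mul_apply, shift_pow_apply, shift_pow_apply]
  refine Prod.ext ?_ rfl
  ext1 j
  simp only [flipAt, Equiv.coe_addLeft, Prod.fst_add, Pi.add_apply, Pi.single_apply, Nat.cast_zero,
    sub_eq_zero]

lemma coord_mem (i : ℕ) : fib (on (cyc 0 1 2) (coord i)) ∈ genGroup Y := by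
  convert conj_mem_translate (pow_mem (shift_mem Y) i) (genGroup_conj Y)
    (show fib (on (cyc 0 1 2) (coord 0)) ∈ genGroup Y from gens_mem Y 5) using 3
  ext1 n
  ext1 x
  change _ ↔ ((((shift : ∀ n, Perm (Base d n)) ^ i) n)⁻¹ x).1 0 = 0
  rw [shift_pow_inv_apply]
  simp [coord]

lemma origin_mem : fib (on (cyc 0 1 2) fun n => {(0 : Base d n)}) ∈ genGroup Y := gens_mem Y 6

lemma extra_mem : fib (on (cyc 0 1 5) Y) ∈ genGroup Y := gens_mem Y 7

lemma flipAt_inv_apply (i n : ℕ) (x : Base d n) :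
    (flipAt i n)⁻¹ x = (-Pi.single (i : ZMod (n + 1)) 1, 0) + x := by
  rw [Perm.inv_eq_iff_eq]
  refine Prod.ext ?_ ?_
  · exact (add_neg_cancel_left (Pi.single (i : ZMod (n + 1)) 1) x.1).symm
  · simp [flipAt]

/-- The cylinder where the coordinates `j` and `i` are `0` and `1`, together with its translates by
the changes of these two coordinates, covers the whole base. -/
lemma cylinder_translates_cover (i j n : ℕ) (hij : (i : ZMod (n + 1)) ≠ j) (x : Base d n) :
    ((x ∈ coord j n ∩ (coord i n)ᶜ) ∨ (flipAt i n)⁻¹ x ∈ coord j n ∩ (coord i n)ᶜ) ∨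
    (((flipAt j n)⁻¹ x ∈ coord j n ∩ (coord i n)ᶜ) ∨
      (flipAt i n)⁻¹ ((flipAt j n)⁻¹ x) ∈ coord j n ∩ (coord i n)ᶜ) := by
  have key : ∀ a b : ZMod 2, ((b = 0 ∧ ¬ a = 0) ∨ (b = 0 ∧ ¬ -1 + a = 0)) ∨
    ((-1 + b = 0 ∧ ¬ a = 0) ∨ (-1 + b = 0 ∧ ¬ -1 + a = 0)) := by decide
  simpa [coord, flipAt_inv_apply, Pi.single_apply, hij, hij.symm] using key (x.1 i) (x.1 j)

lemma natCast_zmod_ne {i j n : ℕ} (hij : i ≠ j) (hi : i ≤ n) (hj : j ≤ n) :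
    (i : ZMod (n + 1)) ≠ j := by
  rw [Ne, ZMod.natCast_eq_natCast_iff', Nat.mod_eq_of_lt (by omega), Nat.mod_eq_of_lt (by omega)]
  exact hij

open scoped commutatorElement

/-- The generating group modulo the restricted direct sum has no nontrivial finite quotient. -/
theorem gens_mem_of_finite_quotient {J : Subgroup (∀ n, Perm (Base d n × Fin 6))}
    (hJG : J ≤ genGroup Y) (hJ : ∀ g ∈ genGroup Y, ∀ k ∈ J, g * k * g⁻¹ ∈ J)
    (hfin : ∀ y ∈ genGroup Y, {n | y n ≠ 1}.Finite → y ∈ J)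
    (hpig : ∀ s : ℕ → ∀ n, Perm (Base d n × Fin 6), (∀ i, s i ∈ genGroup Y) →
      ∃ i j, i ≠ j ∧ (s i)⁻¹ * s j ∈ J) (m : Fin 10) : gens Y m ∈ J := by
  have h0 := lvl_012_mem Y
  have h1 := lvl_234_mem Y
  obtain ⟨i, j, hij, h⟩ := hpig _ (coord_mem Y)
  have hW := fib_diff_mem h0 h1 hJ (coord_mem Y i) (coord_mem Y j) h
  have hV := fib_union_mem h0 h1 hJG hJ hW (conj_mem_translate (flipAt_mem Y i) hJ hW)
  have hU := fib_union_mem h0 h1 hJG hJ hV (conj_mem_translate (flipAt_mem Y j) hJ hV)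
  have a0 : lvl _ (cyc 0 1 2) ∈ J := by
    have := hfin _ (mul_mem h0 (inv_mem (hJG hU))) ?_
    · simpa using mul_mem this hU
    · refine (Set.finite_lt_nat (max i j)).subset fun n hn => ?_
      by_contra hlt
      refine hn ?_
      simp only [Set.mem_ofPred_eq, not_lt, max_le_iff] at hlt
      rw [← fib_on_univ, Pi.mul_apply, Pi.inv_apply, mul_inv_eq_one]
      ext1 z
      have := cylinder_translates_cover i j n (natCast_zmod_ne hij hlt.1 hlt.2) z.1
      rw [fib_apply, fib_apply, on, on, if_pos (Set.mem_univ _)]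
      split_ifs with hh
      · rfl
      · exact absurd this hh
  have a1 : lvl _ (cyc 2 3 4) ∈ J := by
    rw [← fib_on_univ] at a0 ⊢
    exact fib_cyc_234_mem h0 h1 hJ a0
  have atw : ∀ γ, twist γ ∈ genGroup Y → twist γ ∈ J := by
    intro γ hγ
    have e : single 4 γ * lvl _ (cyc 0 1 2) * (single 4 γ)⁻¹ = lvl _ (cyc 0 1 2) := by
      rw [mul_inv_eq_iff_eq_mul]
      ext1 n
      ext1 ⟨x, l⟩
      simp only [Pi.mul_apply, Perm.mul_apply, lvl_apply, single, lev_apply]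
      by_cases hl : l = 4
      · subst hl; simp [show cyc 0 1 2 4 = 4 by decide]
      · have hl' : cyc 0 1 2 l ≠ 4 := by revert l; decide
        simp [Pi.mulSingle_eq_of_ne hl, Pi.mulSingle_eq_of_ne hl']
    have e2 : twist γ = (lvl _ (cyc 0 1 2) * twist γ * (lvl _ (cyc 0 1 2) * twist γ)) *
        lvl _ (cyc 0 1 2) * (lvl _ (cyc 0 1 2) * twist γ * (lvl _ (cyc 0 1 2) * twist γ))⁻¹ := by
      have := congrArg (fun g => MulAut.conj (single 4 γ) (lvl _ g)) conj_cyc_012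
      simp only [map_mul, map_inv, MulAut.conj_apply, e] at this
      exact this.symm
    rw [e2]
    exact hJ _ (mul_mem (mul_mem h0 hγ) (mul_mem h0 hγ)) _ a0
  have ain : ∀ U : ∀ n, Set (Base d n), fib (on (cyc 0 1 2) U) ∈ genGroup Y →
      fib (on (cyc 0 1 2) U) ∈ J := by
    intro U hU
    rw [← fib_on_univ] at a0
    simpa using fib_inter_mem h0 h1 hJ a0 hU
  have alast : fib (on (cyc 0 1 5) Y) ∈ J := by
    have hc : lvl _ (cyc 0 1 2 * cyc 0 1 2 * cyc 2 3 4 * cyc 0 1 2) ∈ J := by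
      simp only [map_mul]
      exact mul_mem (mul_mem (mul_mem a0 a0) a1) a0
    have := commutator_mem_left hJ hc (extra_mem Y)
    rw [← fib_on_univ, commutator_fib] at this
    simp only [Set.univ_inter] at this
    refine fib_conj_mem hJ (α := cyc 0 1 2 * cyc 0 1 2 * (cyc 2 3 4 * cyc 2 3 4)) ?_
      (by set_option maxRecDepth 10000 in decide) this
    simp only [map_mul]
    exact mul_mem (mul_mem h0 h0) (mul_mem h1 h1)
  match m with
  | 0 => exact a0
  | 1 => exact a1
  | 2 => exact atw _ (gens_mem Y 2)
  | 3 => exact atw _ (gens_mem Y 3)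
  | 4 => exact atw _ (gens_mem Y 4)
  | 5 => exact ain _ (gens_mem Y 5)
  | 6 => exact ain _ (gens_mem Y 6)
  | 7 => exact alast
  | 8 => exact one_mem J
  | 9 => exact one_mem J

/-- Every translation of a single base is induced by `translations`. -/
lemma exists_translation (n : ℕ) (v : Base d n) :
    ∃ γ ∈ translations (genGroup Y), ∀ x, γ n x = v + x := by
  let T : AddSubgroup (Base d n) :=
    { carrier := {v | ∃ γ ∈ translations (genGroup Y), ∀ x, γ n x = v + x}
      zero_mem' := ⟨1, one_mem _, by simp⟩
      add_mem' := by
        rintro a b ⟨γ, h, h'⟩ ⟨δ, k, k'⟩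
        exact ⟨γ * δ, mul_mem h k, by simp [h', k', add_assoc]⟩
      neg_mem' := by
        rintro a ⟨γ, h, h'⟩
        refine ⟨γ⁻¹, inv_mem h, fun x => ?_⟩
        rw [Pi.inv_apply, Perm.inv_eq_iff_eq, h']
        simp }
  have h1 : ∀ i : ZMod (n + 1), (Pi.single i 1, 0) ∈ T := fun i => by
    refine ⟨flipAt i.val, flipAt_mem Y _, fun x => ?_⟩
    simp [flipAt]
  have h3 : ∀ (i : ZMod (n + 1)) (a : ZMod 2), (Pi.single i a, 0) ∈ T := fun i a => by
    have : a = 0 ∨ a = 1 := by revert a; decide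
    rcases this with rfl | rfl
    · rw [Pi.single_zero]; exact T.zero_mem
    · exact h1 i
  have h2 : ((0, 1) : Base d n) ∈ T := ⟨rotation, rotation_mem Y, fun x => rfl⟩
  obtain ⟨v, z⟩ := v
  have e : ((v, z) : Base d n) =
      ∑ i, ((Pi.single i (v i), 0) : Base d n) + z.val • ((0, 1) : Base d n) := by
    refine Prod.ext ?_ ?_
    · simp [Prod.fst_sum, Finset.univ_sum_single]
    · simp [Prod.snd_sum]
  change (v, z) ∈ T
  rw [e]
  exact add_mem (sum_mem fun i _ => h3 i _) (nsmul_mem h2 _)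

lemma exists_fix_fix_move (n : ℕ) (z : Base d n × Fin 6) (hz : z.2 = 5 → z.1 ∈ Y n)
    (z0 : z ≠ (0, 0)) (z1 : z ≠ (0, 1)) :
    ∃ g ∈ genGroup Y, g n (0, 0) = (0, 0) ∧ g n (0, 1) = (0, 1) ∧ g n (0, 2) = z := by
  obtain ⟨x, l⟩ := z
  obtain ⟨γ, hγ, hx⟩ := exists_translation Y n x
  obtain ⟨Λ, hΛ, e2, el⟩ := hγ 2 (by decide)
  have step : ∀ g ∈ genGroup Y, g n (0, 0) = (0, 0) → g n (0, 1) = (0, 1) → g n (x, 2) = (x, l) →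
      ∃ g ∈ genGroup Y, g n (0, 0) = (0, 0) ∧ g n (0, 1) = (0, 1) ∧ g n (0, 2) = (x, l) := by
    intro g hg g0 g1 g2
    refine ⟨g * lev Λ, mul_mem hg hΛ, ?_, ?_, ?_⟩
    · simp [lev_apply, el 0 (by decide) (by decide), g0]
    · simp [lev_apply, el 1 (by decide) (by decide), g1]
    · simp [lev_apply, e2, hx, g2]
  have h0 := lvl_012_mem Y
  have h1 := lvl_234_mem Y
  have hl : ∀ l : Fin 6, l = 0 ∨ l = 1 ∨ l = 2 ∨ l = 3 ∨ l = 4 ∨ l = 5 := by decide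
  have ho := fib_compl_mem h0 (origin_mem Y)
  rcases hl l with rfl | rfl | rfl | rfl | rfl | rfl
  · have hx0 : x ≠ 0 := fun h => z0 (by rw [h])
    refine step _ ho ?_ ?_ ?_ <;> simp [fib_apply, on, hx0]
    decide
  · have hx0 : x ≠ 0 := fun h => z1 (by rw [h])
    refine step _ (mul_mem ho ho) ?_ ?_ ?_ <;> simp [fib_apply, on, hx0]
    decide
  · exact step 1 (one_mem _) rfl rfl rfl
  · exact step _ h1 (by simp [lvl_apply]; decide) (by simp [lvl_apply]; decide)
      (by simp [lvl_apply]; decide)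
  · exact step _ (mul_mem h1 h1) (by simp [lvl_apply]; decide) (by simp [lvl_apply]; decide)
      (by simp [lvl_apply]; decide)
  · have hY : fib (on (cyc 2 3 5) Y) ∈ genGroup Y := by
      refine fib_conj_mem (genGroup_conj Y) (α := cyc 0 1 2 * cyc 2 3 4 * cyc 0 1 2) ?_
        (by decide) (extra_mem Y)
      simp only [map_mul]
      exact mul_mem (mul_mem h0 h1) h0
    have hxY : x ∈ Y n := hz rfl
    have c0 : cyc 2 3 5 0 = 0 := by decide
    have c1 : cyc 2 3 5 1 = 1 := by decide
    refine step _ (mul_mem hY hY) ?_ ?_ ?_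
    · by_cases h : (0 : Base d n) ∈ Y n <;> simp [fib_apply, on, h, c0]
    · by_cases h : (0 : Base d n) ∈ Y n <;> simp [fib_apply, on, h, c1]
    · simp [fib_apply, on, hxY]; decide

end Generators

section Embedding

/-- A group of permutations containing the three-cycles through two given points contains the
alternating group. -/
lemma mem_of_sign_eq_one {α : Type*} [Fintype α] [DecidableEq α] (N : Subgroup (Perm α)) {a b : α}
    (h : ∀ w, w ≠ a → w ≠ b → swap a b * swap b w ∈ N) (π : Perm α) (hπ : Perm.sign π = 1) :
    π ∈ N := by
  have inv : ∀ x y, swap a b * swap x y ∈ N → swap x y * swap a b ∈ N := fun x y hxy => by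
    simpa using N.inv_mem hxy
  have hA : ∀ w, w ≠ a → swap a b * swap a w ∈ N := fun w hw => by
    by_cases hb : w = b
    · subst hb; simp
    · have e : swap a b * swap a w = swap b w * swap a b := by
        rw [mul_swap_eq_swap_mul, swap_apply_left, swap_apply_of_ne_of_ne hw hb]
      rw [e]
      exact inv _ _ (h w hw hb)
  have key : ∀ x y, x ≠ y → swap a b * swap x y ∈ N := fun x y hxy => by
    by_cases hx : x = a
    · subst hx; exact hA y hxy.symm
    by_cases hy : y = a
    · subst hy; rw [swap_comm x y]; exact hA x hx
    have e : swap x y = swap a x * swap a y * swap a x := by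
      have := swap_apply_apply (swap a x) a y
      rwa [swap_apply_left, swap_apply_of_ne_of_ne hy hxy.symm, swap_inv] at this
    rw [e]
    simpa [mul_assoc] using mul_mem (mul_mem (hA x hx) (inv _ _ (hA y hy))) (hA x hx)
  have main : ∀ π : Perm α, (Perm.sign π = 1 → π ∈ N) ∧
      (Perm.sign π = -1 → swap a b * π ∈ N) := fun π => by
    induction π using Perm.swap_induction_on with
    | one => exact ⟨fun _ => N.one_mem, fun h => by
      rw [Perm.sign_one] at h; exact absurd h (by decide)⟩
    | swap_mul f x y hxy ih =>
      simp only [Perm.sign_mul, Perm.sign_swap hxy, neg_mul, one_mul, neg_inj]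
      refine ⟨fun hf => ?_, fun hf => ?_⟩
      · simpa [mul_assoc] using mul_mem (inv _ _ (key x y hxy)) (ih.2 (by rw [← hf, neg_neg]))
      · rw [← mul_assoc]
        exact mul_mem (key x y hxy) (ih.1 hf)
  exact (main π).1 hπ

lemma viaEmbeddingHom_swap {α β : Type*} [DecidableEq α] [DecidableEq β] (ι : α ↪ β) (a b : α) :
    Perm.viaEmbeddingHom ι (swap a b) = swap (ι a) (ι b) := by
  ext1 z
  rw [Perm.viaEmbeddingHom_apply]
  by_cases hz : z ∈ Set.range ι
  · obtain ⟨c, rfl⟩ := hz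
    rw [Perm.viaEmbedding_apply, ι.injective.swap_apply]
  · rw [Perm.viaEmbedding_apply_of_notMem _ _ _ hz, swap_apply_of_ne_of_ne]
    · rintro rfl; exact hz ⟨a, rfl⟩
    · rintro rfl; exact hz ⟨b, rfl⟩

lemma exists_viaEmbeddingHom_eq {α β : Type*} (ι : α ↪ β) (σ : Perm β)
    (h : ∀ z ∉ Set.range ι, σ z = z) : ∃ π, Perm.viaEmbeddingHom ι π = σ := by
  have hs : ∀ z, σ z ∈ Set.range ι ↔ z ∈ Set.range ι := fun z => by
    refine ⟨fun hz => ?_, fun hz => ?_⟩ <;> by_contra hn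
    · exact hn (h z hn ▸ hz)
    · exact hn ((σ.injective (h _ hn)).symm ▸ hz)
  refine ⟨(Equiv.ofInjective ι ι.injective).symm.permCongr (σ.subtypePerm hs), ?_⟩
  ext1 z
  rw [Perm.viaEmbeddingHom_apply]
  by_cases hz : z ∈ Set.range ι
  · obtain ⟨c, rfl⟩ := hz
    rw [Perm.viaEmbedding_apply]
    exact congrArg Subtype.val ((Equiv.ofInjective ι ι.injective).apply_symm_apply _)
  · rw [Perm.viaEmbedding_apply_of_notMem _ _ _ hz, h z hz]

variable {d N : ℕ → ℕ} (Y : ∀ n, Set (Base d n)) (ι : ∀ n, Fin (N n) ↪ Base d n × Fin 6)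

/-- The embedding of a product of alternating groups induced by embeddings of the points. -/
noncomputable def emb :
    (∀ n, alternatingGroup (Fin (N n))) →* ∀ n, Perm (Base d n × Fin 6) :=
  MonoidHom.pi fun n => (Perm.viaEmbeddingHom (ι n)).comp
    ((alternatingGroup (Fin (N n))).subtype.comp (Pi.evalMonoidHom _ n))

lemma emb_apply (y : ∀ n, alternatingGroup (Fin (N n))) (n : ℕ) :
    emb ι y n = Perm.viaEmbeddingHom (ι n) (y n) := rfl

lemma emb_apply_eq_one_iff (y : ∀ n, alternatingGroup (Fin (N n))) (n : ℕ) :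
    emb ι y n = 1 ↔ y n = 1 := by
  rw [emb_apply, map_eq_one_iff _ (Perm.viaEmbeddingHom_injective _), OneMemClass.coe_eq_one]

lemma emb_injective : Function.Injective (emb ι) := by
  rw [injective_iff_map_eq_one]
  intro y hy
  ext1 n
  exact (emb_apply_eq_one_iff ι y n).1 (congrFun hy n)

lemma emb_mulSingle (n : ℕ) (a : alternatingGroup (Fin (N n))) :
    emb ι (Pi.mulSingle n a) = Pi.mulSingle n (Perm.viaEmbeddingHom (ι n) a) := by
  ext1 j
  by_cases h : j = n
  · subst h; simp [emb_apply]
  · simp [emb_apply, Pi.mulSingle_eq_of_ne h]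

lemma cyc_pow_three : cyc 0 1 2 ^ 3 = 1 ∧ cyc 2 3 4 ^ 3 = 1 ∧ cyc 0 1 5 ^ 3 = 1 := by decide

lemma lvl_pow_three {c : Perm (Fin 6)} (hc : c ^ 3 = 1) : lvl (Base d) c ^ 3 = 1 := by
  rw [← map_pow, hc, map_one]

lemma twist_pow_three (γ : ∀ n, Perm (Base d n)) : twist γ ^ 3 = 1 := by
  rw [twist, conj_pow, lvl_pow_three cyc_pow_three.2.1]
  simp

lemma gens_pow_three (i : Fin 10) : gens Y i ^ 3 = 1 :=
  match i with
  | 0 => lvl_pow_three cyc_pow_three.1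
  | 1 => lvl_pow_three cyc_pow_three.2.1
  | 2 => twist_pow_three _
  | 3 => twist_pow_three _
  | 4 => twist_pow_three _
  | 5 => fib_on_pow_three _ cyc_pow_three.1 _
  | 6 => fib_on_pow_three _ cyc_pow_three.1 _
  | 7 => fib_on_pow_three _ cyc_pow_three.2.2 _
  | 8 => one_pow 3
  | 9 => one_pow 3

lemma lvl_fix {c : Perm (Fin 6)} (hc : c 5 = 5) (n : ℕ) (x : Base d n) :
    lvl (Base d) c n (x, 5) = (x, 5) := by
  rw [lvl_apply, hc]

lemma twist_fix (γ : ∀ n, Perm (Base d n)) (n : ℕ) (x : Base d n) :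
    twist γ n (x, 5) = (x, 5) := by
  have h : single 4 γ n (x, 5) = (x, 5) := by
    rw [single, lev_apply, Pi.mulSingle_eq_of_ne (show (5 : Fin 6) ≠ 4 by decide)]; rfl
  have h' : (single 4 γ n)⁻¹ (x, 5) = (x, 5) := by rw [Perm.inv_eq_iff_eq, h]
  rw [twist, Pi.mul_apply, Pi.mul_apply, Pi.inv_apply, Perm.mul_apply, Perm.mul_apply, h',
    lvl_fix (by decide), h]

lemma fib_on_fix {c : Perm (Fin 6)} {U : ∀ n, Set (Base d n)} {n : ℕ} {x : Base d n}
    (h : x ∈ U n → c 5 = 5) : fib (on c U) n (x, 5) = (x, 5) := by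
  rw [fib_apply, on]
  split_ifs with hx
  · rw [h hx]
  · rfl

lemma gens_fix (i : Fin 10) (n : ℕ) (x : Base d n) (hx : x ∉ Y n) : gens Y i n (x, 5) = (x, 5) :=
  match i with
  | 0 => lvl_fix (by decide) n x
  | 1 => lvl_fix (by decide) n x
  | 2 => twist_fix _ n x
  | 3 => twist_fix _ n x
  | 4 => twist_fix _ n x
  | 5 => fib_on_fix fun _ => by decide
  | 6 => fib_on_fix fun _ => by decide
  | 7 => fib_on_fix fun h => absurd h hx
  | 8 => rfl
  | 9 => rfl

variable {ι}

lemma exists_emb_eq_gens (hι : ∀ n z, z ∈ Set.range (ι n) ↔ (z.2 = 5 → z.1 ∈ Y n)) (i : Fin 10) :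
    ∃ x, emb ι x = gens Y i := by
  have h : ∀ n, ∃ π, Perm.viaEmbeddingHom (ι n) π = gens Y i n := fun n => by
    refine exists_viaEmbeddingHom_eq (ι n) (gens Y i n) ?_
    rintro ⟨x, l⟩ hz
    rw [hι, Classical.not_imp] at hz
    obtain ⟨rfl, hx⟩ : l = 5 ∧ x ∉ Y n := hz
    exact gens_fix Y i n x hx
  choose π hπ using h
  refine ⟨fun n => ⟨π n, ?_⟩, funext hπ⟩
  have h3 : π n ^ 3 = 1 := Perm.viaEmbeddingHom_injective (ι n) (by
    rw [map_pow, hπ, map_one]; exact congrFun (gens_pow_three Y i) n)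
  have hs : Perm.sign (π n) ^ 3 = 1 := by rw [← map_pow, h3, map_one]
  rw [Perm.mem_alternatingGroup]
  rcases Int.units_eq_one_or (Perm.sign (π n)) with h | h
  · exact h
  · rw [h] at hs; exact absurd hs (by decide)

/-- An element acting as a three-cycle over the origin of one base, and trivially on all later
factors. -/
lemma exists_mem_genGroup (n : ℕ) : ∃ w ∈ genGroup Y,
    w n = swap (0, 0) (0, 1) * swap (0, 1) (0, 2) ∧ ∀ j, n < j → w j = 1 := by
  set γ : ∀ n, Perm (Base d n) := flipAt 0 * flipAt (n + 1) with hγ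
  have hγ0 : ∀ j, γ j 0 = (Pi.single ((0 : ℕ) : ZMod (j + 1)) 1 +
      Pi.single ((n + 1 : ℕ) : ZMod (j + 1)) 1, 0) := fun j => by
    simp [hγ, flipAt]
  refine ⟨_, fib_inter_mem (lvl_012_mem Y) (lvl_234_mem Y) (genGroup_conj Y) (origin_mem Y)
    (conj_mem_translate (mul_mem (flipAt_mem Y 0) (flipAt_mem Y (n + 1))) (genGroup_conj Y)
      (origin_mem Y)), ?_, fun j hj => ?_⟩
  · have h0 : γ n 0 = 0 := by
      rw [hγ0, ZMod.natCast_self, Nat.cast_zero, ← Pi.single_add]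
      exact Prod.ext (Pi.single_zero _) rfl
    ext1 ⟨x, l⟩
    rw [fib_apply, on, Perm.mul_apply]
    by_cases hx : x = 0
    · subst hx
      have h : Function.Injective fun l : Fin 6 => ((0 : Base d n), l) := Prod.mk_right_injective 0
      rw [if_pos ⟨rfl, (Perm.inv_eq_iff_eq.2 h0.symm : (γ n)⁻¹ 0 = 0)⟩, h.swap_apply,
        h.swap_apply]
      rfl
    · have h : ∀ k : Fin 6, (x, l) ≠ (0, k) := fun k hk => hx (congrArg Prod.fst hk)
      rw [if_neg fun h => hx h.1, swap_apply_of_ne_of_ne (h 1) (h 2),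
        swap_apply_of_ne_of_ne (h 0) (h 1)]
      rfl
  · ext1 ⟨x, l⟩
    rw [fib_apply, on, if_neg]
    · rfl
    · rintro ⟨hx, hx'⟩
      obtain rfl : x = 0 := hx
      have h1 : γ j 0 = 0 := (Perm.inv_eq_iff_eq.1 (hx' : (γ j)⁻¹ 0 = 0)).symm
      rw [hγ0] at h1
      have h2 := congrFun (congrArg Prod.fst h1) ((0 : ℕ) : ZMod (j + 1))
      have h3 := natCast_zmod_ne (n := j) (Nat.succ_ne_zero n).symm (Nat.zero_le j) hj
      simp only [Pi.add_apply, Pi.single_eq_same, Pi.single_eq_of_ne h3] at h2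
      exact absurd (show (1 + 0 : ZMod 2) = 0 from h2) (by decide)

lemma mulSingle_mem (hι : ∀ n z, z ∈ Set.range (ι n) ↔ (z.2 = 5 → z.1 ∈ Y n))
    {G : Subgroup (∀ n, alternatingGroup (Fin (N n)))} (hG : G.map (emb ι) = genGroup Y)
    (n : ℕ) : ∀ a, Pi.mulSingle n a ∈ G := by
  induction n using Nat.strong_induction_on with
  | _ n ih =>
    have hmem : ∀ y, y ∈ G ↔ emb ι y ∈ genGroup Y := fun y => by
      rw [← hG, Subgroup.mem_map_iff_mem (emb_injective ι)]
    obtain ⟨a, ha⟩ := (hι n (0, 0)).2 fun h => absurd (show (0 : Fin 6) = 5 from h) (by decide)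
    obtain ⟨b, hb⟩ := (hι n (0, 1)).2 fun h => absurd (show (1 : Fin 6) = 5 from h) (by decide)
    obtain ⟨w, hw, hwn, hwj⟩ := exists_mem_genGroup Y n
    obtain ⟨y, hy, rfl⟩ : w ∈ G.map (emb ι) := hG ▸ hw
    have hyn : Pi.mulSingle n (y n) ∈ G := by
      have h1 : tail n y * y⁻¹ ∈ G := by
        refine Submonoid.pi_mem_of_mulSingle_mem_aux (Finset.range n) _ (fun j hj => ?_) fun j hj =>
          ih j (Finset.mem_range.1 hj) _
        have := mt Finset.mem_range.2 hj
        simp [tail, this]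
      have h2 : Pi.mulSingle n (y n) = tail n y * y⁻¹ * y := by
        rw [inv_mul_cancel_right]
        ext1 j
        change _ = if j < n then 1 else y j
        rcases lt_trichotomy j n with h | rfl | h
        · rw [Pi.mulSingle_eq_of_ne h.ne, if_pos h]
        · rw [Pi.mulSingle_eq_same, if_neg (lt_irrefl _)]
        · rw [Pi.mulSingle_eq_of_ne h.ne', if_neg h.not_gt,
            (emb_apply_eq_one_iff ι y j).1 (hwj j h)]
      rw [h2]
      exact mul_mem h1 hy
    rw [hmem, emb_mulSingle, ← emb_apply, hwn] at hyn
    intro π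
    rw [hmem, emb_mulSingle]
    refine mem_of_sign_eq_one ((genGroup Y).comap
      ((MonoidHom.mulSingle _ n).comp (Perm.viaEmbeddingHom (ι n)))) (a := a) (b := b) ?_ π
      (Perm.mem_alternatingGroup.1 π.2)
    intro c hca hcb
    obtain ⟨g, hg, g0, g1, g2⟩ := exists_fix_fix_move Y n (ι n c) ((hι n _).1 ⟨c, rfl⟩)
      (ha ▸ (ι n).injective.ne hca) (hb ▸ (ι n).injective.ne hcb)
    have e : Perm.viaEmbeddingHom (ι n) (swap a b * swap b c) =
        g n * (swap (0, 0) (0, 1) * swap (0, 1) (0, 2)) * (g n)⁻¹ := by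
      rw [map_mul, viaEmbeddingHom_swap, viaEmbeddingHom_swap, ha, hb, ← conj_mul,
        ← swap_apply_apply, ← swap_apply_apply, g0, g1, g2]
    rw [Subgroup.mem_comap, MonoidHom.comp_apply, MonoidHom.mulSingle_apply, e]
    convert genGroup_conj Y g hg _ hyn using 1
    ext1 j
    by_cases hj : j = n
    · subst hj; simp
    · simp [Pi.mulSingle_eq_of_ne hj]

theorem exists_isFrame_of_range (hι : ∀ n z, z ∈ Set.range (ι n) ↔ (z.2 = 5 → z.1 ∈ Y n)) :
    ∃ x : Fin 10 → ∀ n, alternatingGroup (Fin (N n)),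
      IsFrame (Subgroup.closure (Set.range x)) := by
  choose x hx using exists_emb_eq_gens Y hι
  have hG : (Subgroup.closure (Set.range x)).map (emb ι) = genGroup Y := by
    rw [MonoidHom.map_closure, ← Set.range_comp, genGroup]
    exact congrArg (fun f => Subgroup.closure (Set.range f)) (funext hx)
  refine ⟨x, isFrame_closure_range x (fun y hy => ?_) fun K hK hconj hfin hpig i => ?_⟩
  · exact Submonoid.pi_mem_of_mulSingle_mem_aux hy.toFinset y
      (fun j hj => by simpa using hj) fun j _ => mulSingle_mem Y hι hG j _
  · rw [← Subgroup.mem_map_iff_mem (emb_injective ι), hx]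
    refine gens_mem_of_finite_quotient Y (hG ▸ Subgroup.map_mono hK) ?_ ?_ ?_ i
    · rw [← hG]
      rintro _ ⟨g, hg, rfl⟩ _ ⟨k, hk, rfl⟩
      exact ⟨_, hconj g hg k hk, by simp⟩
    · rw [← hG]
      rintro _ ⟨y, -, rfl⟩ hy
      exact ⟨y, hfin y (by simpa only [ne_eq, emb_apply_eq_one_iff] using hy), rfl⟩
    · rw [← hG]
      intro s hs
      choose t ht hts using hs
      obtain ⟨j, k, hjk, h⟩ := hpig t ht
      exact ⟨j, k, hjk, _, h, by simp [hts]⟩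

end Embedding

/-- A product of alternating groups of sufficiently fast growing degrees contains a
`10`-generated frame. -/
theorem exists_isFrame {N : ℕ → ℕ} (hN : ∀ n, 25 * 2 ^ (n + 1) ≤ N n) :
    ∃ x : Fin 10 → ∀ n, alternatingGroup (Fin (N n)),
      IsFrame (Subgroup.closure (Set.range x)) := by
  let d : ℕ → ℕ := fun n => N n / (5 * 2 ^ (n + 1)) - 1
  have hd : ∀ n, N n / (5 * 2 ^ (n + 1)) = d n + 1 ∧ 5 ≤ d n + 1 := fun n => by
    have : 5 ≤ N n / (5 * 2 ^ (n + 1)) :=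
      (Nat.le_div_iff_mul_le (by positivity)).2 (by linarith [hN n])
    simp only [d]
    omega
  have hcard : ∀ n, Fintype.card (Base d n) = 2 ^ (n + 1) * (d n + 1) := fun n => by
    simp [Fintype.card_prod, ZMod.card]
  have hY : ∀ n, ∃ s : Finset (Base d n), s.card = N n % (5 * 2 ^ (n + 1)) := fun n => by
    obtain ⟨s, -, hs⟩ := Finset.exists_subset_card_eq
      (s := (Finset.univ : Finset (Base d n))) (n := N n % (5 * 2 ^ (n + 1))) (by
        rw [Finset.card_univ, hcard]
        have h1 := Nat.mod_lt (N n) (show 0 < 5 * 2 ^ (n + 1) by positivity)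
        nlinarith [(hd n).2, show 0 < 2 ^ (n + 1) by positivity])
    exact ⟨s, hs⟩
  choose Y hY using hY
  have hι : ∀ n, ∃ ι : Fin (N n) ↪ Base d n × Fin 6,
      ∀ z, z ∈ Set.range ι ↔ (z.2 = 5 → z.1 ∈ (Y n : Set (Base d n))) := fun n => by
    let M : Finset (Base d n × Fin 6) := Finset.univ ×ˢ {5}ᶜ ∪ Y n ×ˢ {5}
    have hM : M.card = N n := by
      rw [Finset.card_union_of_disjoint, Finset.card_product, Finset.card_product, Finset.card_univ,
        hcard, hY, Finset.card_compl, Fintype.card_fin, Finset.card_singleton]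
      · have := Nat.div_add_mod (N n) (5 * 2 ^ (n + 1))
        rw [(hd n).1] at this
        linarith
      · rw [Finset.disjoint_left]
        intro z h1 h2
        simp only [Finset.mem_product, Finset.mem_compl] at h1 h2
        exact h1.2 h2.2
    refine ⟨(M.equivFinOfCardEq hM).symm.toEmbedding.trans (Function.Embedding.subtype _),
      fun z => ?_⟩
    have : z ∈ M ↔ (z.2 = 5 → z.1 ∈ Y n) := by
      by_cases h : z.2 = 5 <;> simp [M, h, Prod.ext_iff]
    rw [Finset.mem_coe, ← this]
    constructor
    · rintro ⟨c, rfl⟩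
      exact ((M.equivFinOfCardEq hM).symm c).2
    · exact fun hz => ⟨M.equivFinOfCardEq hM ⟨z, hz⟩, by simp⟩
  choose ι hι using hι
  exact exists_isFrame_of_range _ hι

lemma le_degree {p : ℕ} (hp : 3 ≤ p) (n : ℕ) :
    25 * 2 ^ (n + 1) ≤ (p ^ (3 * (n + 3)) - 1) / (p - 1) := by
  rw [Nat.le_div_iff_mul_le (by omega)]
  refine Nat.le_sub_one_of_lt ?_
  have h1 : 2 ^ (n + 1) ≤ p ^ (n + 1) := Nat.pow_le_pow_left (by omega) _
  have h2 : 3 ^ 3 ≤ p ^ 3 := Nat.pow_le_pow_left hp _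
  have h3 : p ^ (n + 1) * p ^ 3 * p ≤ p ^ (3 * (n + 3)) := by
    rw [← pow_add, ← pow_succ]
    exact Nat.pow_le_pow_right (by omega) (by omega)
  refine lt_of_lt_of_le ?_ h3
  calc 25 * 2 ^ (n + 1) * (p - 1) ≤ 25 * p ^ (n + 1) * p :=
        Nat.mul_le_mul (Nat.mul_le_mul_left _ h1) (by omega)
    _ < p ^ (n + 1) * p ^ 3 * p := by
        refine Nat.mul_lt_mul_of_pos_right ?_ (by omega)
        rw [mul_comm]
        exact Nat.mul_lt_mul_of_pos_left (by omega) (by positivity)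

end AlternatingFrame

/-- **Theorem (Kassabov–Nikolov).**  For every odd prime `p` there is a `10`-generated
subgroup of `∏_{n ≥ 3} Alt(u_{n,p})`, where `u_{n,p} = (p^{3n} - 1)/(p - 1)`, which is a
frame for this Cartesian product. -/
theorem exists_ten_generated_frame_in_product_of_alternating
    (p : ℕ) (hp : p.Prime) (hodd : Odd p) :
    ∃ x : Fin 10 → ∀ n : ℕ, alternatingGroup (Fin ((p ^ (3 * (n + 3)) - 1) / (p - 1))),
      IsFrame (Subgroup.closure (Set.range x)) := by
  have hp3 : 3 ≤ p := by
    have := hp.two_le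
    obtain ⟨k, rfl⟩ := hodd
    omega
  exact AlternatingFrame.exists_isFrame (AlternatingFrame.le_degree hp3)
end
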